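/- arXiv:1712.08371 — 3 statements merged into one kernel-verified Lean document; each statement's English description precedes it below -/
import Mathlib

section
/- Let a, b ∈ ℂ with neither a nor b a nonpositive integer. Then as x → +∞ along the positive real axis, the ratio (Γ(a)/Γ(b)) · ₁F₁(a; b; x) · x^{b−a} e^{−x} tends to 1; that is, ₁F₁(a; b; x) is asymptotic to (Γ(b)/Γ(a)) x^{a−b} e^x. -/
open Complex Filter

/-- The Kummer confluent hypergeometric function `₁F₁(a; b; z)`,
defined by its everywhere convergent power series. -/
noncomputable def kummer (a b z : ℂ) : ℂ :=
  ∑' n : ℕ, ((ascPochhammer ℂ n).eval a / (ascPochhammer ℂ n).eval b) * z ^ n / n.factorial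

/-!
Multiplying the series by `e⁻ˣ` turns its terms into Poisson weights: `e⁻ˣ ₁F₁(a; b; x)` is the mean
of `(a)ₙ / (b)ₙ` for a Poisson variable `n` of rate `x`. By Euler's limit formula for `Γ`,
`(a)ₙ / (b)ₙ ∼ (Γ(b) / Γ(a)) n^(a - b)`. Since `n / x` concentrates at `1`, the mean of a sequence
asymptotic to `C n^d` is asymptotic to `C x^d`: for `n` near `x` replace `n^d` by `x^d`, and for
`|n - x| > δ x` a Chernoff bound gives exponentially small probabilities, which beat the
subexponential growth of `n^d`.
-/

open MeasureTheory ProbabilityTheory Topology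
open scoped NNReal Nat

section PoissonConcentration

theorem hasSum_exp_mul_poissonMeasure (r : ℝ≥0) (t : ℝ) :
    HasSum (fun n : ℕ ↦ Real.exp (-r) * r ^ n / n ! * Real.exp (t * n))
      (Real.exp (r * (Real.exp t - 1))) := by
  have hexp := (NormedSpace.expSeries_div_hasSum_exp (r * Real.exp t)).mul_left (Real.exp (-r))
  rw [← Real.exp_eq_exp_ℝ, ← Real.exp_add] at hexp
  convert! hexp using 1
  · funext n
    rw [mul_pow, ← Real.exp_nat_mul, mul_comm t]
    ring
  · ring_nf

theorem integrable_exp_mul_poissonMeasure (r : ℝ≥0) (t : ℝ) :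
    Integrable (fun n : ℕ ↦ Real.exp (t * n)) Po(r) := by
  rw [integrable_poissonMeasure_iff]
  simpa only [Real.norm_eq_abs, Real.abs_exp] using (hasSum_exp_mul_poissonMeasure r t).summable

theorem mgf_natCast_poissonMeasure (r : ℝ≥0) (t : ℝ) :
    mgf (fun n : ℕ ↦ (n : ℝ)) Po(r) t = Real.exp (r * (Real.exp t - 1)) := by
  rw [mgf, integral_poissonMeasure]
  exact (hasSum_exp_mul_poissonMeasure r t).tsum_eq

theorem mgf_sub_rate_poissonMeasure_le (r : ℝ≥0) {t : ℝ} (ht : |t| ≤ 1) :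
    mgf (fun n : ℕ ↦ (n : ℝ) - r) Po(r) t ≤ Real.exp (r * t ^ 2) := by
  have hquad : Real.exp t - 1 - t ≤ t ^ 2 := (abs_le.1 (Real.abs_exp_sub_one_sub_id_le ht)).2
  simp only [sub_eq_add_neg, mgf_add_const, mgf_natCast_poissonMeasure, ← Real.exp_add]
  gcongr
  nlinarith [r.coe_nonneg]

theorem integrable_exp_mul_sub_poissonMeasure (r : ℝ≥0) (t : ℝ) :
    Integrable (fun n : ℕ ↦ Real.exp (t * (n - r))) Po(r) := by
  simpa only [mul_sub, Real.exp_sub] using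
    (integrable_exp_mul_poissonMeasure r t).div_const (Real.exp (t * r))

theorem integrable_exp_mul_abs_sub_poissonMeasure (r : ℝ≥0) (t : ℝ) :
    Integrable (fun n : ℕ ↦ Real.exp (t * |(n : ℝ) - r|)) Po(r) :=
  integrable_exp_mul_abs (integrable_exp_mul_sub_poissonMeasure r t)
    (integrable_exp_mul_sub_poissonMeasure r (-t))

theorem integral_exp_mul_abs_sub_poissonMeasure_le (r : ℝ≥0) {t : ℝ} (ht : |t| ≤ 1) :
    ∫ n : ℕ, Real.exp (t * |(n : ℝ) - r|) ∂Po(r) ≤ 2 * Real.exp (r * t ^ 2) := by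
  have hpos := mgf_sub_rate_poissonMeasure_le r ht
  have hneg := mgf_sub_rate_poissonMeasure_le r (t := -t) (by rwa [abs_neg])
  calc ∫ n : ℕ, Real.exp (t * |(n : ℝ) - r|) ∂Po(r)
      ≤ ∫ n : ℕ, (Real.exp (t * (n - r)) + Real.exp (-t * (n - r))) ∂Po(r) := by
        refine integral_mono (integrable_exp_mul_abs_sub_poissonMeasure r t)
          ((integrable_exp_mul_sub_poissonMeasure r t).add
            (integrable_exp_mul_sub_poissonMeasure r (-t))) fun n ↦ ?_
        rcases abs_choice ((n : ℝ) - r) with habs | habs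
        · simp only [habs, le_add_iff_nonneg_right, Real.exp_nonneg]
        · simp only [habs, mul_neg, neg_mul, le_add_iff_nonneg_left, Real.exp_nonneg]
    _ = mgf (fun n : ℕ ↦ (n : ℝ) - r) Po(r) t + mgf (fun n : ℕ ↦ (n : ℝ) - r) Po(r) (-t) :=
        integral_add (integrable_exp_mul_sub_poissonMeasure r t)
          (integrable_exp_mul_sub_poissonMeasure r (-t))
    _ ≤ 2 * Real.exp (r * t ^ 2) := by
        rw [neg_sq] at hneg
        linarith

variable {E : Type*} [NormedAddCommGroup E]

theorem norm_integral_poissonMeasure_sub_le [NormedSpace ℝ E] [CompleteSpace E] {g : ℕ → E} {L : E}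
    {r : ℝ≥0} {ε M t : ℝ} (hM : 0 ≤ M) (ht : |t| ≤ 1)
    (hg : ∀ n : ℕ, ‖g n - L‖ ≤ ε + M * Real.exp (t * |(n : ℝ) - r|)) :
    ‖∫ n, g n ∂Po(r) - L‖ ≤ ε + M * (2 * Real.exp (r * t ^ 2)) := by
  have hexp := (integrable_exp_mul_abs_sub_poissonMeasure r t).const_mul M
  have hbound := (integrable_const (μ := Po(r)) ε).add hexp
  have hsub : Integrable (fun n ↦ g n - L) Po(r) :=
    hbound.mono' .of_discrete (.of_forall hg)
  have hint : Integrable g Po(r) :=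
    (hsub.add (integrable_const L)).congr (.of_forall fun n ↦ sub_add_cancel (g n) L)
  calc ‖∫ n, g n ∂Po(r) - L‖ = ‖∫ n, (g n - L) ∂Po(r)‖ := by
        rw [integral_sub hint (integrable_const L), integral_const, probReal_univ, one_smul]
    _ ≤ ∫ n : ℕ, (ε + M * Real.exp (t * |(n : ℝ) - r|)) ∂Po(r) :=
        norm_integral_le_of_norm_le hbound (.of_forall hg)
    _ = ε + M * ∫ n : ℕ, Real.exp (t * |(n : ℝ) - r|) ∂Po(r) := by
        rw [integral_add (integrable_const ε) hexp, integral_const, probReal_univ, one_smul,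
          integral_const_mul]
    _ ≤ ε + M * (2 * Real.exp (r * t ^ 2)) := by
        gcongr
        exact integral_exp_mul_abs_sub_poissonMeasure_le r ht

/-- The regime `r → ∞`, `n / r → 1` in which a Poisson variable `n` of rate `r` concentrates. -/
noncomputable def poissonBulk : Filter (ℝ≥0 × ℕ) :=
  comap Prod.fst atTop ⊓ comap (fun p ↦ (p.2 : ℝ) / p.1) (𝓝 1)

theorem tendsto_fst_poissonBulk : Tendsto Prod.fst poissonBulk atTop :=
  tendsto_comap.mono_left inf_le_left

theorem tendsto_div_poissonBulk :
    Tendsto (fun p : ℝ≥0 × ℕ ↦ (p.2 : ℝ) / p.1) poissonBulk (𝓝 1) :=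
  tendsto_comap.mono_left inf_le_right

theorem tendsto_snd_poissonBulk : Tendsto Prod.snd poissonBulk atTop := by
  have hfst : Tendsto (fun p : ℝ≥0 × ℕ ↦ (p.1 : ℝ)) poissonBulk atTop :=
    NNReal.tendsto_coe_atTop.2 tendsto_fst_poissonBulk
  refine tendsto_natCast_atTop_iff (R := ℝ).1
    ((tendsto_div_poissonBulk.pos_mul_atTop one_pos hfst).congr' ?_)
  filter_upwards [hfst.eventually_ne_atTop 0] with p hp
  exact div_mul_cancel₀ _ hp

theorem exists_forall_abs_sub_le_of_eventually_poissonBulk {P : ℝ≥0 × ℕ → Prop}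
    (hP : ∀ᶠ p in poissonBulk, P p) :
    ∃ δ : ℝ, 0 < δ ∧ δ ≤ 1 ∧
      ∀ᶠ r : ℝ≥0 in atTop, ∀ n : ℕ, |(n : ℝ) - r| ≤ δ * r → P (r, n) := by
  have hbasis := (atTop_basis.comap Prod.fst).inf
    ((Metric.nhds_basis_closedBall (x := (1 : ℝ))).comap
      fun p : ℝ≥0 × ℕ ↦ (p.2 : ℝ) / p.1)
  obtain ⟨⟨R, δ⟩, ⟨-, hδ⟩, hPmem⟩ := hbasis.eventually_iff.1 hP
  refine ⟨min δ 1, lt_min hδ one_pos, min_le_right _ _, ?_⟩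
  filter_upwards [eventually_ge_atTop R, eventually_gt_atTop 0] with r hR hr n hn
  have hr' : (0 : ℝ) < r := hr
  refine hPmem ⟨hR, ?_⟩
  rw [Set.mem_preimage, Metric.mem_closedBall, Real.dist_eq, div_sub_one hr'.ne', abs_div,
    abs_of_pos hr', div_le_iff₀ hr']
  exact hn.trans (by gcongr; exact min_le_left _ _)

theorem exp_mul_add_le_of_mul_le_abs_sub {δ t m r : ℝ} (hδ : 0 < δ) (ht : 0 ≤ t)
    (h : δ * r ≤ |m - r|) :
    Real.exp (t * δ / (δ + 2) * (m + r)) ≤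
      Real.exp (-(t * δ * r)) * Real.exp (2 * t * |m - r|) := by
  have hsum : δ * (m + r) ≤ (δ + 2) * |m - r| := by nlinarith [le_abs_self (m - r)]
  rw [← Real.exp_add, Real.exp_le_exp]
  calc t * δ / (δ + 2) * (m + r) = t * (δ * (m + r) / (δ + 2)) := by ring
    _ ≤ t * |m - r| := by
      gcongr
      rw [div_le_iff₀ (by positivity)]
      linarith
    _ ≤ -(t * δ * r) + 2 * t * |m - r| := by nlinarith

theorem norm_sub_le_add_mul_exp_abs_sub {y L : E} {δ ε t K m r : ℝ} (hδ : 0 < δ) (hε : 0 ≤ ε)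
    (ht : 0 ≤ t) (hm : 0 ≤ m) (hr : 0 ≤ r) (hlocal : |m - r| ≤ δ * r → ‖y - L‖ ≤ ε)
    (hgrowth : ‖y‖ ≤ K * Real.exp (t * δ / (δ + 2) * (m + r))) :
    ‖y - L‖ ≤ ε + (K + ‖L‖) * Real.exp (-(t * δ * r)) * Real.exp (2 * t * |m - r|) := by
  have hK : 0 ≤ K :=
    nonneg_of_mul_nonneg_left ((norm_nonneg y).trans hgrowth) (Real.exp_pos _)
  rcases le_or_gt |m - r| (δ * r) with hbulk | htail
  · exact (hlocal hbulk).trans (le_add_of_nonneg_right (by positivity))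
  · have hone : 1 ≤ Real.exp (t * δ / (δ + 2) * (m + r)) := Real.one_le_exp (by positivity)
    calc ‖y - L‖ ≤ ‖y‖ + ‖L‖ := norm_sub_le y L
      _ ≤ (K + ‖L‖) * Real.exp (t * δ / (δ + 2) * (m + r)) := by
        nlinarith [norm_nonneg L]
      _ ≤ (K + ‖L‖) * (Real.exp (-(t * δ * r)) * Real.exp (2 * t * |m - r|)) := by
        gcongr
        exact exp_mul_add_le_of_mul_le_abs_sub hδ ht htail.le
      _ ≤ ε + (K + ‖L‖) * Real.exp (-(t * δ * r)) * Real.exp (2 * t * |m - r|) := by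
        rw [← mul_assoc]
        exact le_add_of_nonneg_left hε

theorem tendsto_const_mul_exp_neg_mul_coe_nnreal (C : ℝ) {k : ℝ} (hk : 0 < k) :
    Tendsto (fun r : ℝ≥0 ↦ C * Real.exp (-(k * r))) atTop (𝓝 0) := by
  have hlin : Tendsto (fun r : ℝ≥0 ↦ k * (r : ℝ)) atTop atTop :=
    (NNReal.tendsto_coe_atTop.2 tendsto_id).const_mul_atTop hk
  simpa using (Real.tendsto_exp_neg_atTop_nhds_zero.comp hlin).const_mul C

theorem tendsto_integral_poissonMeasure_of_tendsto_poissonBulk [NormedSpace ℝ E] [CompleteSpace E]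
    {f : ℝ≥0 → ℕ → E} {L : E}
    (hbulk : Tendsto (fun p : ℝ≥0 × ℕ ↦ f p.1 p.2) poissonBulk (𝓝 L))
    (hgrowth : ∀ η : ℝ, 0 < η →
      ∃ K : ℝ, ∀ᶠ r : ℝ≥0 in atTop, ∀ n : ℕ, ‖f r n‖ ≤ K * Real.exp (η * (n + r))) :
    Tendsto (fun r ↦ ∫ n, f r n ∂Po(r)) atTop (𝓝 L) := by
  rw [Metric.tendsto_nhds]
  intro ε hε
  obtain ⟨δ, hδ, hδ_le_one, hlocal⟩ := exists_forall_abs_sub_le_of_eventually_poissonBulk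
    (hbulk.eventually (Metric.closedBall_mem_nhds L (half_pos hε)))
  -- With `t = δ / 8`, the tail gain `exp (-t δ r)` beats the moment bound `exp ((2 t) ^ 2 r)`.
  obtain ⟨K, hK⟩ := hgrowth (δ / 8 * δ / (δ + 2)) (by positivity)
  have htail := tendsto_const_mul_exp_neg_mul_coe_nnreal ((K + ‖L‖) * 2)
    (show 0 < δ ^ 2 / 16 by positivity)
  filter_upwards [hlocal, hK, htail.eventually_lt_const (half_pos hε)] with r hr_local hr_growth
    hr_tail
  have hKL : 0 ≤ K + ‖L‖ := add_nonneg
    (nonneg_of_mul_nonneg_left ((norm_nonneg _).trans (hr_growth 0)) (Real.exp_pos _))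
    (norm_nonneg L)
  have hpointwise (n : ℕ) : ‖f r n - L‖ ≤
      ε / 2 + (K + ‖L‖) * Real.exp (-(δ / 8 * δ * r)) * Real.exp (2 * (δ / 8) * |(n : ℝ) - r|) :=
    norm_sub_le_add_mul_exp_abs_sub hδ (half_pos hε).le (by positivity) n.cast_nonneg
      r.coe_nonneg (fun hn ↦ mem_closedBall_iff_norm.1 (hr_local n hn)) (hr_growth n)
  calc dist (∫ n, f r n ∂Po(r)) L = ‖∫ n, f r n ∂Po(r) - L‖ := dist_eq_norm _ _
    _ ≤ ε / 2 + (K + ‖L‖) * Real.exp (-(δ / 8 * δ * r)) *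
          (2 * Real.exp (r * (2 * (δ / 8)) ^ 2)) :=
      norm_integral_poissonMeasure_sub_le (by positivity)
        (by rw [abs_of_pos (by positivity)]; linarith) hpointwise
    _ = ε / 2 + (K + ‖L‖) * 2 *
          (Real.exp (-(δ / 8 * δ * r)) * Real.exp (r * (2 * (δ / 8)) ^ 2)) := by ring
    _ = ε / 2 + (K + ‖L‖) * 2 * Real.exp (-(δ ^ 2 / 16 * r)) := by
      rw [← Real.exp_add]
      ring_nf
    _ < ε := by linarith

end PoissonConcentration

section PowerGrowth

variable {E : Type*} [NormedAddCommGroup E] [NormedSpace ℂ E] {c : ℕ → E} {d : ℂ} {L : E}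

theorem isBigO_natCast_rpow_of_tendsto_cpow_smul
    (hc : Tendsto (fun n : ℕ ↦ (n : ℂ) ^ (-d) • c n) atTop (𝓝 L)) :
    c =O[atTop] fun n : ℕ ↦ (n : ℝ) ^ d.re := by
  have hpow : (fun n : ℕ ↦ (n : ℂ) ^ d) =O[atTop] fun n : ℕ ↦ (n : ℝ) ^ d.re :=
    .of_norm_eventuallyLE <| by
      filter_upwards [eventually_gt_atTop 0] with n hn
      exact (norm_natCast_cpow_of_pos hn d).le
  have hmul := hpow.smul (hc.isBigO_one ℝ)
  refine hmul.congr' ?_ (.of_forall fun n ↦ by simp)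
  filter_upwards [eventually_ne_atTop 0] with n hn
  rw [smul_smul, ← cpow_add _ _ (Nat.cast_ne_zero.2 hn), add_neg_cancel, cpow_zero, one_smul]

theorem exists_norm_le_mul_exp_of_tendsto_cpow_smul
    (hc : Tendsto (fun n : ℕ ↦ (n : ℂ) ^ (-d) • c n) atTop (𝓝 L)) {η : ℝ} (hη : 0 < η) :
    ∃ K : ℝ, ∀ n, ‖c n‖ ≤ K * Real.exp (η * n) := by
  have hexp : c =O[atTop] fun n : ℕ ↦ Real.exp (η * n) :=
    (isBigO_natCast_rpow_of_tendsto_cpow_smul hc).trans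
      ((isLittleO_rpow_exp_pos_mul_atTop d.re hη).isBigO.comp_tendsto tendsto_natCast_atTop_atTop)
  obtain ⟨K, -, hbound⟩ := Asymptotics.bound_of_isBigO_nat_atTop hexp
  exact ⟨K, fun n ↦ by simpa using hbound (Real.exp_pos (η * n)).ne'⟩

theorem eventually_norm_ofReal_cpow_le_exp (s : ℂ) {η : ℝ} (hη : 0 < η) :
    ∀ᶠ x : ℝ in atTop, ‖(x : ℂ) ^ s‖ ≤ Real.exp (η * x) := by
  filter_upwards [(isLittleO_rpow_exp_pos_mul_atTop s.re hη).bound one_pos,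
    eventually_gt_atTop 0] with x hx hx_pos
  rw [norm_cpow_eq_rpow_re_of_pos hx_pos]
  simpa using (le_abs_self _).trans hx

theorem ofReal_cpow_neg_eq_div_cpow_mul {m x : ℝ} (hm : 0 < m) (hx : 0 < x) (d : ℂ) :
    (x : ℂ) ^ (-d) = ((m / x : ℝ) : ℂ) ^ d * (m : ℂ) ^ (-d) := by
  have hdiv : ((m / x : ℝ) : ℂ) ≠ 0 := ofReal_ne_zero.2 (by positivity)
  have hm_eq : (m : ℂ) = ((m / x : ℝ) : ℂ) * (x : ℂ) := by
    rw [← ofReal_mul, div_mul_cancel₀ _ hx.ne']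
  conv_rhs => rw [hm_eq, mul_cpow_ofReal_nonneg (by positivity) hx.le, ← mul_assoc]
  rw [← cpow_add _ _ hdiv, add_neg_cancel, cpow_zero, one_mul]

theorem tendsto_cpow_smul_poissonBulk
    (hc : Tendsto (fun n : ℕ ↦ (n : ℂ) ^ (-d) • c n) atTop (𝓝 L)) :
    Tendsto (fun p : ℝ≥0 × ℕ ↦ ((p.1 : ℝ) : ℂ) ^ (-d) • c p.2) poissonBulk (𝓝 L) := by
  have hpow : Tendsto (fun p : ℝ≥0 × ℕ ↦ (((p.2 : ℝ) / p.1 : ℝ) : ℂ) ^ d) poissonBulk (𝓝 1) := by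
    have hcont : ContinuousAt (fun u : ℝ ↦ (u : ℂ) ^ d) 1 :=
      continuousAt_ofReal_cpow_const 1 d (.inr one_ne_zero)
    simpa only [Function.comp_def, ofReal_one, one_cpow] using
      hcont.tendsto.comp tendsto_div_poissonBulk
  have hprod := hpow.smul (hc.comp tendsto_snd_poissonBulk)
  rw [one_smul] at hprod
  refine hprod.congr' ?_
  filter_upwards [tendsto_fst_poissonBulk.eventually_gt_atTop 0,
    tendsto_snd_poissonBulk.eventually_gt_atTop 0] with p hr hn
  rw [ofReal_cpow_neg_eq_div_cpow_mul (Nat.cast_pos.2 hn) (NNReal.coe_pos.2 hr), mul_smul,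
    ofReal_natCast, Function.comp_apply]

theorem tendsto_cpow_smul_integral_poissonMeasure [CompleteSpace E]
    (hc : Tendsto (fun n : ℕ ↦ (n : ℂ) ^ (-d) • c n) atTop (𝓝 L)) :
    Tendsto (fun r : ℝ≥0 ↦ ((r : ℝ) : ℂ) ^ (-d) • ∫ n, c n ∂Po(r)) atTop (𝓝 L) := by
  simp_rw [← integral_smul]
  refine tendsto_integral_poissonMeasure_of_tendsto_poissonBulk
    (tendsto_cpow_smul_poissonBulk hc) fun η hη ↦ ?_
  obtain ⟨K, hc_le⟩ := exists_norm_le_mul_exp_of_tendsto_cpow_smul hc hη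
  refine ⟨K, ?_⟩
  filter_upwards [(NNReal.tendsto_coe_atTop.2 tendsto_id).eventually
    (eventually_norm_ofReal_cpow_le_exp (-d) hη)] with r hr n
  calc ‖((r : ℝ) : ℂ) ^ (-d) • c n‖ = ‖((r : ℝ) : ℂ) ^ (-d)‖ * ‖c n‖ := norm_smul _ _
    _ ≤ Real.exp (η * r) * (K * Real.exp (η * n)) := by
      gcongr
      · exact hr
      · exact hc_le n
    _ = K * Real.exp (η * (n + r)) := by
      rw [mul_add, Real.exp_add]
      ring

end PowerGrowth

section Pochhammer

theorem ascPochhammer_eval_eq_prod_range_add {R : Type*} [CommSemiring R] (n : ℕ) (s : R) :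
    (ascPochhammer R n).eval s = ∏ j ∈ Finset.range n, (s + j) := by
  induction n with
  | zero => simp
  | succ n ih => rw [ascPochhammer_succ_eval, ih, Finset.prod_range_succ]

theorem tendsto_ascPochhammer_eval_mul_cpow_div_factorial {s : ℂ} (hs : ∀ n : ℕ, s ≠ -n) :
    Tendsto (fun n : ℕ ↦ (ascPochhammer ℂ n).eval s * (n : ℂ) ^ (1 - s) / n !) atTop
      (𝓝 (Gamma s)⁻¹) := by
  have hlim := ((GammaSeq_tendsto_Gamma s).inv₀ (Gamma_ne_zero hs)).mul
    (tendsto_natCast_div_add_atTop s)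
  rw [mul_one] at hlim
  refine hlim.congr' ?_
  filter_upwards [eventually_ne_atTop 0] with n hn
  have hn' : (n : ℂ) ≠ 0 := Nat.cast_ne_zero.2 hn
  have hsn : (n : ℂ) + s ≠ 0 := fun h ↦ hs n (eq_neg_of_add_eq_zero_right h)
  rw [GammaSeq, ← ascPochhammer_eval_eq_prod_range_add, ascPochhammer_succ_eval,
    cpow_sub _ _ hn', cpow_one, add_comm s]
  field_simp

theorem tendsto_cpow_mul_ascPochhammer_eval_div {a b : ℂ}
    (ha : ∀ n : ℕ, a ≠ -n) (hb : ∀ n : ℕ, b ≠ -n) :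
    Tendsto (fun n : ℕ ↦ (n : ℂ) ^ (b - a) *
      ((ascPochhammer ℂ n).eval a / (ascPochhammer ℂ n).eval b)) atTop
      (𝓝 (Gamma b / Gamma a)) := by
  have hlim := (tendsto_ascPochhammer_eval_mul_cpow_div_factorial ha).div
    (tendsto_ascPochhammer_eval_mul_cpow_div_factorial hb) (inv_ne_zero (Gamma_ne_zero hb))
  rw [inv_div_inv] at hlim
  refine hlim.congr' ?_
  filter_upwards [eventually_ne_atTop 0] with n hn
  have hn' : (n : ℂ) ≠ 0 := Nat.cast_ne_zero.2 hn
  have hfact : (n ! : ℂ) ≠ 0 := Nat.cast_ne_zero.2 n.factorial_ne_zero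
  rw [show b - a = (1 - a) - (1 - b) by ring, cpow_sub _ _ hn', Pi.div_apply,
    div_div_div_cancel_right₀ hfact, mul_comm, mul_div_mul_comm]
  ring

theorem integral_ascPochhammer_eval_div_poissonMeasure (a b : ℂ) (r : ℝ≥0) :
    ∫ n, (ascPochhammer ℂ n).eval a / (ascPochhammer ℂ n).eval b ∂Po(r) =
      exp (-(r : ℝ)) * kummer a b (r : ℝ) := by
  rw [integral_poissonMeasure, kummer, ← tsum_mul_left]
  refine tsum_congr fun n ↦ ?_
  rw [real_smul]
  push_cast
  ring

end Pochhammer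

/-- Leading exponential asymptotics: `₁F₁(a; b; x) ∼ (Γ(b)/Γ(a)) x^{a−b} eˣ` as `x → +∞`. -/
theorem kummer_leading_asymptotics (a b : ℂ)
    (ha : ∀ n : ℕ, a ≠ -(n : ℂ)) (hb : ∀ n : ℕ, b ≠ -(n : ℂ)) :
    Tendsto (fun x : ℝ =>
        (Complex.Gamma a / Complex.Gamma b) * kummer a b x * (x : ℂ) ^ (b - a) *
          Complex.exp (-(x : ℂ)))
      atTop (nhds 1) := by
  have hcoeff : Tendsto (fun n : ℕ ↦ (n : ℂ) ^ (-(a - b)) •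
      ((ascPochhammer ℂ n).eval a / (ascPochhammer ℂ n).eval b)) atTop (𝓝 (Gamma b / Gamma a)) := by
    simpa only [neg_sub, smul_eq_mul] using tendsto_cpow_mul_ascPochhammer_eval_div ha hb
  have hmean : Tendsto (fun r : ℝ≥0 ↦ ((r : ℝ) : ℂ) ^ (b - a) *
      (exp (-(r : ℝ)) * kummer a b (r : ℝ))) atTop (𝓝 (Gamma b / Gamma a)) := by
    simpa only [neg_sub, smul_eq_mul, integral_ascPochhammer_eval_div_poissonMeasure] using
      tendsto_cpow_smul_integral_poissonMeasure hcoeff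
  have hreal := (hmean.comp tendsto_real_toNNReal_atTop).const_mul (Gamma a / Gamma b)
  rw [div_mul_div_cancel₀ (Gamma_ne_zero hb), div_self (Gamma_ne_zero ha)] at hreal
  refine hreal.congr' ?_
  filter_upwards [eventually_ge_atTop 0] with x hx
  simp only [Function.comp_apply, Real.coe_toNNReal x hx]
  ring
end

section
/- Let a, b ∈ ℂ with neither a nor b a nonpositive integer, and let N be a positive integer. Then as x → +∞ along the positive real axis, (Γ(a)/Γ(b)) · ₁F₁(a; b; x) − x^{a−b} e^x ∑_{j=0}^{N−1} (b−a)_j (1−a)_j / (j! x^j) = O(x^{Re(a−b)−N} e^x). -/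
open Complex Filter Asymptotics

/-!
Put `𝐊(a, b, z) = Γ(a) / Γ(b) * ₁F₁(a; b; z)`. When `Re a > 0` and `Re (b - a) > 0`, Euler's
integral, with `t` replaced by `1 - t`, reads
`Γ(b - a) 𝐊(a, b, x) = eˣ ∫₀¹ e^{-xt} t^{b-a-1} (1 - t)^{a-1} dt`,
and Watson's lemma applied to the binomial series of `(1 - t)^{a-1}` yields the expansion.

The two contiguous relations
`𝐊(a, b) = b 𝐊(a, b+1) + z 𝐊(a+1, b+2)` and `a 𝐊(a, b) = 𝐊(a+1, b) - z 𝐊(a+1, b+1)`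
are satisfied term by term by the formal expansion as well, so the first one propagates the
expansion to smaller `Re (b - a)`, hence to all `b`, and then the second one to smaller `Re a`.
-/

open MeasureTheory Set Topology

lemma norm_exp_neg_mul_smul_le_of_le {E : Type*} [NormedAddCommGroup E] [NormedSpace ℝ E]
    {x σ δ t : ℝ} (hσx : σ ≤ x) (hδt : δ ≤ t) (v : E) :
    ‖Real.exp (-(x * t)) • v‖ ≤ Real.exp (-((x - σ) * δ)) * ‖Real.exp (-(σ * t)) • v‖ := by
  rw [norm_smul, norm_smul, Real.norm_of_nonneg (Real.exp_nonneg _),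
    Real.norm_of_nonneg (Real.exp_nonneg _), ← mul_assoc, ← Real.exp_add]
  gcongr
  linarith [mul_le_mul_of_nonneg_left hδt (sub_nonneg.mpr hσx)]

lemma isBigO_exp_neg_sub_mul_rpow (σ p : ℝ) {δ : ℝ} (hδ : 0 < δ) :
    (fun x : ℝ ↦ Real.exp (-((x - σ) * δ))) =O[atTop] fun x ↦ x ^ p := by
  refine ((isLittleO_exp_neg_mul_rpow_atTop hδ p).isBigO.const_mul_left
    (Real.exp (σ * δ))).congr_left fun x ↦ ?_
  rw [← Real.exp_add]
  ring_nf

theorem isBigO_integral_exp_neg_mul_smul {E : Type*} [NormedAddCommGroup E] [NormedSpace ℝ E]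
    {f : ℝ → E} {σ p : ℝ} (hp : 0 < p)
    (hint : IntegrableOn (fun t ↦ Real.exp (-(σ * t)) • f t) (Ioi 0))
    (hf : f =O[𝓝[>] 0] fun t ↦ t ^ (p - 1)) :
    (fun x : ℝ ↦ ∫ t in Ioi 0, Real.exp (-(x * t)) • f t) =O[atTop] fun x ↦ x ^ (-p) := by
  obtain ⟨C, hC, hfC⟩ := hf.exists_nonneg
  obtain ⟨δ, hδ, hδC⟩ := mem_nhdsGT_iff_exists_Ioo_subset.mp hfC.bound
  set I := ∫ t in Ioi 0, ‖Real.exp (-(σ * t)) • f t‖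
  -- Near `0` the bound on `f` applies; beyond `δ` the factor `exp (-(x - σ) * δ)` is split off.
  have pointwise (x : ℝ) (hx : σ ≤ x) (t : ℝ) (ht : 0 < t) :
      ‖Real.exp (-(x * t)) • f t‖ ≤ C * (t ^ (p - 1) * Real.exp (-(x * t))) +
        Real.exp (-((x - σ) * δ)) * ‖Real.exp (-(σ * t)) • f t‖ := by
    rcases lt_or_ge t δ with htδ | hδt
    · have hft : ‖f t‖ ≤ C * t ^ (p - 1) := by
        simpa [abs_of_nonneg (Real.rpow_nonneg ht.le _)] using hδC ⟨ht, htδ⟩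
      refine le_add_of_le_of_nonneg ?_ (by positivity)
      rw [norm_smul, Real.norm_of_nonneg (Real.exp_nonneg _), mul_comm, ← mul_assoc]
      gcongr
    · exact le_add_of_nonneg_of_le (by positivity) (norm_exp_neg_mul_smul_le_of_le hx hδt _)
  have bound : ∀ᶠ x in atTop, ‖∫ t in Ioi 0, Real.exp (-(x * t)) • f t‖ ≤
      C * Real.Gamma p * x ^ (-p) + I * Real.exp (-((x - σ) * δ)) := by
    filter_upwards [eventually_ge_atTop σ, eventually_gt_atTop 0] with x hσx hx
    have hgamma : IntegrableOn (fun t ↦ t ^ (p - 1) * Real.exp (-(x * t))) (Ioi 0) := by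
      simpa using integrableOn_rpow_mul_exp_neg_mul_rpow (by linarith : -1 < p - 1) one_pos hx
    calc ‖∫ t in Ioi 0, Real.exp (-(x * t)) • f t‖
        ≤ ∫ t in Ioi 0, (C * (t ^ (p - 1) * Real.exp (-(x * t))) +
            Real.exp (-((x - σ) * δ)) * ‖Real.exp (-(σ * t)) • f t‖) :=
          norm_integral_le_of_norm_le ((hgamma.const_mul C).add (hint.norm.const_mul _))
            ((ae_restrict_iff' measurableSet_Ioi).mpr (.of_forall (pointwise x hσx)))
      _ = C * Real.Gamma p * x ^ (-p) + I * Real.exp (-((x - σ) * δ)) := by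
          rw [integral_add (hgamma.const_mul C) (hint.norm.const_mul _), integral_const_mul,
            integral_const_mul, Real.integral_rpow_mul_exp_neg_mul_Ioi hp hx, one_div,
            Real.inv_rpow hx.le, ← Real.rpow_neg hx.le]
          ring
  exact (IsBigO.of_norm_eventuallyLE bound).trans <|
    ((isBigO_refl _ _).const_mul_left _).add
      ((isBigO_exp_neg_sub_mul_rpow σ (-p) hδ).const_mul_left _)

section Watson

variable {s : ℂ} {x : ℝ}

lemma integral_exp_neg_mul_smul_cpow (hs : 0 < s.re) (hx : 0 < x) :
    ∫ t in Ioi (0 : ℝ), Real.exp (-(x * t)) • (t : ℂ) ^ (s - 1) = Gamma s * (x : ℂ) ^ (-s) := by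
  have harg : (x : ℂ).arg ≠ Real.pi := by simp [arg_ofReal_of_nonneg hx.le, Real.pi_pos.ne]
  rw [cpow_neg, ← inv_cpow _ _ harg, mul_comm, ← one_div, ← integral_cpow_mul_exp_neg_mul_Ioi hs hx]
  exact integral_congr_ae (.of_forall fun t ↦ by simp [mul_comm])

lemma integrableOn_exp_neg_mul_smul_cpow (hs : 0 < s.re) (hx : 0 < x) :
    IntegrableOn (fun t : ℝ ↦ Real.exp (-(x * t)) • (t : ℂ) ^ (s - 1)) (Ioi 0) := by
  refine .of_integral_ne_zero ?_
  rw [integral_exp_neg_mul_smul_cpow hs hx]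
  exact mul_ne_zero (Gamma_ne_zero_of_re_pos hs) (by simp [hx.ne'])

lemma integrableOn_exp_neg_mul_smul_of_le {E : Type*} [NormedAddCommGroup E] [NormedSpace ℝ E]
    {f : ℝ → E} {σ : ℝ} (hσx : σ ≤ x)
    (hf : IntegrableOn (fun t ↦ Real.exp (-(σ * t)) • f t) (Ioi 0)) :
    IntegrableOn (fun t ↦ Real.exp (-(x * t)) • f t) (Ioi 0) := by
  have hmeas : AEStronglyMeasurable
      (fun t ↦ Real.exp (-((x - σ) * t)) • Real.exp (-(σ * t)) • f t)
      (volume.restrict (Ioi 0)) :=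
    (by fun_prop : Continuous fun t ↦ Real.exp (-((x - σ) * t))).aestronglyMeasurable.smul hf.1
  refine Integrable.mono hf (hmeas.congr (.of_forall fun t ↦ ?_)) <|
    (ae_restrict_iff' measurableSet_Ioi).mpr (.of_forall fun t (ht : 0 < t) ↦ ?_)
  · dsimp only
    rw [smul_smul, ← Real.exp_add]
    ring_nf
  · simpa using norm_exp_neg_mul_smul_le_of_le hσx ht.le (f t)

lemma isBigO_cpow_mul_sub_sum {φ : ℝ → ℂ} {α : ℕ → ℂ} {N : ℕ}
    (hφ : (fun t : ℝ ↦ φ t - ∑ j ∈ Finset.range N, α j * (t : ℂ) ^ j) =O[𝓝[>] 0]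
      fun t ↦ t ^ N) :
    (fun t : ℝ ↦ (t : ℂ) ^ (s - 1) * φ t - ∑ j ∈ Finset.range N, α j * (t : ℂ) ^ (s + j - 1))
      =O[𝓝[>] 0] fun t ↦ t ^ (s.re + N - 1) := by
  have hpow : (fun t : ℝ ↦ (t : ℂ) ^ (s - 1)) =O[𝓝[>] 0] fun t ↦ t ^ (s.re - 1) :=
    .of_norm_eventuallyLE <| eventually_mem_nhdsWithin.mono fun t (ht : 0 < t) ↦ by
      simp [norm_cpow_eq_rpow_re_of_pos ht]
  refine (hpow.mul hφ).congr' ?_ ?_ <;>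
    filter_upwards [self_mem_nhdsWithin] with t (ht : 0 < t)
  · have htc : (t : ℂ) ≠ 0 := ofReal_ne_zero.mpr ht.ne'
    simp only [mul_sub, Finset.mul_sum, add_sub_right_comm s, cpow_add _ _ htc, cpow_natCast,
      mul_left_comm]
  · rw [add_sub_right_comm, Real.rpow_add ht, Real.rpow_natCast]

theorem watson_isBigO {φ : ℝ → ℂ} {α : ℕ → ℂ} {σ : ℝ} {N : ℕ} (hs : 0 < s.re) (hσ : 0 < σ)
    (hint : IntegrableOn (fun t : ℝ ↦ Real.exp (-(σ * t)) • ((t : ℂ) ^ (s - 1) * φ t)) (Ioi 0))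
    (hφ : (fun t : ℝ ↦ φ t - ∑ j ∈ Finset.range N, α j * (t : ℂ) ^ j) =O[𝓝[>] 0]
      fun t ↦ t ^ N) :
    (fun x : ℝ ↦ (∫ t in Ioi (0 : ℝ), Real.exp (-(x * t)) • ((t : ℂ) ^ (s - 1) * φ t)) -
        ∑ j ∈ Finset.range N, α j * (Gamma (s + j) * (x : ℂ) ^ (-(s + j))))
      =O[atTop] fun x ↦ x ^ (-(s.re + N)) := by
  set f : ℝ → ℂ := fun t ↦
    (t : ℂ) ^ (s - 1) * φ t - ∑ j ∈ Finset.range N, α j * (t : ℂ) ^ (s + j - 1)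
  have hre (j : ℕ) : 0 < (s + j).re := by simpa using by positivity
  have hsmul (x t : ℝ) : Real.exp (-(x * t)) • f t =
      Real.exp (-(x * t)) • ((t : ℂ) ^ (s - 1) * φ t) -
        ∑ j ∈ Finset.range N, α j * Real.exp (-(x * t)) • (t : ℂ) ^ (s + j - 1) := by
    simp only [f, smul_sub, Finset.smul_sum, mul_smul_comm]
  have hsum {x : ℝ} (hx : 0 < x) (j : ℕ) : IntegrableOn
      (fun t : ℝ ↦ α j * Real.exp (-(x * t)) • (t : ℂ) ^ (s + j - 1)) (Ioi 0) :=
    (integrableOn_exp_neg_mul_smul_cpow (hre j) hx).const_mul _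
  have hfint : IntegrableOn (fun t ↦ Real.exp (-(σ * t)) • f t) (Ioi 0) := by
    simp only [hsmul]
    exact hint.sub (integrable_finsetSum _ fun j _ ↦ hsum hσ j)
  refine (isBigO_integral_exp_neg_mul_smul (by positivity) hfint
    (isBigO_cpow_mul_sub_sum hφ)).congr' ?_ .rfl
  filter_upwards [eventually_ge_atTop σ] with x hσx
  have hx : 0 < x := hσ.trans_le hσx
  simp only [hsmul]
  rw [integral_sub (integrableOn_exp_neg_mul_smul_of_le hσx hint)
    (integrable_finsetSum _ fun j _ ↦ hsum hx j), integral_finsetSum _ fun j _ ↦ hsum hx j]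
  simp only [integral_const_mul, integral_exp_neg_mul_smul_cpow (hre _) hx]

end Watson

lemma choose_add_sub_one_eq_ascPochhammer_div {K : Type*} [Field K] [CharZero K] [BinomialRing K]
    (s : K) (n : ℕ) :
    Ring.choose (s + n - 1) n = (ascPochhammer K n).eval s / n.factorial := by
  rw [← Ring.multichoose_eq, eq_div_iff (Nat.cast_ne_zero.mpr n.factorial_ne_zero), mul_comm,
    ← nsmul_eq_mul, Ring.factorial_nsmul_multichoose_eq_ascPochhammer,
    Polynomial.ascPochhammer_smeval_eq_eval]

lemma isBigO_one_sub_cpow_neg_sub_sum (s : ℂ) (N : ℕ) :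
    (fun z : ℂ ↦ (1 - z) ^ (-s) -
      ∑ j ∈ Finset.range N, (ascPochhammer ℂ j).eval s / j.factorial * z ^ j)
      =O[𝓝 0] fun z ↦ z ^ N := by
  have hseries := (one_div_one_sub_cpow_hasFPowerSeriesOnBall_zero s).hasFPowerSeriesAt
  simpa [FormalMultilinearSeries.partialSum, FormalMultilinearSeries.ofScalars_apply_eq,
    choose_add_sub_one_eq_ascPochhammer_div, cpow_neg,
    ← norm_pow, isBigO_norm_right, mul_comm] using hseries.isBigO_sub_partialSum_pow N

/-- The coefficient `Γ(a + n) / (Γ(b + n) n!)` of `z ^ n` in `scaledKummer a b z`. Since `Gamma`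
vanishes at its poles and `x / 0 = 0`, the factor `1 / Γ(b + n)` has its correct value `0` there. -/
noncomputable def kummerCoeff (a b : ℂ) (n : ℕ) : ℂ :=
  Gamma (a + n) / (Gamma (b + n) * n.factorial)

/-- The rescaled Kummer function `Γ(a) / Γ(b) * ₁F₁(a; b; z)`, which unlike `kummer` satisfies its
contiguous relations for every `b`; it is `Γ(a) 𝐌(a, b, z)` in Olver's notation. -/
noncomputable def scaledKummer (a b z : ℂ) : ℂ :=
  ∑' n : ℕ, kummerCoeff a b n * z ^ n

section Kummer

variable (a b z : ℂ)

lemma succ_mul_kummerCoeff_succ (n : ℕ) :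
    (n + 1) * kummerCoeff a b (n + 1) = kummerCoeff (a + 1) (b + 1) n := by
  have hn : (n + 1 : ℂ) ≠ 0 := n.cast_add_one_ne_zero
  have hshift (s : ℂ) : s + (n + 1) = s + 1 + n := by ring
  simp only [kummerCoeff, Nat.factorial_succ, Nat.cast_mul, Nat.cast_add_one, hshift]
  field_simp

lemma kummerCoeff_eq_add_mul_kummerCoeff_add_one (n : ℕ) :
    kummerCoeff a b n = (b + n) * kummerCoeff a (b + 1) n := by
  simp only [kummerCoeff, div_eq_mul_inv, mul_inv, add_right_comm b 1,
    one_div_Gamma_eq_self_mul_one_div_Gamma_add_one (b + n)]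
  ring

variable {a} in
lemma kummerCoeff_add_one_left {n : ℕ} (han : a + n ≠ 0) :
    kummerCoeff (a + 1) b n = (a + n) * kummerCoeff a b n := by
  rw [kummerCoeff, add_right_comm, Gamma_add_one _ han, mul_div_assoc, kummerCoeff]

variable {a b} in
lemma kummerCoeff_succ {n : ℕ} (han : a + n ≠ 0) (hbn : b + n ≠ 0) :
    kummerCoeff a b (n + 1) = (a + n) / (b + n) * (1 / (n + 1)) * kummerCoeff a b n := by
  have hn : (n + 1 : ℂ) ≠ 0 := n.cast_add_one_ne_zero
  have hrec : (b + n) * ((n + 1) * kummerCoeff a b (n + 1)) = (a + n) * kummerCoeff a b n := by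
    rw [succ_mul_kummerCoeff_succ, ← kummerCoeff_eq_add_mul_kummerCoeff_add_one,
      kummerCoeff_add_one_left b han]
  field_simp
  linear_combination hrec

lemma eventually_add_natCast_ne_zero : ∀ᶠ n : ℕ in atTop, a + n ≠ 0 := by
  filter_upwards [tendsto_natCast_atTop_atTop.eventually_gt_atTop ‖a‖] with n hn han
  exact hn.ne (by simp [eq_neg_of_add_eq_zero_left han])

lemma summable_kummerCoeff_mul_pow : Summable fun n ↦ kummerCoeff a b n * z ^ n := by
  have hratio : Tendsto (fun n : ℕ ↦ ‖(a + n) / (b + n) * (1 / (n + 1)) * z‖) atTop (𝓝 0) := by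
    have h₁ : Tendsto (fun n : ℕ ↦ (a + n) / (b + n)) atTop (𝓝 1) := by
      simpa using tendsto_add_mul_div_add_mul_atTop_nhds a b 1 one_ne_zero
    simpa using ((h₁.mul tendsto_one_div_add_atTop_nhds_zero_nat).mul_const z).norm
  refine summable_of_ratio_norm_eventually_le one_half_lt_one ?_
  filter_upwards [hratio.eventually_le_const one_half_pos, eventually_add_natCast_ne_zero a,
    eventually_add_natCast_ne_zero b] with n hn han hbn
  calc ‖kummerCoeff a b (n + 1) * z ^ (n + 1)‖
      = ‖(a + n) / (b + n) * (1 / (n + 1)) * z‖ * ‖kummerCoeff a b n * z ^ n‖ := by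
        rw [kummerCoeff_succ han hbn, ← norm_mul]
        ring_nf
    _ ≤ 1 / 2 * ‖kummerCoeff a b n * z ^ n‖ := by gcongr

lemma hasSum_scaledKummer :
    HasSum (fun n ↦ kummerCoeff a b n * z ^ n) (scaledKummer a b z) :=
  (summable_kummerCoeff_mul_pow a b z).hasSum

lemma hasSum_mul_scaledKummer_add_one :
    HasSum (fun n : ℕ ↦ n * kummerCoeff a b n * z ^ n) (z * scaledKummer (a + 1) (b + 1) z) := by
  have hshift : HasSum (fun n : ℕ ↦ ((n + 1 : ℕ) : ℂ) * kummerCoeff a b (n + 1) * z ^ (n + 1))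
      (z * scaledKummer (a + 1) (b + 1) z) := by
    refine ((hasSum_scaledKummer (a + 1) (b + 1) z).mul_left z).congr_fun fun n ↦ ?_
    rw [← succ_mul_kummerCoeff_succ]
    push_cast
    ring
  simpa using
    (hasSum_nat_add_iff (f := fun n : ℕ ↦ n * kummerCoeff a b n * z ^ n) 1).mp hshift

lemma scaledKummer_eq_mul_add_mul :
    scaledKummer a b z = b * scaledKummer a (b + 1) z + z * scaledKummer (a + 1) (b + 2) z := by
  have hsum := ((hasSum_scaledKummer a (b + 1) z).mul_left b).add
    (hasSum_mul_scaledKummer_add_one a (b + 1) z)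
  rw [add_assoc b, one_add_one_eq_two] at hsum
  refine (hasSum_scaledKummer a b z).unique (hsum.congr_fun fun n ↦ ?_)
  rw [kummerCoeff_eq_add_mul_kummerCoeff_add_one]
  ring

variable {a} in
lemma mul_scaledKummer_eq_sub (ha : ∀ n : ℕ, a ≠ -n) :
    a * scaledKummer a b z = scaledKummer (a + 1) b z - z * scaledKummer (a + 1) (b + 1) z := by
  refine ((hasSum_scaledKummer a b z).mul_left a).unique
    (((hasSum_scaledKummer (a + 1) b z).sub
      (hasSum_mul_scaledKummer_add_one a b z)).congr_fun fun n ↦ ?_)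
  rw [kummerCoeff_add_one_left b fun h ↦ ha n (eq_neg_of_add_eq_zero_left h)]
  ring

variable {a b} in
lemma Gamma_div_Gamma_mul_kummer (ha : ∀ n : ℕ, a ≠ -n) (hb : ∀ n : ℕ, b ≠ -n) :
    Gamma a / Gamma b * kummer a b z = scaledKummer a b z := by
  rw [kummer, scaledKummer, ← tsum_mul_left]
  refine tsum_congr fun n ↦ ?_
  have hΓa : Gamma a ≠ 0 := Gamma_ne_zero ha
  have hΓb : Gamma b ≠ 0 := Gamma_ne_zero hb
  rw [← Gamma_add_nat_div_Gamma_eq a ha, ← Gamma_add_nat_div_Gamma_eq b hb, kummerCoeff]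
  field_simp

variable {a} {c : ℂ}

lemma betaIntegral_add_natCast_div_factorial (ha : 0 < a.re) (hc : 0 < c.re) (n : ℕ) :
    betaIntegral c (a + n) / n.factorial = Gamma c * kummerCoeff a (a + c) n := by
  have han : 0 < (a + n).re := by simpa using by positivity
  rw [betaIntegral_eq_Gamma_mul_div c _ hc han, kummerCoeff, add_left_comm c, add_right_comm a,
    add_comm c, ← add_assoc, add_right_comm a, div_div, mul_div_assoc]

lemma integral_mul_pow_one_sub_eq_betaIntegral (n : ℕ) :
    ∫ t in (0 : ℝ)..1, (t : ℂ) ^ (c - 1) * (1 - t : ℂ) ^ (a - 1) * (1 - t : ℂ) ^ n =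
      betaIntegral c (a + n) := by
  refine intervalIntegral.integral_congr_Ioo_of_le zero_le_one fun t ht ↦ ?_
  have h1t : (1 - t : ℂ) ≠ 0 := sub_ne_zero.mpr (by exact_mod_cast ht.2.ne')
  rw [mul_assoc, add_sub_right_comm, cpow_add _ _ h1t, cpow_natCast]

lemma hasSum_integral_mul_pow_div_factorial {w g : ℝ → ℂ} {u v : ℝ}
    (hw : IntervalIntegrable w volume u v) (hg : Continuous g) :
    HasSum (fun n : ℕ ↦ ∫ t in u..v, w t * (g t ^ n / n.factorial))
      (∫ t in u..v, w t * cexp (g t)) := by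
  obtain ⟨M, hM⟩ := isCompact_uIcc.exists_bound_of_continuousOn (hg.continuousOn (s := uIcc u v))
  refine intervalIntegral.hasSum_integral_of_dominated_convergence
    (fun n t ↦ ‖w t‖ * (M ^ n / n.factorial)) (fun n ↦ ?_) (fun n ↦ ?_) ?_ ?_ ?_
  · exact hw.def'.aestronglyMeasurable.mul (by fun_prop)
  · refine .of_forall fun t ht ↦ ?_
    rw [norm_mul, norm_div, norm_pow, norm_natCast]
    gcongr
    exact hM t (uIoc_subset_uIcc ht)
  · exact .of_forall fun t _ ↦ (Real.summable_pow_div_factorial M).mul_left _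
  · simpa only [tsum_mul_left] using hw.norm.mul_const _
  · refine .of_forall fun t _ ↦ .mul_left _ ?_
    simpa [← exp_eq_exp_ℂ] using NormedSpace.expSeries_div_hasSum_exp (g t)

theorem Gamma_mul_scaledKummer_eq_integral (ha : 0 < a.re) (hc : 0 < c.re) :
    Gamma c * scaledKummer a (a + c) z =
      ∫ t in (0 : ℝ)..1, (t : ℂ) ^ (c - 1) * (1 - t : ℂ) ^ (a - 1) * cexp (z * (1 - t)) := by
  refine ((hasSum_scaledKummer a (a + c) z).mul_left (Gamma c)).unique <|
    (hasSum_integral_mul_pow_div_factorial (betaIntegral_convergent hc ha)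
      (by fun_prop : Continuous fun t : ℝ ↦ z * (1 - t))).congr_fun fun n ↦ ?_
  rw [← mul_assoc, ← betaIntegral_add_natCast_div_factorial ha hc,
    ← integral_mul_pow_one_sub_eq_betaIntegral, div_mul_eq_mul_div, mul_div_assoc,
    ← intervalIntegral.integral_mul_const]
  refine intervalIntegral.integral_congr fun t _ ↦ ?_
  simp only [mul_pow]
  ring

end Kummer

/-- The coefficient `(b - a)_j (1 - a)_j / j!` of `z ^ (-j)` in the exponential expansion. -/
noncomputable def expansionCoeff (a b : ℂ) (j : ℕ) : ℂ :=
  (ascPochhammer ℂ j).eval (b - a) * (ascPochhammer ℂ j).eval (1 - a) / j.factorial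

/-- The exponential expansion truncated to its first `N` terms, without the factor
`z ^ (a - b) * exp z`. -/
noncomputable def expansionSum (a b : ℂ) (N : ℕ) (z : ℂ) : ℂ :=
  ∑ j ∈ Finset.range N, expansionCoeff a b j / z ^ j

/-- The error of the `N`-term exponential expansion of `scaledKummer a b z`. -/
noncomputable def expansionRemainder (a b : ℂ) (N : ℕ) (z : ℂ) : ℂ :=
  scaledKummer a b z - z ^ (a - b) * cexp z * expansionSum a b N z

/-- Along the positive reals, `scaledKummer a b` has the exponential expansion to all orders. -/
def HasExponentialExpansion (a b : ℂ) : Prop :=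
  ∀ N : ℕ, (fun x : ℝ ↦ expansionRemainder a b N x) =O[atTop]
    fun x : ℝ ↦ x ^ ((a - b).re - N) * Real.exp x

section EulerIntegral

variable {a b c : ℂ}

/-- The second factor of Euler's integrand `t ^ (c - 1) * (1 - t) ^ (a - 1)`, extended by zero
past `t = 1` so that the integral becomes a Laplace transform over `(0, ∞)`. -/
noncomputable def eulerWeight (a : ℂ) : ℝ → ℂ :=
  (Iic 1).indicator fun t ↦ (1 - t : ℂ) ^ (a - 1)

lemma exp_smul_cpow_mul_eulerWeight (a c : ℂ) (x : ℝ) :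
    (fun t : ℝ ↦ Real.exp (-(x * t)) • ((t : ℂ) ^ (c - 1) * eulerWeight a t)) =
      (Iic 1).indicator fun t : ℝ ↦
        (t : ℂ) ^ (c - 1) * (1 - t : ℂ) ^ (a - 1) * cexp (-(x * t)) := by
  ext t
  by_cases ht : t ∈ Iic (1 : ℝ) <;> simp [eulerWeight, ht, mul_comm]

lemma integrableOn_exp_smul_cpow_mul_eulerWeight (ha : 0 < a.re) (hc : 0 < c.re) (x : ℝ) :
    IntegrableOn (fun t : ℝ ↦ Real.exp (-(x * t)) • ((t : ℂ) ^ (c - 1) * eulerWeight a t))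
      (Ioi 0) := by
  have hbeta := (betaIntegral_convergent hc ha).mul_continuousOn
    (g := fun t : ℝ ↦ cexp (-(x * t))) (by fun_prop)
  rw [intervalIntegrable_iff_integrableOn_Ioc_of_le zero_le_one, ← Ioi_inter_Iic] at hbeta
  rw [exp_smul_cpow_mul_eulerWeight, IntegrableOn, integrable_indicator_iff measurableSet_Iic,
    IntegrableOn, Measure.restrict_restrict measurableSet_Iic, inter_comm]
  exact hbeta

lemma Gamma_mul_scaledKummer_eq_exp_mul_integral (ha : 0 < a.re) (hc : 0 < c.re) (x : ℝ) :
    Gamma c * scaledKummer a (a + c) x =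
      cexp x * ∫ t in Ioi (0 : ℝ),
        Real.exp (-(x * t)) • ((t : ℂ) ^ (c - 1) * eulerWeight a t) := by
  rw [Gamma_mul_scaledKummer_eq_integral _ ha hc, exp_smul_cpow_mul_eulerWeight,
    setIntegral_indicator measurableSet_Iic, Ioi_inter_Iic,
    ← intervalIntegral.integral_of_le zero_le_one, ← intervalIntegral.integral_const_mul]
  refine intervalIntegral.integral_congr fun t _ ↦ ?_
  have hexp : cexp (x * (1 - t)) = cexp x * cexp (-(x * t)) := by
    rw [← Complex.exp_add]
    ring_nf
  simp only [hexp]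
  ring

lemma isBigO_eulerWeight_sub_sum (a : ℂ) (N : ℕ) :
    (fun t : ℝ ↦ eulerWeight a t -
      ∑ j ∈ Finset.range N, (ascPochhammer ℂ j).eval (1 - a) / j.factorial * (t : ℂ) ^ j)
      =O[𝓝[>] 0] fun t ↦ t ^ N := by
  have hofReal : Tendsto ((↑) : ℝ → ℂ) (𝓝[>] 0) (𝓝 0) :=
    (continuous_ofReal.tendsto' 0 0 ofReal_zero).mono_left nhdsWithin_le_nhds
  have hbinomial := (isBigO_one_sub_cpow_neg_sub_sum (1 - a) N).comp_tendsto hofReal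
  refine (hbinomial.congr' ?_ .rfl).trans (isBigO_of_le _ fun t ↦ by simp)
  filter_upwards [nhdsWithin_le_nhds (Iic_mem_nhds one_pos)] with t ht
  simp [eulerWeight, indicator_of_mem ht]

lemma Gamma_mul_cpow_mul_expansionSum (hc : ∀ n : ℕ, b - a ≠ -n) (N : ℕ) {z : ℂ} (hz : z ≠ 0) :
    Gamma (b - a) * (z ^ (a - b) * expansionSum a b N z) =
      ∑ j ∈ Finset.range N, (ascPochhammer ℂ j).eval (1 - a) / j.factorial *
        (Gamma (b - a + j) * z ^ (-(b - a + j))) := by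
  rw [expansionSum, Finset.mul_sum, Finset.mul_sum]
  refine Finset.sum_congr rfl fun j _ ↦ ?_
  have hΓ : Gamma (b - a + j) = Gamma (b - a) * (ascPochhammer ℂ j).eval (b - a) := by
    rw [← Gamma_add_nat_div_Gamma_eq _ hc, mul_div_cancel₀ _ (Gamma_ne_zero hc)]
  have hpow : z ^ (-(b - a + j)) = z ^ (a - b) / z ^ j := by
    rw [neg_add, neg_sub, cpow_add _ _ hz, cpow_neg, cpow_natCast, div_eq_mul_inv]
  rw [hΓ, hpow, expansionCoeff]
  ring

lemma hasExponentialExpansion_of_re_pos (ha : 0 < a.re) (hc : 0 < (b - a).re) :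
    HasExponentialExpansion a b := by
  intro N
  have hc' (n : ℕ) : b - a ≠ -n := fun h ↦ by
    rw [h, neg_re, natCast_re] at hc
    linarith [n.cast_nonneg (α := ℝ)]
  have hwatson := watson_isBigO hc one_pos (integrableOn_exp_smul_cpow_mul_eulerWeight ha hc 1)
    (isBigO_eulerWeight_sub_sum a N)
  have hexp : (fun x : ℝ ↦ cexp x) =O[atTop] Real.exp :=
    isBigO_of_le _ fun x ↦ by simp [norm_exp]
  refine ((hwatson.mul hexp).const_mul_left (Gamma (b - a))⁻¹).congr' ?_ (.of_forall fun x ↦ ?_)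
  · filter_upwards [eventually_ne_atTop 0] with x hx
    have hK := Gamma_mul_scaledKummer_eq_exp_mul_integral ha hc x
    rw [add_sub_cancel] at hK
    rw [← Gamma_mul_cpow_mul_expansionSum hc' N (ofReal_ne_zero.mpr hx),
      inv_mul_eq_iff_eq_mul₀ (Gamma_ne_zero hc'), expansionRemainder]
    linear_combination -hK
  · simp only [sub_re]
    ring_nf

end EulerIntegral

section ContiguousExpansions

variable (a b : ℂ) {z : ℂ}

lemma ascPochhammer_succ_eval_left {R : Type*} [CommSemiring R] (s : R) (n : ℕ) :
    (ascPochhammer R (n + 1)).eval s = s * (ascPochhammer R n).eval (s + 1) := by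
  simp [ascPochhammer_succ_left]

lemma mul_expansionCoeff_eq_sub (j : ℕ) :
    a * expansionCoeff a b j =
      expansionCoeff (a + 1) b (j + 1) - expansionCoeff (a + 1) (b + 1) (j + 1) := by
  have hb : b - (a + 1) + 1 = b - a := by ring
  have hb' : b + 1 - (a + 1) = b - a := by ring
  have ha : 1 - (a + 1) + 1 = 1 - a := by ring
  have hj : (j + 1 : ℂ) ≠ 0 := j.cast_add_one_ne_zero
  simp only [expansionCoeff, hb', ascPochhammer_succ_eval_left (1 - (a + 1)), ha,
    ascPochhammer_succ_eval_left (b - (a + 1)), hb, ascPochhammer_succ_eval _ (b - a),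
    Nat.factorial_succ, Nat.cast_mul, Nat.cast_add_one]
  field_simp
  ring

lemma expansionCoeff_succ_eq_mul_add (j : ℕ) :
    expansionCoeff a b (j + 1) =
      b * expansionCoeff a (b + 1) j + expansionCoeff (a + 1) (b + 2) (j + 1) := by
  have hb : b + 2 - (a + 1) = b - a + 1 := by ring
  have hb' : b + 1 - a = b - a + 1 := by ring
  have ha : 1 - (a + 1) + 1 = 1 - a := by ring
  have hj : (j + 1 : ℂ) ≠ 0 := j.cast_add_one_ne_zero
  simp only [expansionCoeff, hb, hb', ascPochhammer_succ_eval_left (1 - (a + 1)), ha,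
    ascPochhammer_succ_eval_left (b - a), ascPochhammer_succ_eval _ (b - a + 1),
    ascPochhammer_succ_eval _ (1 - a), Nat.factorial_succ, Nat.cast_mul, Nat.cast_add_one]
  field_simp
  ring

lemma expansionSum_succ (N : ℕ) (z : ℂ) :
    expansionSum a b (N + 1) z =
      (∑ j ∈ Finset.range N, expansionCoeff a b (j + 1) / z ^ j) / z + 1 := by
  rw [expansionSum, Finset.sum_range_succ', Finset.sum_div]
  simp [expansionCoeff, pow_succ, div_div, mul_assoc]

lemma mul_expansionSum_eq_mul_sub (N : ℕ) (hz : z ≠ 0) :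
    a * expansionSum a b N z =
      z * (expansionSum (a + 1) b (N + 1) z - expansionSum (a + 1) (b + 1) (N + 1) z) := by
  rw [expansionSum_succ, expansionSum_succ, add_sub_add_right_eq_sub, ← sub_div,
    mul_div_cancel₀ _ hz, ← Finset.sum_sub_distrib, expansionSum, Finset.mul_sum]
  simp only [← sub_div, ← mul_expansionCoeff_eq_sub, mul_div_assoc]

lemma expansionSum_succ_eq_mul_add (N : ℕ) (z : ℂ) :
    expansionSum a b (N + 1) z =
      b * expansionSum a (b + 1) N z / z + expansionSum (a + 1) (b + 2) (N + 1) z := by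
  rw [expansionSum_succ, expansionSum_succ, ← add_assoc, ← add_div, expansionSum, Finset.mul_sum,
    ← Finset.sum_add_distrib]
  simp only [expansionCoeff_succ_eq_mul_add a b, add_div, mul_div_assoc]

variable {a} in
lemma mul_expansionRemainder_eq_sub (ha : ∀ n : ℕ, a ≠ -n) (N : ℕ) (hz : z ≠ 0) :
    a * expansionRemainder a b N z =
      expansionRemainder (a + 1) b (N + 1) z -
        z * expansionRemainder (a + 1) (b + 1) (N + 1) z := by
  have hpow : z ^ (a + 1 - b) = z ^ (a - b) * z := by
    rw [add_sub_right_comm, cpow_add _ _ hz, cpow_one]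
  rw [expansionRemainder, expansionRemainder, expansionRemainder, hpow, add_sub_add_right_eq_sub]
  linear_combination mul_scaledKummer_eq_sub b z ha -
    z ^ (a - b) * cexp z * mul_expansionSum_eq_mul_sub a b N hz

lemma expansionRemainder_zero_eq_mul_add (z : ℂ) :
    expansionRemainder a b 0 z =
      b * expansionRemainder a (b + 1) 0 z + z * expansionRemainder (a + 1) (b + 2) 0 z := by
  simpa [expansionRemainder, expansionSum] using scaledKummer_eq_mul_add_mul a b z

lemma expansionRemainder_succ_eq_mul_add (N : ℕ) (hz : z ≠ 0) :
    expansionRemainder a b (N + 1) z =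
      b * expansionRemainder a (b + 1) N z +
        z * expansionRemainder (a + 1) (b + 2) (N + 1) z := by
  have hpow : z ^ (a - b) = z ^ (a - (b + 1)) * z := by
    rw [← sub_sub, cpow_sub _ 1 hz, cpow_one, div_mul_cancel₀ _ hz]
  have hexp : a + 1 - (b + 2) = a - (b + 1) := by ring
  rw [expansionRemainder, expansionRemainder, expansionRemainder, hexp, hpow,
    expansionSum_succ_eq_mul_add, scaledKummer_eq_mul_add_mul]
  field_simp
  ring

end ContiguousExpansions

section Extension

variable {a b : ℂ}

lemma isBigO_rpow_atTop_of_le {p q : ℝ} (hpq : p ≤ q) :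
    (fun x : ℝ ↦ x ^ p) =O[atTop] fun x ↦ x ^ q := by
  refine .of_norm_eventuallyLE ?_
  filter_upwards [eventually_ge_atTop 1] with x hx
  rw [Real.norm_of_nonneg (by positivity)]
  exact Real.rpow_le_rpow_of_exponent_le hx hpq

lemma isBigO_ofReal_mul_of_isBigO_rpow_mul {f : ℝ → ℂ} {g : ℝ → ℝ} {p q : ℝ}
    (hpq : q = p + 1) (hf : f =O[atTop] fun x : ℝ ↦ x ^ p * g x) :
    (fun x : ℝ ↦ x * f x) =O[atTop] fun x : ℝ ↦ x ^ q * g x := by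
  refine ((isBigO_ofReal_left.mpr (isBigO_refl (fun x : ℝ ↦ x) atTop)).mul hf).congr' .rfl ?_
  filter_upwards [eventually_gt_atTop 0] with x hx
  rw [hpq, Real.rpow_add_one hx.ne']
  ring

lemma HasExponentialExpansion.of_add_one_left (ha : ∀ n : ℕ, a ≠ -n)
    (h : HasExponentialExpansion (a + 1) b) (h' : HasExponentialExpansion (a + 1) (b + 1)) :
    HasExponentialExpansion a b := by
  intro N
  have ha₀ : a ≠ 0 := by simpa using ha 0
  have hR := h (N + 1)
  have hR' := isBigO_ofReal_mul_of_isBigO_rpow_mul rfl (h' (N + 1))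
  have hrate : (a + 1 - b).re - (N + 1 : ℕ) = (a - b).re - N := by
    simp only [sub_re, add_re, one_re, Nat.cast_add_one]
    ring
  have hrate' : (a + 1 - (b + 1)).re - (N + 1 : ℕ) + 1 = (a - b).re - N := by
    simp only [sub_re, add_re, one_re, Nat.cast_add_one]
    ring
  rw [hrate] at hR
  rw [hrate'] at hR'
  refine ((hR.sub hR').const_mul_left a⁻¹).congr' ?_ .rfl
  filter_upwards [eventually_ne_atTop 0] with x hx
  rw [← mul_expansionRemainder_eq_sub b ha N (ofReal_ne_zero.mpr hx), inv_mul_cancel_left₀ ha₀]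

lemma HasExponentialExpansion.of_add_one_right
    (h : HasExponentialExpansion a (b + 1)) (h' : HasExponentialExpansion (a + 1) (b + 2)) :
    HasExponentialExpansion a b := by
  have hmul (N : ℕ) : (fun x : ℝ ↦ x * expansionRemainder (a + 1) (b + 2) N x) =O[atTop]
      fun x ↦ x ^ ((a - b).re - N) * Real.exp x :=
    isBigO_ofReal_mul_of_isBigO_rpow_mul (by simp only [sub_re, add_re, one_re, re_ofNat]; ring)
      (h' N)
  rintro (_ | N)
  · have hre : (a - (b + 1)).re - (0 : ℕ) < (a - b).re - (0 : ℕ) := by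
      simp only [sub_re, add_re, one_re]
      linarith
    have hrate : (fun x : ℝ ↦ x ^ ((a - (b + 1)).re - (0 : ℕ)) * Real.exp x) =O[atTop]
        fun x ↦ x ^ ((a - b).re - (0 : ℕ)) * Real.exp x :=
      (isBigO_rpow_atTop_of_le hre.le).mul (isBigO_refl _ _)
    refine ((((h 0).trans hrate).const_mul_left b).add (hmul 0)).congr_left fun x ↦ ?_
    rw [← expansionRemainder_zero_eq_mul_add]
  · have hR := (h N).const_mul_left b
    have hrate : (a - (b + 1)).re - N = (a - b).re - (N + 1 : ℕ) := by
      simp only [sub_re, add_re, one_re, Nat.cast_add_one]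
      ring
    rw [hrate] at hR
    refine (hR.add (hmul (N + 1))).congr' ?_ .rfl
    filter_upwards [eventually_ne_atTop 0] with x hx
    rw [← expansionRemainder_succ_eq_mul_add a b N (ofReal_ne_zero.mpr hx)]

lemma hasExponentialExpansion_of_left_re_pos (ha : 0 < a.re) :
    HasExponentialExpansion a b := by
  obtain ⟨k, hk⟩ := exists_nat_gt (-(b - a).re)
  induction k generalizing a b with
  | zero => exact hasExponentialExpansion_of_re_pos ha (by simpa using hk)
  | succ k ih =>
    push_cast at hk
    refine .of_add_one_right (ih ha ?_) (ih ?_ ?_) <;>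
      simp only [sub_re, add_re, one_re, re_ofNat] at hk ⊢ <;> linarith

theorem hasExponentialExpansion (ha : ∀ n : ℕ, a ≠ -n) : HasExponentialExpansion a b := by
  obtain ⟨k, hk⟩ := exists_nat_gt (-a.re)
  induction k generalizing a b with
  | zero => exact hasExponentialExpansion_of_left_re_pos (by simpa using hk)
  | succ k ih =>
    have ha' (n : ℕ) : a + 1 ≠ -n := fun h ↦ ha (n + 1) (by push_cast; linear_combination h)
    have hk' : -(a + 1).re < k := by
      rw [add_re, one_re]
      push_cast at hk
      linarith
    exact .of_add_one_left ha (ih ha' hk') (ih ha' hk')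

end Extension

/-- The exponential asymptotic expansion of `₁F₁(a; b; x)` as `x → +∞` with error bound:
`(Γ(a)/Γ(b)) ₁F₁(a;b;x) − x^{a−b} eˣ ∑_{j<N} (b−a)_j (1−a)_j/(j! xʲ) = O(x^{Re(a−b)−N} eˣ)`. -/
theorem kummer_exponential_expansion (a b : ℂ)
    (ha : ∀ n : ℕ, a ≠ -(n : ℂ)) (hb : ∀ n : ℕ, b ≠ -(n : ℂ)) (N : ℕ) (hN : 0 < N) :
    (fun x : ℝ =>
        (Complex.Gamma a / Complex.Gamma b) * kummer a b x -
          (x : ℂ) ^ (a - b) * Complex.exp x *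
            ∑ j ∈ Finset.range N,
              (ascPochhammer ℂ j).eval (b - a) * (ascPochhammer ℂ j).eval (1 - a) /
                (j.factorial * (x : ℂ) ^ j))
      =O[atTop] fun x : ℝ => x ^ ((a - b).re - N) * Real.exp x := by
  refine (hasExponentialExpansion ha N).congr_left fun x ↦ ?_
  simp only [expansionRemainder, expansionSum, expansionCoeff, div_div,
    Gamma_div_Gamma_mul_kummer _ ha hb]
end

section
/- Let a, b be real numbers with a not an integer, b not a nonpositive integer, and b − a not a nonpositive integer. For x > 0 set the optimal truncation index m₀(x) := ⌊x + 2a − b⌋. Then as x → +∞, the optimally truncated remainder F(x) := (1/Γ(b)) · ₁F₁(a; b; x) − (x^{a−b} e^x / Γ(a)) ∑_{j=0}^{m₀(x)−1} (b−a)_j (1−a)_j / (j! x^j) satisfies F(x) = (x^{−a}/Γ(b−a)) · cos(πa) + O(x^{−a−1/2}). In particular, the Stokes multiplier of the subdominant algebraic expansion on the Stokes line arg z = 0 equals cos(πa) to leading order. -/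
open Complex Filter Asymptotics

/-!
Write `c = b - a`. Contiguous relations shift `a` and `c` while moving the truncation index only by
a bounded amount, so it suffices to treat large `a` and `c`, for any index within `O(1)` of `x`.

For such parameters extend Euler's integral for `₁F₁` from `(0, 1)` past the branch point `u = 1`,
taking for `(1 - u) ^ (a - 1)` the mean of its two boundary values. The part over `(1, ∞)` is
`-cos(πa) e ^ (-x)` times a Tricomi integral `T(1) ~ Γ(a) x ^ (-a)`, and gives the Stokes term. The
truncated expansion is the Laplace transform of the Taylor polynomial of `(1 - u) ^ (a - 1)`. By
Cauchy's formula along the cut, the difference that is left is `sin(πa) / π` times the principal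
value at `r = 1` of `∫ r ^ (m - a) e ^ (x (1 - r)) T(r) dr / (1 - r)`. At the optimal index `m ≈ x`
the pole coincides with the saddle point of `r ^ m e ^ (-x r)`; the integrand is then odd about
`r = 1` to leading order, and the cancellation gains the factor `x ^ (-1/2)`.
-/

namespace KummerStokes

open MeasureTheory Set Topology
open scoped Nat

/-! ### Pochhammer symbols and the reciprocal Gamma function -/

/-- The real Pochhammer symbol `(a)_n = a (a + 1) ⋯ (a + n - 1)`. -/
noncomputable def pochhammer (a : ℝ) (n : ℕ) : ℝ := (ascPochhammer ℝ n).eval a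

@[simp]
lemma pochhammer_zero (a : ℝ) : pochhammer a 0 = 1 := by simp [pochhammer]

lemma pochhammer_succ (a : ℝ) (n : ℕ) : pochhammer a (n + 1) = pochhammer a n * (a + n) := by
  simp [pochhammer, ascPochhammer_succ_eval]

lemma pochhammer_succ_left (a : ℝ) (n : ℕ) :
    pochhammer a (n + 1) = a * pochhammer (a + 1) n := by
  simp [pochhammer, ascPochhammer_succ_left, Polynomial.eval_comp]

lemma pochhammer_sub_one_succ (a : ℝ) (n : ℕ) :
    pochhammer (a - 1) (n + 1) = pochhammer a (n + 1) - (n + 1) * pochhammer a n := by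
  rw [pochhammer_succ_left, sub_add_cancel, pochhammer_succ]
  ring

lemma ofReal_pochhammer (a : ℝ) (n : ℕ) :
    ((pochhammer a n : ℝ) : ℂ) = (ascPochhammer ℂ n).eval (a : ℂ) := by
  rw [pochhammer, ← ascPochhammer_map (algebraMap ℝ ℂ), Polynomial.eval_map_algebraMap,
    ← Complex.coe_algebraMap, Polynomial.aeval_algebraMap_apply, Polynomial.coe_aeval_eq_eval]

-- No case distinction at the poles: there Mathlib sets `Γ` to `0`, hence `Γ⁻¹` to its true value.
lemma inv_Gamma_eq_mul_inv_Gamma_add_one (s : ℝ) :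
    (Real.Gamma s)⁻¹ = s * (Real.Gamma (s + 1))⁻¹ := by
  rcases eq_or_ne s 0 with rfl | hs
  · simp
  · rw [Real.Gamma_add_one hs, mul_inv, mul_inv_cancel_left₀ hs]

lemma inv_Gamma_eq_pochhammer_mul (s : ℝ) (n : ℕ) :
    (Real.Gamma s)⁻¹ = pochhammer s n * (Real.Gamma (s + n))⁻¹ := by
  induction n with
  | zero => simp
  | succ n ih =>
    rw [ih, inv_Gamma_eq_mul_inv_Gamma_add_one (s + n), pochhammer_succ, mul_assoc, add_assoc,
      Nat.cast_succ]

/-! ### The regularized Kummer function -/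

/-- The `n`-th term `(a)_n x ^ n / (n! Γ(b + n))` of the regularized Kummer series. -/
noncomputable def regularizedKummerTerm (a b x : ℝ) (n : ℕ) : ℝ :=
  pochhammer a n * x ^ n / n ! * (Real.Gamma (b + n))⁻¹

/-- The regularized Kummer function `₁F₁(a; b; x) / Γ(b)`, which is entire in `b`. -/
noncomputable def regularizedKummer (a b x : ℝ) : ℝ := ∑' n, regularizedKummerTerm a b x n

lemma regularizedKummerTerm_succ (a b x : ℝ) {n : ℕ} (hbn : b + n ≠ 0) :
    regularizedKummerTerm a b x (n + 1) =
      (a + n) / (b + n) * (x / (n + 1)) * regularizedKummerTerm a b x n := by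
  rw [regularizedKummerTerm, regularizedKummerTerm, inv_Gamma_eq_mul_inv_Gamma_add_one (b + n),
    pochhammer_succ, Nat.factorial_succ, pow_succ, Nat.cast_succ, ← add_assoc]
  push_cast
  field_simp

lemma tendsto_regularizedKummerTerm_ratio (a b x : ℝ) :
    Tendsto (fun n : ℕ => (a + n) / (b + n) * (x / (n + 1))) atTop (𝓝 0) := by
  have hquot : Tendsto (fun n : ℕ => (a + n) / (b + n)) atTop (𝓝 1) := by
    simpa using tendsto_add_mul_div_add_mul_atTop_nhds a b (1 : ℝ) one_ne_zero
  have hinv : Tendsto (fun n : ℕ => x / ((n : ℝ) + 1)) atTop (𝓝 0) := by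
    simpa [div_eq_mul_inv] using (tendsto_one_div_add_atTop_nhds_zero_nat (𝕜 := ℝ)).const_mul x
  simpa using hquot.mul hinv

lemma summable_regularizedKummerTerm (a b x : ℝ) : Summable (regularizedKummerTerm a b x) := by
  have hbn : ∀ᶠ n : ℕ in atTop, -b < n :=
    tendsto_natCast_atTop_atTop.eventually (eventually_gt_atTop (-b))
  have hratio : ∀ᶠ n : ℕ in atTop, ‖(a + n) / (b + n) * (x / (n + 1))‖ < 1 / 2 :=
    (tendsto_regularizedKummerTerm_ratio a b x).norm.eventually_lt_const (by norm_num)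
  refine summable_of_ratio_norm_eventually_le (r := 1 / 2) (by norm_num) ?_
  filter_upwards [hratio, hbn] with n hn hbn
  rw [regularizedKummerTerm_succ a b x (by linarith), norm_mul]
  gcongr

lemma regularizedKummer_sub_one (a b x : ℝ) :
    regularizedKummer (a - 1) b x =
      regularizedKummer a b x - x * regularizedKummer a (b + 1) x := by
  have hterm (n : ℕ) : regularizedKummerTerm a b x (n + 1) -
      regularizedKummerTerm (a - 1) b x (n + 1) = x * regularizedKummerTerm a (b + 1) x n := by
    rw [regularizedKummerTerm, regularizedKummerTerm, regularizedKummerTerm,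
      pochhammer_sub_one_succ, Nat.factorial_succ, pow_succ, Nat.cast_succ, add_right_comm b,
      ← add_assoc b]
    push_cast
    field_simp
    ring
  have hdiff : regularizedKummer a b x - regularizedKummer (a - 1) b x =
      x * regularizedKummer a (b + 1) x := by
    have hsum := summable_regularizedKummerTerm a b x
    have hsum' := summable_regularizedKummerTerm (a - 1) b x
    rw [regularizedKummer, regularizedKummer, ← hsum.tsum_sub hsum',
      (hsum.sub hsum').tsum_eq_zero_add]
    simp only [hterm, tsum_mul_left, regularizedKummer]
    simp [regularizedKummerTerm]
  linarith

lemma regularizedKummer_eq_add (a b x : ℝ) :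
    regularizedKummer a b x = a * regularizedKummer (a + 1) (b + 1) x +
      (b - a) * regularizedKummer a (b + 1) x := by
  rw [regularizedKummer, regularizedKummer, regularizedKummer, ← tsum_mul_left, ← tsum_mul_left,
    ← ((summable_regularizedKummerTerm _ _ _).mul_left _).tsum_add
      ((summable_regularizedKummerTerm _ _ _).mul_left _)]
  refine tsum_congr fun n => ?_
  have hpoch : pochhammer a n * (a + n) = a * pochhammer (a + 1) n := by
    rw [← pochhammer_succ, pochhammer_succ_left]
  rw [regularizedKummerTerm, regularizedKummerTerm, regularizedKummerTerm,
    inv_Gamma_eq_mul_inv_Gamma_add_one (b + n), add_right_comm b 1]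
  linear_combination (x ^ n / n ! * (Real.Gamma (b + n + 1))⁻¹) * hpoch

lemma one_div_Gamma_mul_kummer (a x : ℝ) {b : ℝ} (hb : ∀ n : ℕ, b ≠ -(n : ℝ)) :
    1 / Complex.Gamma b * kummer a b x = ((regularizedKummer a b x : ℝ) : ℂ) := by
  have hGamma : (Real.Gamma b)⁻¹ ≠ 0 := inv_ne_zero (Real.Gamma_ne_zero hb)
  have hpoch (n : ℕ) : (Real.Gamma b)⁻¹ / pochhammer b n = (Real.Gamma (b + n))⁻¹ := by
    have h := inv_Gamma_eq_pochhammer_mul b n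
    rw [h, mul_div_cancel_left₀ _ (left_ne_zero_of_mul (h ▸ hGamma))]
  rw [kummer, regularizedKummer, Complex.ofReal_tsum, ← tsum_mul_left]
  refine tsum_congr fun n => ?_
  rw [regularizedKummerTerm, ← hpoch, Complex.Gamma_ofReal, ← ofReal_pochhammer,
    ← ofReal_pochhammer]
  push_cast
  ring

/-! ### The remainder of the truncated exponential expansion -/

/-- The truncated series `∑_{j < m} (c)_j (1 - a)_j / (j! x ^ j)` of the exponential expansion of
the regularized Kummer function, in the parameters `a` and `c = b - a`. -/
noncomputable def truncatedSeries (a c : ℝ) (m : ℕ) (x : ℝ) : ℝ :=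
  ∑ j ∈ Finset.range m, pochhammer c j * pochhammer (1 - a) j / (j ! * x ^ j)

/-- What remains of `₁F₁(a; a + c; x) / Γ(a + c)` after subtracting the first `m` terms of its
exponential expansion. -/
noncomputable def remainder (a c : ℝ) (m : ℕ) (x : ℝ) : ℝ :=
  regularizedKummer a (a + c) x - x ^ (-c) * Real.exp x / Real.Gamma a * truncatedSeries a c m x

section Contiguous

variable (a c : ℝ) (m : ℕ) {x : ℝ}

lemma truncatedSeries_sub_one_add_one (hx : x ≠ 0) :
    (a - 1) * truncatedSeries (a - 1) (c + 1) m x =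
      x * (truncatedSeries a c (m + 1) x - truncatedSeries a (c + 1) (m + 1) x) := by
  simp only [truncatedSeries]
  rw [← Finset.sum_sub_distrib, Finset.sum_range_succ', Finset.mul_sum, mul_add, Finset.mul_sum]
  simp only [pochhammer_zero, sub_self, mul_zero, add_zero]
  refine Finset.sum_congr rfl fun j _ => ?_
  have hc := pochhammer_sub_one_succ (c + 1) j
  rw [add_sub_cancel_right] at hc
  rw [hc, pochhammer_succ_left (1 - a), show 1 - a + 1 = 1 - (a - 1) by ring,
    Nat.factorial_succ]
  push_cast
  field_simp
  ring

lemma truncatedSeries_succ_sub (hx : x ≠ 0) :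
    x * (truncatedSeries a c (m + 1) x - truncatedSeries (a + 1) c (m + 1) x) =
      c * truncatedSeries a (c + 1) m x := by
  simp only [truncatedSeries]
  rw [← Finset.sum_sub_distrib, Finset.sum_range_succ', Finset.mul_sum, mul_add, Finset.mul_sum]
  simp only [pochhammer_zero, sub_self, mul_zero, add_zero]
  refine Finset.sum_congr rfl fun j _ => ?_
  rw [← sub_sub 1 a 1, pochhammer_sub_one_succ, pochhammer_succ_left c, Nat.factorial_succ]
  push_cast
  field_simp
  ring

lemma remainder_sub_one_add_one (hx : 0 < x) :
    remainder (a - 1) (c + 1) m x =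
      remainder a c (m + 1) x - x * remainder a (c + 1) (m + 1) x := by
  have hpow : x ^ (-c) = x ^ (-(c + 1)) * x := by
    rw [← Real.rpow_add_one hx.ne']; ring_nf
  have hKummer := regularizedKummer_sub_one a (a + c) x
  have hGamma := inv_Gamma_eq_mul_inv_Gamma_add_one (a - 1)
  rw [sub_add_cancel] at hGamma
  rw [remainder, remainder, remainder, sub_add_add_cancel, hKummer, add_assoc, hpow, div_eq_mul_inv,
    div_eq_mul_inv, div_eq_mul_inv, hGamma]
  linear_combination (-x ^ (-(c + 1)) * Real.exp x * (Real.Gamma a)⁻¹) *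
    truncatedSeries_sub_one_add_one a c m hx.ne'

lemma remainder_succ_eq_add (hx : 0 < x) :
    remainder a c (m + 1) x = a * remainder (a + 1) c (m + 1) x + c * remainder a (c + 1) m x := by
  have hpow : x ^ (-c) = x ^ (-(c + 1)) * x := by
    rw [← Real.rpow_add_one hx.ne']; ring_nf
  have hKummer := regularizedKummer_eq_add a (a + c) x
  rw [add_sub_cancel_left] at hKummer
  rw [remainder, remainder, remainder, hKummer, add_right_comm a 1, ← add_assoc a c 1, hpow,
    div_eq_mul_inv, div_eq_mul_inv, div_eq_mul_inv, inv_Gamma_eq_mul_inv_Gamma_add_one a]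
  linear_combination (-x ^ (-(c + 1)) * Real.exp x * a * (Real.Gamma (a + 1))⁻¹) *
    truncatedSeries_succ_sub a c m hx.ne'

end Contiguous

/-! ### Reduction to large parameters -/

/-- A truncation index `m x = x + O(1)`, hence within bounded distance of the optimal
`⌊x + 2 a - b⌋`. -/
def IsNearOptimal (m : ℝ → ℕ) : Prop :=
  (fun x => (m x : ℝ) - x) =O[atTop] fun _ => (1 : ℝ)

/-- The Stokes contribution `cos(πa) x ^ (-a) / Γ(c)`. -/
noncomputable def stokesTerm (a c x : ℝ) : ℝ := x ^ (-a) / Real.Gamma c * Real.cos (Real.pi * a)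

/-- Near-optimally truncated remainders are asymptotic to the Stokes term, with relative error
`O(x ^ (-1/2))`. -/
def HasStokesAsymptotics (a c : ℝ) : Prop :=
  ∀ m : ℝ → ℕ, IsNearOptimal m →
    (fun x => remainder a c (m x) x - stokesTerm a c x) =O[atTop] fun x => x ^ (-a - 1 / 2)

section Reduction

variable {a c : ℝ} {m : ℝ → ℕ}

lemma IsNearOptimal.add_one (hm : IsNearOptimal m) : IsNearOptimal fun x => m x + 1 := by
  have h := hm.add (isBigO_refl (fun _ => (1 : ℝ)) atTop)
  refine h.congr_left fun x => ?_
  push_cast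
  ring

lemma IsNearOptimal.eventually_one_le (hm : IsNearOptimal m) : ∀ᶠ x in atTop, 1 ≤ m x := by
  obtain ⟨C, hC⟩ := hm.bound
  filter_upwards [hC, eventually_gt_atTop C] with x hx hCx
  rw [norm_one, mul_one, Real.norm_eq_abs] at hx
  have hpos : (0 : ℝ) < m x := by linarith [(abs_le.1 hx).1]
  exact_mod_cast hpos

lemma IsNearOptimal.sub_one (hm : IsNearOptimal m) : IsNearOptimal fun x => m x - 1 := by
  have h := hm.sub (isBigO_refl (fun _ => (1 : ℝ)) atTop)
  refine h.congr' ?_ EventuallyEq.rfl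
  filter_upwards [hm.eventually_one_le] with x hx
  rw [Nat.cast_sub hx, Nat.cast_one, sub_right_comm]

lemma isBigO_of_isBigO_add_one {f : ℕ → ℝ → ℝ} {g : ℝ → ℝ}
    (hf : ∀ m, IsNearOptimal m → (fun x => f (m x + 1) x) =O[atTop] g) (hm : IsNearOptimal m) :
    (fun x => f (m x) x) =O[atTop] g := by
  refine (hf _ hm.sub_one).congr' ?_ EventuallyEq.rfl
  filter_upwards [hm.eventually_one_le] with x hx
  rw [Nat.sub_add_cancel hx]

lemma isBigO_rpow_of_le {p q : ℝ} (hpq : p ≤ q) :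
    (fun x : ℝ => x ^ p) =O[atTop] fun x => x ^ q := by
  refine IsBigO.of_bound' ?_
  filter_upwards [eventually_ge_atTop 1] with x hx
  rw [Real.norm_of_nonneg (by positivity), Real.norm_of_nonneg (by positivity)]
  exact Real.rpow_le_rpow_of_exponent_le hx hpq

lemma isBigO_id_mul_rpow {f : ℝ → ℝ} {p : ℝ} (hf : f =O[atTop] fun x => x ^ p) :
    (fun x => x * f x) =O[atTop] fun x => x ^ (p + 1) := by
  refine ((isBigO_refl (fun x : ℝ => x) atTop).mul hf).congr' EventuallyEq.rfl ?_
  filter_upwards [eventually_gt_atTop 0] with x hx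
  rw [Real.rpow_add_one hx.ne', mul_comm]

lemma HasStokesAsymptotics.remainder_isBigO (h : HasStokesAsymptotics a c)
    (hm : IsNearOptimal m) :
    (fun x => remainder a c (m x) x) =O[atTop] fun x => x ^ (-a) := by
  have hterm : stokesTerm a c =O[atTop] fun x => x ^ (-a) := by
    refine ((isBigO_refl (fun x : ℝ => x ^ (-a)) atTop).const_mul_left
      (Real.cos (Real.pi * a) / Real.Gamma c)).congr_left fun x => ?_
    rw [stokesTerm]
    ring
  refine (((h m hm).trans (isBigO_rpow_of_le (by linarith))).add hterm).congr_left fun x => ?_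
  ring

/-- The two contiguous relations determine the remainder at `(a, c)` from remainders at second
parameter `c + 1`: first a crude bound at `(a + 2, c)`, then one at `(a + 1, c)`. -/
lemma HasStokesAsymptotics.of_add_one_right (h₀ : HasStokesAsymptotics a (c + 1))
    (h₁ : HasStokesAsymptotics (a + 1) (c + 1)) (h₂ : HasStokesAsymptotics (a + 2) (c + 1)) :
    HasStokesAsymptotics a c := by
  have hbound₂ {m : ℝ → ℕ} (hm : IsNearOptimal m) :
      (fun x => remainder (a + 2) c (m x) x) =O[atTop] fun x => x ^ (-(a + 1)) := by
    refine isBigO_of_isBigO_add_one (fun m hm => ?_) hm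
    have hmul := isBigO_id_mul_rpow (h₂.remainder_isBigO hm.add_one)
    rw [show -(a + 2) + 1 = -(a + 1) by ring] at hmul
    refine ((h₁.remainder_isBigO hm).add hmul).congr' ?_ EventuallyEq.rfl
    filter_upwards [eventually_gt_atTop 0] with x hx
    have hrec := remainder_sub_one_add_one (a + 2) c (m x) hx
    rw [show a + 2 - 1 = a + 1 by ring] at hrec
    linarith
  have hbound₁ {m : ℝ → ℕ} (hm : IsNearOptimal m) :
      (fun x => remainder (a + 1) c (m x) x) =O[atTop] fun x => x ^ (-(a + 1)) := by
    refine isBigO_of_isBigO_add_one (fun m hm => ?_) hm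
    refine (((hbound₂ hm.add_one).const_mul_left (a + 1)).add
      ((h₁.remainder_isBigO hm).const_mul_left c)).congr' ?_ EventuallyEq.rfl
    filter_upwards [eventually_gt_atTop 0] with x hx
    rw [remainder_succ_eq_add (a + 1) c (m x) hx, add_assoc a 1 1, one_add_one_eq_two]
  refine fun m hm => isBigO_of_isBigO_add_one
    (f := fun m x => remainder a c m x - stokesTerm a c x) (fun m hm => ?_) hm
  have hfirst := (hbound₁ hm.add_one).trans
    (isBigO_rpow_of_le (by linarith : -(a + 1) ≤ -a - 1 / 2))
  refine ((hfirst.const_mul_left a).add ((h₀ m hm).const_mul_left c)).congr' ?_ EventuallyEq.rfl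
  filter_upwards [eventually_gt_atTop 0] with x hx
  rw [remainder_succ_eq_add a c (m x) hx, stokesTerm, stokesTerm, div_eq_mul_inv, div_eq_mul_inv,
    inv_Gamma_eq_mul_inv_Gamma_add_one c]
  ring

lemma HasStokesAsymptotics.of_add_one_left (h₀ : HasStokesAsymptotics (a + 1) c)
    (h₁ : HasStokesAsymptotics (a + 1) (c - 1)) : HasStokesAsymptotics a c := by
  intro m hm
  have hsmall := (h₁.remainder_isBigO hm.add_one).trans
    (isBigO_rpow_of_le (by linarith : -(a + 1) ≤ -a - 1 / 2))
  have hmain := isBigO_id_mul_rpow (h₀ _ hm.add_one)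
  rw [show -(a + 1) - 1 / 2 + 1 = -a - 1 / 2 by ring] at hmain
  refine (hsmall.sub hmain).congr' ?_ EventuallyEq.rfl
  filter_upwards [eventually_gt_atTop 0] with x hx
  have hrec := remainder_sub_one_add_one (a + 1) (c - 1) (m x) hx
  rw [sub_add_cancel, add_sub_cancel_right] at hrec
  have hpow : x ^ (-a) = x ^ (-(a + 1)) * x := by
    rw [← Real.rpow_add_one hx.ne']; ring_nf
  have hcos : Real.cos (Real.pi * (a + 1)) = -Real.cos (Real.pi * a) := by
    rw [mul_add, mul_one, Real.cos_add_pi]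
  rw [hrec, stokesTerm, stokesTerm, hcos, hpow]
  ring

end Reduction

lemma forall_of_forall_gt_of_add_one {P : ℝ → Prop} {r : ℝ} (hlarge : ∀ t, r < t → P t)
    (hstep : ∀ t, (∀ s, t + 1 ≤ s → P s) → P t) (t : ℝ) : P t := by
  have hgt (k : ℕ) : ∀ t, r - k < t → P t := by
    induction k with
    | zero => simpa using hlarge
    | succ k ih =>
      intro t ht
      push_cast at ht
      exact hstep t fun s hs => ih s (by linarith)
  obtain ⟨k, hk⟩ := exists_nat_gt (r - t)
  exact hgt k t (by linarith)

lemma hasStokesAsymptotics_of_forall_gt {r : ℝ}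
    (h : ∀ a c, r < a → r < c → HasStokesAsymptotics a c) (a c : ℝ) :
    HasStokesAsymptotics a c := by
  have hc (c : ℝ) : ∀ a, r < a → HasStokesAsymptotics a c := by
    refine forall_of_forall_gt_of_add_one (P := fun c => ∀ a, r < a → HasStokesAsymptotics a c)
      (fun c hc a ha => h a c ha hc) (fun c ih a ha => ?_) c
    exact .of_add_one_right (ih _ le_rfl a ha) (ih _ le_rfl _ (by linarith))
      (ih _ le_rfl _ (by linarith))
  refine forall_of_forall_gt_of_add_one (P := fun a => ∀ c, HasStokesAsymptotics a c)
    (fun a ha c => hc c a ha) (fun a ih c => ?_) a c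
  exact .of_add_one_left (ih _ le_rfl c) (ih _ le_rfl (c - 1))

/-! ### A Stieltjes integral for the remainder of the binomial series -/

/-- The polynomial `∑_{j < m} (1 - a)_j z ^ j / j!`, which truncates the binomial series of
`(1 - z) ^ (a - 1)`. -/
noncomputable def binomialPartialSum {K : Type*} [RCLike K] (a : ℝ) (m : ℕ) (z : K) : K :=
  ∑ j ∈ Finset.range m, ((pochhammer (1 - a) j / j ! : ℝ) : K) * z ^ j

/-- The weight `s ^ (m - a) (1 - s) ^ (a - 1)` of the Stieltjes integral. -/
noncomputable def betaWeight (a : ℝ) (m : ℕ) (s : ℝ) : ℝ := s ^ (m - a) * (1 - s) ^ (a - 1)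

/-- The plane cut along `[1, ∞)`. -/
def cutPlane : Set ℂ := {z | 1 - z ∈ Complex.slitPlane}

lemma integral_rpow_mul_one_sub_rpow {p q : ℝ} (hp : 0 < p) (hq : 0 < q) :
    ∫ s in (0 : ℝ)..1, s ^ (p - 1) * (1 - s) ^ (q - 1) =
      Real.Gamma p * Real.Gamma q / Real.Gamma (p + q) := by
  have hbeta : Complex.betaIntegral p q =
      ((∫ s in (0 : ℝ)..1, s ^ (p - 1) * (1 - s) ^ (q - 1) : ℝ) : ℂ) := by
    rw [Complex.betaIntegral, ← intervalIntegral.integral_ofReal]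
    refine intervalIntegral.integral_congr fun s hs => ?_
    rw [uIcc_of_le zero_le_one] at hs
    push_cast
    rw [Complex.ofReal_cpow hs.1, Complex.ofReal_cpow (sub_nonneg.2 hs.2)]
    push_cast
    rfl
  have hGamma := ProbabilityTheory.beta_eq_betaIntegralReal p q hp hq
  rw [hbeta, Complex.ofReal_re, ProbabilityTheory.beta] at hGamma
  exact hGamma.symm

lemma hasSum_one_sub_cpow (r : ℝ) {z : ℂ} (hz : ‖z‖ < 1) :
    HasSum (fun j : ℕ => ((pochhammer r j / j ! : ℝ) : ℂ) * z ^ j) ((1 - z) ^ (-r : ℂ)) := by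
  have h := (Complex.one_div_one_sub_cpow_hasFPowerSeriesOnBall_zero r).hasSum (y := z)
    (by simpa [Metric.mem_eball, edist_zero_right, enorm_eq_nnnorm, ← NNReal.coe_lt_one] using hz)
  simp only [zero_add, one_div, FormalMultilinearSeries.ofScalars_apply_eq, smul_eq_mul] at h
  rw [Complex.cpow_neg]
  refine h.congr_fun fun j => ?_
  have hchoose : Ring.choose ((r : ℂ) + j - 1) j = Ring.multichoose (r : ℂ) j := by
    rw [Ring.choose]
    ring_nf
  have hmulti := Ring.factorial_nsmul_multichoose_eq_ascPochhammer (r : ℂ) j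
  rw [Polynomial.ascPochhammer_smeval_eq_eval] at hmulti
  rw [hchoose, Complex.ofReal_div, ofReal_pochhammer, ← hmulti, nsmul_eq_mul,
    Complex.ofReal_natCast, mul_div_cancel_left₀ _ (by exact_mod_cast j.factorial_ne_zero)]

section CutPlane

lemma isOpen_cutPlane : IsOpen cutPlane :=
  Complex.isOpen_slitPlane.preimage (by fun_prop)

lemma isPreconnected_cutPlane : IsPreconnected cutPlane := by
  have himage : cutPlane = (fun z => 1 - z) '' Complex.slitPlane := by
    ext z
    exact ⟨fun hz => ⟨1 - z, hz, sub_sub_cancel 1 z⟩, by rintro ⟨w, hw, rfl⟩; simpa [cutPlane]⟩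
  rw [himage]
  exact (Complex.starConvex_one_slitPlane.isPathConnected
    Complex.one_mem_slitPlane).isConnected.isPreconnected.image _ (by fun_prop)

lemma one_sub_mul_ofReal_ne_zero {z : ℂ} (hz : z ∈ cutPlane) {s : ℝ} (hs : s ∈ Icc (0 : ℝ) 1) :
    1 - z * s ≠ 0 := by
  intro h
  have hre : z.re * s = 1 := by
    have hre' : 1 - z.re * s = 0 := by simpa using congrArg Complex.re h
    linarith
  have him : z.im * s = 0 := by simpa using congrArg Complex.im h
  rcases Complex.mem_slitPlane_iff.1 hz with hlt | hne
  · rw [Complex.sub_re, Complex.one_re] at hlt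
    have hs1 : s = 1 := le_antisymm hs.2 (by nlinarith [mul_nonneg hs.1 hlt.le])
    rw [hs1] at hre
    linarith
  · have hs0 : s = 0 := (mul_eq_zero.1 him).resolve_left (by simpa using hne)
    simp [hs0] at hre

variable {w : ℝ → ℝ}

lemma differentiableAt_integral_div_one_sub_mul (hw : Continuous w) {z₀ : ℂ} (hz₀ : z₀ ∈ cutPlane) :
    DifferentiableAt ℂ (fun z : ℂ => ∫ s in (0 : ℝ)..1, (w s : ℂ) / (1 - z * s)) z₀ := by
  have hne (q : ℂ × ℝ) (hq : q ∈ cutPlane ×ˢ Icc (0 : ℝ) 1) : 1 - q.1 * q.2 ≠ 0 :=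
    one_sub_mul_ofReal_ne_zero hq.1 hq.2
  obtain ⟨ε, hε, hball⟩ := Metric.nhds_basis_closedBall.mem_iff.1 (isOpen_cutPlane.mem_nhds hz₀)
  have hcont : ContinuousOn (fun q : ℂ × ℝ => (w q.2 : ℂ) / (1 - q.1 * q.2))
      (cutPlane ×ˢ Icc 0 1) := ContinuousOn.div (by fun_prop) (by fun_prop) hne
  have hcont' : ContinuousOn (fun q : ℂ × ℝ => (w q.2 : ℂ) * q.2 / (1 - q.1 * q.2) ^ 2)
      (cutPlane ×ˢ Icc 0 1) :=
    ContinuousOn.div (by fun_prop) (by fun_prop) fun q hq => pow_ne_zero 2 (hne q hq)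
  obtain ⟨C, hC⟩ := ((isCompact_closedBall z₀ ε).prod isCompact_Icc).exists_bound_of_continuousOn
    (hcont'.mono (prod_mono hball le_rfl))
  have hslice {f : ℂ × ℝ → ℂ} (hf : ContinuousOn f (cutPlane ×ˢ Icc 0 1)) {z : ℂ}
      (hz : z ∈ cutPlane) : ContinuousOn (fun s => f (z, s)) (Icc 0 1) :=
    hf.comp (by fun_prop) fun s hs => ⟨hz, hs⟩
  have hIcc : uIoc (0 : ℝ) 1 ⊆ Icc 0 1 := by
    rw [uIoc_of_le zero_le_one]
    exact Ioc_subset_Icc_self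
  refine (intervalIntegral.hasDerivAt_integral_of_dominated_loc_of_deriv_le (μ := volume)
    (F' := fun z s => (w s : ℂ) * s / (1 - z * s) ^ 2) (bound := fun _ => C)
    (Metric.closedBall_mem_nhds z₀ hε) ?_ ?_ ?_ ?_ ?_ ?_).2.differentiableAt
  · filter_upwards [isOpen_cutPlane.mem_nhds hz₀] with z hz
    exact ((hslice hcont hz).mono hIcc).aestronglyMeasurable measurableSet_uIoc
  · exact ContinuousOn.intervalIntegrable (by simpa using! hslice hcont hz₀)
  · exact ((hslice hcont' hz₀).mono hIcc).aestronglyMeasurable measurableSet_uIoc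
  · exact Eventually.of_forall fun s hs z hz => hC (z, s) ⟨hz, hIcc hs⟩
  · exact intervalIntegrable_const
  · refine Eventually.of_forall fun s hs z hz => ?_
    have hden : HasDerivAt (fun z : ℂ => 1 - z * s) (-s) z := by
      simpa using ((hasDerivAt_id z).mul_const (s : ℂ)).const_sub 1
    exact ((hasDerivAt_const z (w s : ℂ)).div hden (hne (z, s) ⟨hball hz, hIcc hs⟩)).congr_deriv
      (by ring)

lemma hasSum_integral_mul_pow (hw : Continuous w) {z : ℂ} (hz : ‖z‖ < 1) :
    HasSum (fun k : ℕ => (∫ s in (0 : ℝ)..1, (w s : ℂ) * s ^ k) * z ^ k)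
      (∫ s in (0 : ℝ)..1, (w s : ℂ) / (1 - z * s)) := by
  have hnorm {s : ℝ} (hs : s ∈ uIoc (0 : ℝ) 1) : ‖z * s‖ ≤ ‖z‖ := by
    rw [uIoc_of_le zero_le_one] at hs
    rw [norm_mul, Complex.norm_of_nonneg hs.1.le]
    exact mul_le_of_le_one_right (norm_nonneg z) hs.2
  have hsum := intervalIntegral.hasSum_integral_of_dominated_convergence (a := 0) (b := 1)
    (μ := volume) (F := fun k s => (w s : ℂ) * (z * s) ^ k)
    (f := fun s => (w s : ℂ) / (1 - z * s)) (fun k s => |w s| * ‖z‖ ^ k) ?_ ?_ ?_ ?_ ?_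
  · refine hsum.congr_fun fun k => ?_
    rw [← intervalIntegral.integral_mul_const]
    congr 1 with s
    ring
  · exact fun k => Continuous.aestronglyMeasurable (by fun_prop)
  · refine fun k => Eventually.of_forall fun s hs => ?_
    rw [norm_mul, norm_pow, Complex.norm_real, Real.norm_eq_abs]
    gcongr
    exact hnorm hs
  · exact Eventually.of_forall fun s _ =>
      (summable_geometric_of_lt_one (norm_nonneg z) hz).mul_left _
  · simp only [tsum_mul_left]
    exact Continuous.intervalIntegrable (by fun_prop) _ _
  · refine Eventually.of_forall fun s hs => ?_
    simpa [div_eq_mul_inv] using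
      (hasSum_geometric_of_norm_lt_one ((hnorm hs).trans_lt hz)).mul_left (w s : ℂ)

end CutPlane

lemma continuous_rpow_of_nonneg {p : ℝ} (hp : 0 ≤ p) : Continuous fun s : ℝ => s ^ p :=
  continuous_id.rpow_const fun _ => Or.inr hp

section BetaWeight

variable {a : ℝ} {m : ℕ}

lemma continuous_betaWeight (ha : 1 ≤ a) (hm : a ≤ m) : Continuous (betaWeight a m) :=
  (continuous_rpow_of_nonneg (sub_nonneg.2 hm)).mul
    ((continuous_rpow_of_nonneg (sub_nonneg.2 ha)).comp (by fun_prop))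

lemma sin_div_pi_mul_integral_betaWeight_mul_pow (ha : 0 < a) (hm : a ≤ m) (k : ℕ) :
    Real.sin (Real.pi * a) / Real.pi * ∫ s in (0 : ℝ)..1, betaWeight a m s * s ^ k =
      pochhammer (1 - a) (k + m) / (k + m)! := by
  have hpow : ∫ s in (0 : ℝ)..1, betaWeight a m s * s ^ k =
      ∫ s in (0 : ℝ)..1, s ^ (1 - a + (k + m : ℕ) - 1) * (1 - s) ^ (a - 1) := by
    refine intervalIntegral.integral_congr fun s hs => ?_
    rw [uIcc_of_le zero_le_one] at hs
    have hsplit : s ^ (1 - a + (k + m : ℕ) - 1) = s ^ (m - a) * s ^ k := by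
      rw [← Real.rpow_natCast s k,
        ← Real.rpow_add_of_nonneg hs.1 (sub_nonneg.2 hm) (Nat.cast_nonneg k)]
      push_cast
      ring_nf
    simp only [betaWeight, hsplit]
    ring
  have hreflection : Real.sin (Real.pi * a) / Real.pi =
      (Real.Gamma a)⁻¹ * (Real.Gamma (1 - a))⁻¹ := by
    rw [← mul_inv, Real.Gamma_mul_Gamma_one_sub, inv_div]
  have hpos : 0 < 1 - a + (k + m : ℕ) := by
    push_cast
    linarith [k.cast_nonneg (α := ℝ)]
  have hfact : Real.Gamma (1 - a + (k + m : ℕ) + a) = (k + m)! := by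
    rw [← Real.Gamma_nat_eq_factorial]
    ring_nf
  rw [hpow, integral_rpow_mul_one_sub_rpow hpos ha, hreflection, hfact,
    inv_Gamma_eq_pochhammer_mul (1 - a) (k + m)]
  have hΓa := (Real.Gamma_pos_of_pos ha).ne'
  have hΓ := (Real.Gamma_pos_of_pos hpos).ne'
  field_simp

lemma one_sub_cpow_sub_binomialPartialSum_of_norm_lt_one (ha : 1 ≤ a) (hm : a ≤ m) {z : ℂ}
    (hz : ‖z‖ < 1) :
    (1 - z) ^ ((a - 1 : ℝ) : ℂ) - binomialPartialSum a m z =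
      ((Real.sin (Real.pi * a) / Real.pi : ℝ) : ℂ) * z ^ m *
        ∫ s in (0 : ℝ)..1, (betaWeight a m s : ℂ) / (1 - z * s) := by
  have hmoment (k : ℕ) : ((pochhammer (1 - a) (k + m) / (k + m)! : ℝ) : ℂ) =
      ((Real.sin (Real.pi * a) / Real.pi : ℝ) : ℂ) *
        ∫ s in (0 : ℝ)..1, (betaWeight a m s : ℂ) * s ^ k := by
    rw [← sin_div_pi_mul_integral_betaWeight_mul_pow (by linarith) hm, Complex.ofReal_mul,
      ← intervalIntegral.integral_ofReal]
    push_cast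
    rfl
  have htail := (hasSum_nat_add_iff' m).2 (hasSum_one_sub_cpow (1 - a) hz)
  have hintegral := (hasSum_integral_mul_pow (continuous_betaWeight ha hm) hz).mul_left
    (((Real.sin (Real.pi * a) / Real.pi : ℝ) : ℂ) * z ^ m)
  refine Eq.trans ?_ (htail.unique (hintegral.congr_fun fun k => ?_))
  · rw [binomialPartialSum, Complex.ofReal_sub, Complex.ofReal_sub, neg_sub]
    rfl
  · rw [hmoment, pow_add]
    ring

-- Both sides are holomorphic in the cut plane, so the identity spreads from the unit disc.
lemma one_sub_cpow_sub_binomialPartialSum (ha : 1 ≤ a) (hm : a ≤ m) {z : ℂ}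
    (hz : z ∈ cutPlane) :
    (1 - z) ^ ((a - 1 : ℝ) : ℂ) - binomialPartialSum a m z =
      ((Real.sin (Real.pi * a) / Real.pi : ℝ) : ℂ) * z ^ m *
        ∫ s in (0 : ℝ)..1, (betaWeight a m s : ℂ) / (1 - z * s) := by
  have hleft : DifferentiableOn ℂ
      (fun z => (1 - z) ^ ((a - 1 : ℝ) : ℂ) - binomialPartialSum a m z) cutPlane := by
    refine DifferentiableOn.sub (DifferentiableOn.cpow_const (by fun_prop) fun z hz => hz) ?_
    unfold binomialPartialSum
    fun_prop
  have hright : DifferentiableOn ℂ (fun z => ((Real.sin (Real.pi * a) / Real.pi : ℝ) : ℂ) * z ^ m *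
      ∫ s in (0 : ℝ)..1, (betaWeight a m s : ℂ) / (1 - z * s)) cutPlane := by
    refine DifferentiableOn.mul (by fun_prop) fun z hz => ?_
    exact (differentiableAt_integral_div_one_sub_mul
      (continuous_betaWeight ha hm) hz).differentiableWithinAt
  refine (hleft.analyticOnNhd isOpen_cutPlane).eqOn_of_preconnected_of_eventuallyEq
    (hright.analyticOnNhd isOpen_cutPlane) isPreconnected_cutPlane
    (z₀ := 0) (by simp [cutPlane]) ?_ hz
  filter_upwards [Metric.ball_mem_nhds (0 : ℂ) one_pos] with z hz
  exact one_sub_cpow_sub_binomialPartialSum_of_norm_lt_one ha hm (by simpa using hz)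

end BetaWeight

/-! ### Laplace integrals -/

lemma one_add_rpow_le_mul_exp {s t : ℝ} (hs : 0 ≤ s) (ht : 0 ≤ t) :
    (1 + t) ^ s ≤ (1 + s) ^ s * Real.exp t := by
  have hbase : 1 + t ≤ (1 + s) * Real.exp (t / (1 + s)) := by
    calc 1 + t ≤ (1 + s) * (t / (1 + s) + 1) := by field_simp; linarith
      _ ≤ (1 + s) * Real.exp (t / (1 + s)) := by gcongr; exact Real.add_one_le_exp _
  calc (1 + t) ^ s ≤ ((1 + s) * Real.exp (t / (1 + s))) ^ s := by gcongr
    _ = (1 + s) ^ s * Real.exp (t / (1 + s) * s) := by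
        rw [Real.mul_rpow (by positivity) (by positivity), ← Real.exp_mul]
    _ ≤ (1 + s) ^ s * Real.exp t := by
        gcongr
        rw [div_mul_eq_mul_div, div_le_iff₀ (by positivity)]
        nlinarith

/-- The weight `e ^ (-x u) u ^ (c - 1)` of the Laplace integrals over `(0, ∞)`. -/
noncomputable def laplaceWeight (c x u : ℝ) : ℝ := Real.exp (-(x * u)) * u ^ (c - 1)

section LaplaceWeight

variable {c x u : ℝ}

lemma laplaceWeight_nonneg (hu : 0 ≤ u) : 0 ≤ laplaceWeight c x u := by
  unfold laplaceWeight
  positivity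

lemma measurable_laplaceWeight (c x : ℝ) : Measurable (laplaceWeight c x) :=
  (show Measurable fun u : ℝ => Real.exp (-(x * u)) by fun_prop).mul (measurable_id.pow_const _)

lemma laplaceWeight_mul_pow (hu : 0 < u) (j : ℕ) :
    laplaceWeight c x u * u ^ j = laplaceWeight (c + j) x u := by
  rw [laplaceWeight, laplaceWeight, add_sub_right_comm, Real.rpow_add_natCast hu.ne', mul_assoc]

lemma laplaceWeight_mul_exp (c x u : ℝ) :
    laplaceWeight c x u * Real.exp u = laplaceWeight c (x - 1) u := by
  rw [laplaceWeight, laplaceWeight, mul_right_comm, ← Real.exp_add]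
  ring_nf

lemma integrableOn_laplaceWeight (hc : 0 < c) (hx : 0 < x) :
    IntegrableOn (laplaceWeight c x) (Ioi 0) := by
  have h := integrableOn_rpow_mul_exp_neg_mul_rpow (p := 1) (s := c - 1) (b := x) (by linarith)
    one_pos hx
  refine h.congr_fun (fun u _ => ?_) measurableSet_Ioi
  simp only [Real.rpow_one, laplaceWeight]
  rw [mul_comm, neg_mul]

lemma integral_laplaceWeight (hc : 0 < c) (hx : 0 < x) :
    ∫ u in Ioi (0 : ℝ), laplaceWeight c x u = x ^ (-c) * Real.Gamma c := by
  have h := Real.integral_rpow_mul_exp_neg_mul_Ioi hc hx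
  rw [one_div, Real.inv_rpow hx.le, ← Real.rpow_neg hx.le] at h
  rw [← h]
  exact setIntegral_congr_fun measurableSet_Ioi fun u _ => mul_comm _ _

lemma integrableOn_laplaceWeight_mul (hc : 0 < c) (hx : 1 < x) {f : ℝ → ℝ} (hf : Measurable f)
    {C : ℝ} (hbound : ∀ u > 0, |f u| ≤ C * Real.exp u) :
    IntegrableOn (fun u => laplaceWeight c x u * f u) (Ioi 0) := by
  refine Integrable.mono' ((integrableOn_laplaceWeight hc (sub_pos.2 hx)).const_mul C)
    ((measurable_laplaceWeight c x).mul hf).aestronglyMeasurable ?_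
  filter_upwards [ae_restrict_mem measurableSet_Ioi] with u hu
  rw [norm_mul, Real.norm_of_nonneg (laplaceWeight_nonneg (le_of_lt hu)), Real.norm_eq_abs,
    ← laplaceWeight_mul_exp, mul_left_comm]
  exact mul_le_mul_of_nonneg_left (hbound u hu) (laplaceWeight_nonneg (le_of_lt hu))

end LaplaceWeight

section EulerIntegral

variable {a c : ℝ}

lemma integral_mul_pow_div_factorial_mul_rpow_mul_one_sub_rpow (ha : 1 ≤ a) (hc : 0 < c)
    (x : ℝ) (n : ℕ) :
    ∫ s in (0 : ℝ)..1, (x * s) ^ n / n ! * (s ^ (a - 1) * (1 - s) ^ (c - 1)) =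
      Real.Gamma a * Real.Gamma c * regularizedKummerTerm a (a + c) x n := by
  have hpow : ∫ s in (0 : ℝ)..1, (x * s) ^ n / n ! * (s ^ (a - 1) * (1 - s) ^ (c - 1)) =
      x ^ n / n ! * ∫ s in (0 : ℝ)..1, s ^ (a + n - 1) * (1 - s) ^ (c - 1) := by
    rw [← intervalIntegral.integral_const_mul]
    refine intervalIntegral.integral_congr fun s hs => ?_
    rw [uIcc_of_le zero_le_one] at hs
    have hsplit : s ^ (a + n - 1) = s ^ (a - 1) * s ^ n := by
      rw [← Real.rpow_natCast s n,
        ← Real.rpow_add_of_nonneg hs.1 (sub_nonneg.2 ha) (Nat.cast_nonneg n), add_sub_right_comm]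
    simp only [hsplit, mul_pow]
    ring
  have hΓ : Real.Gamma (a + n) = Real.Gamma a * pochhammer a n := by
    have hΓa := (Real.Gamma_pos_of_pos (zero_lt_one.trans_le ha)).ne'
    have hΓan := (Real.Gamma_pos_of_pos (by positivity : 0 < a + n)).ne'
    have h := inv_Gamma_eq_pochhammer_mul a n
    field_simp at h
    linarith
  rw [hpow, integral_rpow_mul_one_sub_rpow (by positivity) hc, hΓ, regularizedKummerTerm,
    add_right_comm]
  ring

lemma hasSum_integral_exp_mul {w : ℝ → ℝ} (hw : Continuous w) (x : ℝ) :
    HasSum (fun n : ℕ => ∫ s in (0 : ℝ)..1, (x * s) ^ n / n ! * w s)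
      (∫ s in (0 : ℝ)..1, Real.exp (x * s) * w s) := by
  refine intervalIntegral.hasSum_integral_of_dominated_convergence
    (fun n s => |x| ^ n / n ! * |w s|) ?_ ?_ ?_ ?_ ?_
  · exact fun n => Continuous.aestronglyMeasurable (by fun_prop)
  · refine fun n => Eventually.of_forall fun s hs => ?_
    rw [uIoc_of_le zero_le_one] at hs
    rw [norm_mul, norm_div, norm_pow, norm_mul, Real.norm_natCast, Real.norm_of_nonneg hs.1.le,
      Real.norm_eq_abs, Real.norm_eq_abs]
    gcongr
    · exact mul_nonneg (abs_nonneg x) hs.1.le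
    · exact mul_le_of_le_one_right (abs_nonneg x) hs.2
  · exact Eventually.of_forall fun s _ => (Real.summable_pow_div_factorial |x|).mul_right _
  · simp only [tsum_mul_right]
    exact Continuous.intervalIntegrable (by fun_prop) _ _
  · refine Eventually.of_forall fun s _ => ?_
    have hexp := NormedSpace.expSeries_div_hasSum_exp (𝔸 := ℝ) (x * s)
    rw [← Real.exp_eq_exp_ℝ] at hexp
    exact hexp.mul_right _

lemma regularizedKummer_eq_integral (ha : 1 ≤ a) (hc : 1 ≤ c) (x : ℝ) :
    regularizedKummer a (a + c) x = Real.exp x * (Real.Gamma a * Real.Gamma c)⁻¹ *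
      ∫ u in (0 : ℝ)..1, laplaceWeight c x u * (1 - u) ^ (a - 1) := by
  have hreflect : ∫ u in (0 : ℝ)..1, laplaceWeight c x u * (1 - u) ^ (a - 1) =
      Real.exp (-x) * ∫ s in (0 : ℝ)..1, Real.exp (x * s) * (s ^ (a - 1) * (1 - s) ^ (c - 1)) := by
    have h := intervalIntegral.integral_comp_sub_left (a := 0) (b := 1)
      (fun u : ℝ => laplaceWeight c x u * (1 - u) ^ (a - 1)) 1
    rw [sub_self, sub_zero] at h
    rw [← h, ← intervalIntegral.integral_const_mul]
    refine intervalIntegral.integral_congr fun s _ => ?_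
    simp only [laplaceWeight, sub_sub_cancel]
    rw [show -(x * (1 - s)) = -x + x * s by ring, Real.exp_add]
    ring
  have hw : Continuous fun s : ℝ => s ^ (a - 1) * (1 - s) ^ (c - 1) :=
    (continuous_rpow_of_nonneg (sub_nonneg.2 ha)).mul
      ((continuous_rpow_of_nonneg (sub_nonneg.2 hc)).comp (by fun_prop))
  have hsum := hasSum_integral_exp_mul hw x
  simp only [integral_mul_pow_div_factorial_mul_rpow_mul_one_sub_rpow ha
    (zero_lt_one.trans_le hc)] at hsum
  rw [hreflect, ← hsum.tsum_eq, tsum_mul_left, ← regularizedKummer, Real.exp_neg]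
  have hΓa := (Real.Gamma_pos_of_pos (zero_lt_one.trans_le ha)).ne'
  have hΓc := (Real.Gamma_pos_of_pos (zero_lt_one.trans_le hc)).ne'
  field_simp

end EulerIntegral

lemma binomialPartialSum_real (a : ℝ) (m : ℕ) (u : ℝ) :
    binomialPartialSum a m u = ∑ j ∈ Finset.range m, pochhammer (1 - a) j / j ! * u ^ j := rfl

lemma laplaceWeight_mul_binomialPartialSum (a c x : ℝ) (m : ℕ) {u : ℝ} (hu : 0 < u) :
    laplaceWeight c x u * binomialPartialSum a m u =
      ∑ j ∈ Finset.range m, pochhammer (1 - a) j / j ! * laplaceWeight (c + j) x u := by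
  rw [binomialPartialSum_real, Finset.mul_sum]
  exact Finset.sum_congr rfl fun j _ => by rw [mul_left_comm, laplaceWeight_mul_pow hu]

section

variable {a c x : ℝ}

lemma integrableOn_laplaceWeight_mul_binomialPartialSum (a : ℝ) (hc : 0 < c) (hx : 0 < x) (m : ℕ) :
    IntegrableOn (fun u => laplaceWeight c x u * binomialPartialSum a m u) (Ioi 0) := by
  refine IntegrableOn.congr_fun ?_
    (fun u hu => (laplaceWeight_mul_binomialPartialSum a c x m hu).symm) measurableSet_Ioi
  exact integrable_finsetSum _ fun j _ =>
    (integrableOn_laplaceWeight (add_pos_of_pos_of_nonneg hc j.cast_nonneg) hx).const_mul _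

lemma mul_truncatedSeries_eq_integral (a : ℝ) (hc : 0 < c) (hx : 0 < x) (m : ℕ) :
    x ^ (-c) * Real.exp x / Real.Gamma a * truncatedSeries a c m x =
      Real.exp x * (Real.Gamma a * Real.Gamma c)⁻¹ *
        ∫ u in Ioi (0 : ℝ), laplaceWeight c x u * binomialPartialSum a m u := by
  have hcj (j : ℕ) : 0 < c + j := add_pos_of_pos_of_nonneg hc j.cast_nonneg
  have hintegral : ∫ u in Ioi (0 : ℝ), laplaceWeight c x u * binomialPartialSum a m u =
      ∑ j ∈ Finset.range m, pochhammer (1 - a) j / j ! * (x ^ (-(c + j)) * Real.Gamma (c + j)) := by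
    rw [setIntegral_congr_fun measurableSet_Ioi fun u hu =>
      laplaceWeight_mul_binomialPartialSum a c x m hu,
      integral_finsetSum _ fun j _ => (integrableOn_laplaceWeight (hcj j) hx).const_mul _]
    exact Finset.sum_congr rfl fun j _ => by
      rw [integral_const_mul, integral_laplaceWeight (hcj j) hx]
  rw [hintegral, truncatedSeries, Finset.mul_sum, Finset.mul_sum]
  refine Finset.sum_congr rfl fun j _ => ?_
  have hΓcj := (Real.Gamma_pos_of_pos (hcj j)).ne'
  rw [mul_inv, inv_Gamma_eq_pochhammer_mul c j, neg_add, Real.rpow_add hx,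
    Real.rpow_neg hx.le (j : ℝ), Real.rpow_natCast]
  field_simp

end

/-- The integral `∫_0^∞ e ^ (-x t) t ^ (a - 1) (r + t) ^ (c - 1) dt`. At `r = 1` it is `Γ(a)` times
Tricomi's function `U(a, a + c, x)`. -/
noncomputable def tricomiIntegral (a c x r : ℝ) : ℝ :=
  ∫ t in Ioi (0 : ℝ), laplaceWeight a x t * (r + t) ^ (c - 1)

lemma setIntegral_Ioi_comp_add_right (f : ℝ → ℝ) (b d : ℝ) :
    ∫ t in Ioi b, f (t + d) = ∫ u in Ioi (b + d), f u := by
  rw [← (measurePreserving_add_right volume d).setIntegral_preimage_emb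
    (measurableEmbedding_addRight d) f (Ioi (b + d)), preimage_add_const_Ioi, add_sub_cancel_right]

-- `cos(πa)` comes from `Real.rpow` at the negative base `1 - u`: its value there is the mean of the
-- two boundary values of the complex power along the cut.
lemma setIntegral_Ioi_one_laplaceWeight_mul_one_sub_rpow (a c x : ℝ) :
    ∫ u in Ioi (1 : ℝ), laplaceWeight c x u * (1 - u) ^ (a - 1) =
      -(Real.exp (-x) * (Real.cos (Real.pi * a) * tricomiIntegral a c x 1)) := by
  have hshift := setIntegral_Ioi_comp_add_right
    (fun u => laplaceWeight c x u * (1 - u) ^ (a - 1)) 0 1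
  rw [zero_add] at hshift
  rw [← hshift, tricomiIntegral, ← integral_const_mul, ← integral_const_mul, ← integral_neg]
  refine setIntegral_congr_fun measurableSet_Ioi fun t (ht : 0 < t) => ?_
  have hneg : (1 - (t + 1)) ^ (a - 1) = -(t ^ (a - 1) * Real.cos (Real.pi * a)) := by
    rw [sub_add_cancel_right, Real.rpow_def_of_neg (neg_lt_zero.2 ht), Real.log_neg_eq_log,
      ← Real.rpow_def_of_pos ht, sub_mul, one_mul, mul_comm a, Real.cos_sub_pi, mul_neg]
  simp only [laplaceWeight, hneg]
  rw [show -(x * (t + 1)) = -x + -(x * t) by ring, Real.exp_add, add_comm t 1]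
  ring

section

variable {a c x : ℝ}

lemma abs_one_sub_rpow_le_mul_exp {s u : ℝ} (hs : 0 ≤ s) (hu : 0 < u) :
    |(1 - u) ^ s| ≤ (1 + s) ^ s * Real.exp u :=
  calc |(1 - u) ^ s| ≤ |1 - u| ^ s := Real.abs_rpow_le_abs_rpow _ _
    _ ≤ (1 + u) ^ s := by
        gcongr
        rw [abs_le]
        constructor <;> linarith
    _ ≤ (1 + s) ^ s * Real.exp u := one_add_rpow_le_mul_exp hs hu.le

lemma remainder_eq_integral_add_tricomiIntegral (ha : 1 ≤ a) (hc : 1 ≤ c) (hx : 1 < x) (m : ℕ) :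
    remainder a c m x = (Real.Gamma a * Real.Gamma c)⁻¹ *
      (Real.exp x * (∫ u in Ioi (0 : ℝ),
          laplaceWeight c x u * ((1 - u) ^ (a - 1) - binomialPartialSum a m u)) +
        Real.cos (Real.pi * a) * tricomiIntegral a c x 1) := by
  have hc0 : 0 < c := zero_lt_one.trans_le hc
  have hx0 : 0 < x := zero_lt_one.trans hx
  have hInt : IntegrableOn (fun u => laplaceWeight c x u * (1 - u) ^ (a - 1)) (Ioi 0) :=
    integrableOn_laplaceWeight_mul hc0 hx (by fun_prop)
      fun u hu => abs_one_sub_rpow_le_mul_exp (sub_nonneg.2 ha) hu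
  have hsub : ∫ u in Ioi (0 : ℝ),
        laplaceWeight c x u * ((1 - u) ^ (a - 1) - binomialPartialSum a m u) =
      (∫ u in Ioi (0 : ℝ), laplaceWeight c x u * (1 - u) ^ (a - 1)) -
        ∫ u in Ioi (0 : ℝ), laplaceWeight c x u * binomialPartialSum a m u := by
    rw [← integral_sub hInt (integrableOn_laplaceWeight_mul_binomialPartialSum a hc0 hx0 m)]
    simp only [mul_sub]
  have hsplit : ∫ u in Ioi (0 : ℝ), laplaceWeight c x u * (1 - u) ^ (a - 1) =
      (∫ u in (0 : ℝ)..1, laplaceWeight c x u * (1 - u) ^ (a - 1)) +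
        ∫ u in Ioi (1 : ℝ), laplaceWeight c x u * (1 - u) ^ (a - 1) :=
    (intervalIntegral.integral_interval_add_Ioi hInt
      (hInt.mono_set (Ioi_subset_Ioi zero_le_one))).symm
  rw [remainder, regularizedKummer_eq_integral ha hc, mul_truncatedSeries_eq_integral a hc0 hx0,
    hsub, hsplit, setIntegral_Ioi_one_laplaceWeight_mul_one_sub_rpow, Real.exp_neg]
  field_simp
  ring

end

/-! ### Regularization of the principal value -/

/-- The kernel `v / (v² + η²)`, the real part of `1 / (v + i η)`. It regularizes the principal value
of `1 / v`. -/
noncomputable def cauchyKernel (η v : ℝ) : ℝ := v / (v ^ 2 + η ^ 2)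

lemma cauchyKernel_neg (η v : ℝ) : cauchyKernel η (-v) = -cauchyKernel η v := by
  rw [cauchyKernel, cauchyKernel, neg_sq, neg_div]

lemma measurable_cauchyKernel (η : ℝ) : Measurable (cauchyKernel η) := by
  unfold cauchyKernel
  fun_prop

lemma abs_cauchyKernel_le_inv_left {η : ℝ} (hη : 0 < η) (v : ℝ) : |cauchyKernel η v| ≤ η⁻¹ := by
  rw [cauchyKernel, abs_div, abs_of_pos (by positivity : 0 < v ^ 2 + η ^ 2), inv_eq_one_div,
    div_le_div_iff₀ (by positivity) hη]
  nlinarith [sq_nonneg (|v| - η), sq_abs v, abs_nonneg v]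

lemma abs_cauchyKernel_le_inv_right (η : ℝ) {v : ℝ} (hv : v ≠ 0) : |cauchyKernel η v| ≤ |v|⁻¹ := by
  have hv0 : 0 < |v| := abs_pos.2 hv
  rw [cauchyKernel, abs_div, abs_of_pos (by positivity : 0 < v ^ 2 + η ^ 2), inv_eq_one_div,
    div_le_div_iff₀ (by positivity) hv0]
  nlinarith [sq_abs v, sq_nonneg η]

lemma re_ofReal_div_one_add_mul_I_sub (w η r : ℝ) :
    ((w : ℂ) / (1 + η * I - r)).re = w * cauchyKernel η (1 - r) := by
  simp only [div_re, ofReal_re, sub_re, add_re, one_re, mul_re, I_re, mul_zero, ofReal_im, I_im,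
    mul_one, sub_self, add_zero, normSq_apply, sub_im, add_im, one_im, mul_im, zero_add, sub_zero,
    zero_mul, zero_div, cauchyKernel]
  ring

/-- The remainder `(1 - z) ^ (a - 1) - ∑_{j < m} (1 - a)_j z ^ j / j!` at `z = u / p`, where
`p = 1 + i η`, so that `1 - z` approaches the real axis from above as `η → 0⁺`. The factor
`p ^ (m - 1)` makes the real part a convolution involving `cauchyKernel`. -/
noncomputable def regularizedBinomialRemainder (a : ℝ) (m : ℕ) (η u : ℝ) : ℂ :=
  (1 + η * I) ^ m / (1 + η * I) *
    ((1 - u / (1 + η * I)) ^ ((a - 1 : ℝ) : ℂ) - binomialPartialSum a m (u / (1 + η * I)))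

lemma measurable_regularizedBinomialRemainder (a : ℝ) (m : ℕ) (η : ℝ) :
    Measurable (regularizedBinomialRemainder a m η) := by
  unfold regularizedBinomialRemainder binomialPartialSum
  fun_prop

section StieltjesForm

variable {a η u : ℝ} {m : ℕ}

lemma one_add_mul_I_sub_ofReal_ne_zero (hη : η ≠ 0) (r : ℝ) : 1 + η * I - r ≠ 0 := fun h =>
  hη (by simpa using congrArg im h)

lemma im_one_sub_div_pos (hη : 0 < η) (hu : 0 < u) : 0 < (1 - u / (1 + η * I)).im := by
  have him : (1 - u / (1 + η * I)).im = u * η / normSq (1 + η * I) := by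
    simp [div_im]
  rw [him]
  have hp : (1 + η * I : ℂ) ≠ 0 := by simpa using one_add_mul_I_sub_ofReal_ne_zero hη.ne' 0
  have := normSq_pos.2 hp
  positivity

lemma regularizedBinomialRemainder_eq_integral (ha : 1 ≤ a) (hm : a ≤ m) (hη : 0 < η)
    (hu : 0 < u) :
    regularizedBinomialRemainder a m η u = ((Real.sin (Real.pi * a) / Real.pi : ℝ) : ℂ) *
      (u ^ m * ∫ s in (0 : ℝ)..1, (betaWeight a m s : ℂ) / (1 + η * I - ((u * s : ℝ) : ℂ))) := by
  have hp : (1 + η * I : ℂ) ≠ 0 := by simpa using one_add_mul_I_sub_ofReal_ne_zero hη.ne' 0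
  have hmem : (u / (1 + η * I) : ℂ) ∈ cutPlane := Or.inr (im_one_sub_div_pos hη hu).ne'
  have hkernel (s : ℝ) : (betaWeight a m s : ℂ) / (1 - u / (1 + η * I) * s) =
      (1 + η * I) * ((betaWeight a m s : ℂ) / (1 + η * I - ((u * s : ℝ) : ℂ))) := by
    have hne := one_add_mul_I_sub_ofReal_ne_zero hη.ne' (u * s)
    have hden : 1 - u / (1 + η * I) * s = (1 + η * I - ((u * s : ℝ) : ℂ)) / (1 + η * I) := by
      push_cast
      field_simp
    rw [hden]
    field_simp
  rw [regularizedBinomialRemainder, one_sub_cpow_sub_binomialPartialSum ha hm hmem]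
  simp only [hkernel, intervalIntegral.integral_const_mul]
  rw [div_pow]
  field_simp

lemma re_regularizedBinomialRemainder (ha : 1 ≤ a) (hm : a ≤ m) (hη : 0 < η) (hu : 0 < u) :
    (regularizedBinomialRemainder a m η u).re = Real.sin (Real.pi * a) / Real.pi *
      ∫ r in (0 : ℝ)..u, r ^ (m - a) * (u - r) ^ (a - 1) * cauchyKernel η (1 - r) := by
  have hcont : Continuous fun s : ℝ =>
      (betaWeight a m s : ℂ) / (1 + η * I - ((u * s : ℝ) : ℂ)) :=
    (continuous_ofReal.comp (continuous_betaWeight ha hm)).div (by fun_prop)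
      fun s => one_add_mul_I_sub_ofReal_ne_zero hη.ne' (u * s)
  have hre := reCLM.intervalIntegral_comp_comm (hcont.intervalIntegrable (μ := volume) 0 1)
  simp only [reCLM_apply, re_ofReal_div_one_add_mul_I_sub] at hre
  have hsubst := intervalIntegral.smul_integral_comp_mul_left (a := 0) (b := 1)
    (fun r => r ^ (m - a) * (u - r) ^ (a - 1) * cauchyKernel η (1 - r)) u
  rw [mul_zero, mul_one, smul_eq_mul] at hsubst
  rw [regularizedBinomialRemainder_eq_integral ha hm hη hu, re_ofReal_mul, ← ofReal_pow,
    re_ofReal_mul, ← hre, ← hsubst, ← intervalIntegral.integral_const_mul,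
    ← intervalIntegral.integral_const_mul u]
  congr 1
  refine intervalIntegral.integral_congr fun s hs => ?_
  rw [uIcc_of_le zero_le_one] at hs
  have hpow : u ^ m = u * (u ^ (m - a) * u ^ (a - 1)) := by
    rw [← Real.rpow_add hu, ← Real.rpow_one_add' hu.le, ← Real.rpow_natCast]
    · ring_nf
    · linarith
  simp only [betaWeight]
  rw [show u - u * s = u * (1 - s) by ring, Real.mul_rpow hu.le hs.1,
    Real.mul_rpow hu.le (sub_nonneg.2 hs.2), hpow]
  ring

end StieltjesForm

section Limit

variable {a η u : ℝ} {m : ℕ}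

lemma tendsto_cpow_of_im_nonneg {ι : Type*} {l : Filter ι} {z : ι → ℂ} {r : ℝ} (hr : r ≠ 0)
    (hz : Tendsto z l (𝓝 r)) (him : ∀ᶠ i in l, 0 ≤ (z i).im) (s : ℂ) :
    Tendsto (fun i => z i ^ s) l (𝓝 ((r : ℂ) ^ s)) := by
  rcases lt_or_gt_of_ne hr with hneg | hpos
  · have hlog : Tendsto (fun i => log (z i)) l (𝓝 (log r)) :=
      (continuousWithinAt_log_of_re_neg_of_im_zero (z := r) (by simpa) (ofReal_im r)).tendsto.comp
        (tendsto_nhdsWithin_iff.2 ⟨hz, him⟩)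
    have hr' : (r : ℂ) ≠ 0 := ofReal_ne_zero.2 hr
    rw [cpow_def_of_ne_zero hr']
    refine ((continuous_exp.tendsto _).comp (hlog.mul_const s)).congr' ?_
    filter_upwards [hz.eventually_ne hr'] with i hi
    rw [cpow_def_of_ne_zero hi, Function.comp_apply]
  · exact (continuousAt_cpow_const (ofReal_mem_slitPlane.2 hpos)).tendsto.comp hz

lemma ofReal_binomialPartialSum (a : ℝ) (m : ℕ) (u : ℝ) :
    ((binomialPartialSum a m u : ℝ) : ℂ) = binomialPartialSum a m (u : ℂ) := by
  rw [binomialPartialSum_real, binomialPartialSum]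
  push_cast
  rfl

lemma tendsto_re_regularizedBinomialRemainder (a : ℝ) (m : ℕ) (hu : 0 < u) (hu1 : u ≠ 1) :
    Tendsto (fun η => (regularizedBinomialRemainder a m η u).re) (𝓝[>] 0)
      (𝓝 ((1 - u) ^ (a - 1) - binomialPartialSum a m u)) := by
  have hp : Tendsto (fun η : ℝ => (1 + η * I : ℂ)) (𝓝[>] 0) (𝓝 1) := by
    have h : Continuous fun η : ℝ => (1 + η * I : ℂ) := by fun_prop
    simpa using (h.tendsto 0).mono_left nhdsWithin_le_nhds
  have hz : Tendsto (fun η : ℝ => (u / (1 + η * I) : ℂ)) (𝓝[>] 0) (𝓝 u) := by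
    simpa using! (tendsto_const_nhds (x := (u : ℂ))).div hp one_ne_zero
  have hpow : Tendsto (fun η : ℝ => (1 - u / (1 + η * I) : ℂ) ^ ((a - 1 : ℝ) : ℂ)) (𝓝[>] 0)
      (𝓝 (((1 - u : ℝ) : ℂ) ^ ((a - 1 : ℝ) : ℂ))) := by
    refine tendsto_cpow_of_im_nonneg (sub_ne_zero.2 hu1.symm) ?_ ?_ _
    · simpa using hz.const_sub 1
    · filter_upwards [self_mem_nhdsWithin] with η hη
      exact (im_one_sub_div_pos hη hu).le
  have hsum : Tendsto (fun η : ℝ => binomialPartialSum a m (u / (1 + η * I) : ℂ)) (𝓝[>] 0)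
      (𝓝 ((binomialPartialSum a m u : ℝ) : ℂ)) := by
    have hcont : Continuous (binomialPartialSum a m : ℂ → ℂ) := by
      unfold binomialPartialSum
      fun_prop
    rw [ofReal_binomialPartialSum]
    exact (hcont.tendsto _).comp hz
  have hscale : Tendsto (fun η : ℝ => ((1 + η * I) ^ m / (1 + η * I) : ℂ)) (𝓝[>] 0) (𝓝 1) := by
    simpa using! (hp.pow m).div hp one_ne_zero
  have hlim := (continuous_re.tendsto _).comp (hscale.mul (hpow.sub hsum))
  rwa [one_mul, sub_re, ofReal_re, ← Real.rpow_def] at hlim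

lemma norm_binomialPartialSum_le (a : ℝ) (m : ℕ) {z : ℂ} (hz : ‖z‖ ≤ u) :
    ‖binomialPartialSum a m z‖ ≤ (∑ j ∈ Finset.range m, |pochhammer (1 - a) j|) * Real.exp u := by
  have hu : 0 ≤ u := (norm_nonneg z).trans hz
  rw [binomialPartialSum, Finset.sum_mul]
  refine norm_sum_le_of_le _ fun j _ => ?_
  rw [norm_mul, norm_pow, RCLike.norm_ofReal, abs_div, Nat.abs_cast]
  calc |pochhammer (1 - a) j| / j ! * ‖z‖ ^ j ≤ |pochhammer (1 - a) j| / j ! * u ^ j := by gcongr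
    _ = |pochhammer (1 - a) j| * (u ^ j / j !) := by ring
    _ ≤ |pochhammer (1 - a) j| * Real.exp u := by
        gcongr
        exact Real.pow_div_factorial_le_exp u hu j

lemma norm_regularizedBinomialRemainder_le (ha : 1 ≤ a) (m : ℕ) (hη : η ∈ Ioo (0 : ℝ) 1)
    (hu : 0 ≤ u) :
    ‖regularizedBinomialRemainder a m η u‖ ≤
      2 ^ m * (a ^ (a - 1) + ∑ j ∈ Finset.range m, |pochhammer (1 - a) j|) * Real.exp u := by
  have hp1 : 1 ≤ ‖(1 + η * I : ℂ)‖ := by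
    simpa using abs_re_le_norm (1 + η * I : ℂ)
  have hp2 : ‖(1 + η * I : ℂ)‖ ≤ 2 := by
    refine (norm_add_le _ _).trans ?_
    simp only [norm_one, norm_mul, norm_real, norm_I, mul_one, Real.norm_of_nonneg hη.1.le]
    linarith [hη.2]
  have hz : ‖(u / (1 + η * I) : ℂ)‖ ≤ u := by
    rw [norm_div, norm_real, Real.norm_of_nonneg hu]
    exact div_le_self hu hp1
  have hpow : ‖(1 - u / (1 + η * I) : ℂ) ^ ((a - 1 : ℝ) : ℂ)‖ ≤ a ^ (a - 1) * Real.exp u := by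
    rw [norm_cpow_real]
    calc ‖(1 - u / (1 + η * I) : ℂ)‖ ^ (a - 1) ≤ (1 + u) ^ (a - 1) := by
          gcongr
          exact (norm_sub_le _ _).trans (by simpa using hz)
      _ ≤ a ^ (a - 1) * Real.exp u := by
          simpa using one_add_rpow_le_mul_exp (sub_nonneg.2 ha) hu
  rw [regularizedBinomialRemainder, norm_mul, norm_div, norm_pow, mul_assoc]
  gcongr
  · exact (div_le_self (by positivity) hp1).trans (by gcongr)
  · rw [add_mul]
    exact (norm_sub_le _ _).trans (add_le_add hpow (norm_binomialPartialSum_le a m hz))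

lemma tendsto_integral_re_regularizedBinomialRemainder {c x : ℝ} (ha : 1 ≤ a) (hc : 0 < c)
    (hx : 1 < x) (m : ℕ) :
    Tendsto (fun η => ∫ u in Ioi (0 : ℝ),
        laplaceWeight c x u * (regularizedBinomialRemainder a m η u).re) (𝓝[>] 0)
      (𝓝 (∫ u in Ioi (0 : ℝ),
        laplaceWeight c x u * ((1 - u) ^ (a - 1) - binomialPartialSum a m u))) := by
  set C := 2 ^ m * (a ^ (a - 1) + ∑ j ∈ Finset.range m, |pochhammer (1 - a) j|)
  refine tendsto_integral_filter_of_dominated_convergence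
    (fun u => laplaceWeight c (x - 1) u * C) ?_ ?_ ?_ ?_
  · exact Eventually.of_forall fun η => ((measurable_laplaceWeight c x).mul
      (measurable_re.comp (measurable_regularizedBinomialRemainder a m η))).aestronglyMeasurable
  · filter_upwards [Ioo_mem_nhdsGT (zero_lt_one' ℝ)] with η hη
    filter_upwards [ae_restrict_mem measurableSet_Ioi] with u (hu : 0 < u)
    rw [norm_mul, Real.norm_of_nonneg (laplaceWeight_nonneg hu.le), Real.norm_eq_abs,
      ← laplaceWeight_mul_exp, mul_assoc, mul_comm (Real.exp u)]
    exact mul_le_mul_of_nonneg_left ((abs_re_le_norm _).trans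
      (norm_regularizedBinomialRemainder_le ha m hη hu.le)) (laplaceWeight_nonneg hu.le)
  · exact (integrableOn_laplaceWeight hc (sub_pos.2 hx)).mul_const C
  · have hne : ∀ᵐ u : ℝ ∂(volume.restrict (Ioi 0)), u ≠ 1 :=
      ae_restrict_of_ae (by simp [ae_iff, measure_singleton])
    filter_upwards [hne, ae_restrict_mem measurableSet_Ioi] with u hu1 hu
    exact (tendsto_re_regularizedBinomialRemainder a m hu hu1).const_mul _

end Limit

/-! ### Laplace transform of the regularized remainder -/

section WeightedConvolution

variable {W V R P : ℝ → ℝ}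

lemma integrable_mul_convolution_integrand (hW : Measurable W) (hR : Measurable R)
    (hP : Measurable P) (hV : ∀ r > 0, ∀ t > 0, |W (r + t)| ≤ V r * V t)
    (hVR : IntegrableOn (fun r => V r * R r) (Ioi 0))
    (hVP : IntegrableOn (fun t => V t * P t) (Ioi 0)) :
    Integrable (fun p : ℝ × ℝ => W p.1 * ((Ioi 0).indicator R p.2 *
      (Ioi 0).indicator P (p.1 - p.2))) (volume.prod volume) := by
  have hdom := (hVR.integrable_indicator measurableSet_Ioi).convolution_integrand
    (ContinuousLinearMap.mul ℝ ℝ) (hVP.integrable_indicator measurableSet_Ioi)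
  refine hdom.mono (Measurable.aestronglyMeasurable ?_) (ae_of_all _ fun ⟨u, r⟩ => ?_)
  · have hRi := hR.indicator (measurableSet_Ioi (a := (0 : ℝ)))
    have hPi := hP.indicator (measurableSet_Ioi (a := (0 : ℝ)))
    fun_prop
  obtain ⟨t, rfl⟩ : ∃ t, u = r + t := ⟨u - r, by ring⟩
  simp only [add_sub_cancel_left, ContinuousLinearMap.mul_apply', indicator_apply, mem_Ioi]
  split_ifs with hr ht
  · rw [norm_mul, norm_mul (V r * R r), norm_mul, norm_mul, norm_mul, mul_mul_mul_comm, ← norm_mul]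
    gcongr
    exact (hV r hr t ht).trans ((le_abs_self _).trans_eq (abs_mul _ _))
  all_goals simp

lemma integral_mul_intervalIntegral_convolution (hW : Measurable W) (hR : Measurable R)
    (hP : Measurable P) (hV : ∀ r > 0, ∀ t > 0, |W (r + t)| ≤ V r * V t)
    (hVR : IntegrableOn (fun r => V r * R r) (Ioi 0))
    (hVP : IntegrableOn (fun t => V t * P t) (Ioi 0)) :
    ∫ u in Ioi 0, W u * ∫ r in 0..u, R r * P (u - r) =
      ∫ r in Ioi 0, R r * ∫ t in Ioi 0, W (r + t) * P t := by
  have hleft (u : ℝ) : (Ioi 0).indicator (fun u => W u * ∫ r in 0..u, R r * P (u - r)) u =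
      ∫ r, W u * ((Ioi 0).indicator R r * (Ioi 0).indicator P (u - r)) := by
    have hsupport (r : ℝ) : (Ioi 0).indicator R r * (Ioi 0).indicator P (u - r) =
        (Ioo 0 u).indicator (fun r => R r * P (u - r)) r := by
      simp only [indicator_apply, mem_Ioi, mem_Ioo, sub_pos]
      split_ifs <;> simp_all
    simp only [hsupport, integral_const_mul, integral_indicator measurableSet_Ioo]
    rcases lt_or_ge 0 u with hu | hu
    · rw [indicator_of_mem (mem_Ioi.2 hu), intervalIntegral.integral_of_le hu.le,
        integral_Ioc_eq_integral_Ioo]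
    · rw [indicator_of_notMem (notMem_Ioi.2 hu), Ioo_eq_empty hu.not_gt, Measure.restrict_empty,
        integral_zero_measure, mul_zero]
  have hright (r : ℝ) : (Ioi 0).indicator (fun r => R r * ∫ t in Ioi 0, W (r + t) * P t) r =
      ∫ u, W u * ((Ioi 0).indicator R r * (Ioi 0).indicator P (u - r)) := by
    rw [indicator_mul_left, ← integral_indicator measurableSet_Ioi, ← integral_const_mul,
      ← integral_add_left_eq_self (fun u => W u * _) r]
    refine integral_congr_ae (ae_of_all _ fun t => ?_)
    simp only [add_sub_cancel_left, indicator_mul_right]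
    ring
  rw [← integral_indicator measurableSet_Ioi, ← integral_indicator measurableSet_Ioi]
  simp only [hleft, hright]
  exact integral_integral_swap (integrable_mul_convolution_integrand hW hR hP hV hVR hVP)

end WeightedConvolution

/-- The weight `r ^ n * exp (x * (1 - r))`, normalized to be `1` at `r = 1`, which is close to its
maximum when `n` is close to `x`. -/
noncomputable def saddleWeight (n x r : ℝ) : ℝ := r ^ n * Real.exp (x * (1 - r))

lemma integral_laplaceWeight_add_mul_rpow (a c x r : ℝ) :
    ∫ t in Ioi (0 : ℝ), laplaceWeight c x (r + t) * t ^ (a - 1) =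
      Real.exp (-(x * r)) * tricomiIntegral a c x r := by
  simp only [laplaceWeight, tricomiIntegral, mul_add, neg_add, Real.exp_add,
    ← integral_const_mul]
  congr 1 with t
  ring

lemma add_rpow_le_one_add_rpow_mul {r t s : ℝ} (hr : 0 ≤ r) (ht : 0 ≤ t) (hs : 0 ≤ s) :
    (r + t) ^ s ≤ (1 + r) ^ s * (1 + t) ^ s := by
  rw [← Real.mul_rpow (by positivity) (by positivity)]
  exact Real.rpow_le_rpow (by positivity) (by nlinarith) hs

lemma laplaceWeight_add_le {c r t : ℝ} (hc : 1 ≤ c) (x : ℝ) (hr : 0 < r) (ht : 0 < t) :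
    |laplaceWeight c x (r + t)| ≤ Real.exp (-(x * r)) * (1 + r) ^ (c - 1) *
      (Real.exp (-(x * t)) * (1 + t) ^ (c - 1)) := by
  have hpow := add_rpow_le_one_add_rpow_mul hr.le ht.le (sub_nonneg.2 hc)
  rw [abs_of_nonneg (laplaceWeight_nonneg (by positivity)), laplaceWeight, mul_add, neg_add,
    Real.exp_add, mul_mul_mul_comm]
  gcongr

lemma integrableOn_laplaceWeight_mul_one_add_rpow_mul {c x s B : ℝ} {f : ℝ → ℝ} (hc : 0 < c)
    (hx : 1 < x) (hs : 0 ≤ s) (hf : Measurable f) (hB : ∀ u > 0, |f u| ≤ B) :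
    IntegrableOn (fun u => laplaceWeight c x u * ((1 + u) ^ s * f u)) (Ioi 0) := by
  refine integrableOn_laplaceWeight_mul (C := (1 + s) ^ s * B) hc hx (by fun_prop) fun u hu => ?_
  have hu0 : 0 < u := hu
  rw [abs_mul, abs_of_pos (by positivity), mul_right_comm]
  have := one_add_rpow_le_mul_exp hs hu0.le
  have := hB u hu
  gcongr

lemma exp_mul_integral_re_regularizedBinomialRemainder {a c x η : ℝ} {m : ℕ} (ha : 1 ≤ a)
    (hc : 1 ≤ c) (hm : a ≤ m) (hx : 1 < x) (hη : 0 < η) :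
    Real.exp x * ∫ u in Ioi (0 : ℝ),
        laplaceWeight c x u * (regularizedBinomialRemainder a m η u).re =
      Real.sin (Real.pi * a) / Real.pi * ∫ r in Ioi (0 : ℝ),
        saddleWeight (m - a) x r * tricomiIntegral a c x r * cauchyKernel η (1 - r) := by
  have hkernel := measurable_cauchyKernel η
  have hVR : IntegrableOn (fun r => Real.exp (-(x * r)) * (1 + r) ^ (c - 1) *
      (r ^ (m - a) * cauchyKernel η (1 - r))) (Ioi 0) := by
    convert integrableOn_laplaceWeight_mul_one_add_rpow_mul (c := m - a + 1) (by linarith) hx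
      (sub_nonneg.2 hc) (f := fun r => cauchyKernel η (1 - r)) (by fun_prop)
      (fun r _ => abs_cauchyKernel_le_inv_left hη (1 - r)) using 2 with r
    rw [laplaceWeight, add_sub_cancel_right]
    ring
  have hVP : IntegrableOn (fun t => Real.exp (-(x * t)) * (1 + t) ^ (c - 1) * t ^ (a - 1))
      (Ioi 0) := by
    convert integrableOn_laplaceWeight_mul_one_add_rpow_mul (c := a) (by linarith) hx
      (sub_nonneg.2 hc) (f := fun _ => 1) measurable_const (fun _ _ => abs_one.le) using 2 with t
    rw [laplaceWeight]
    ring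
  have hfubini := integral_mul_intervalIntegral_convolution (measurable_laplaceWeight c x)
    (by fun_prop) (by fun_prop) (fun r hr t ht => laplaceWeight_add_le hc x hr ht) hVR hVP
  calc _ = Real.exp x * ∫ u in Ioi (0 : ℝ), Real.sin (Real.pi * a) / Real.pi *
        (laplaceWeight c x u *
          ∫ r in (0 : ℝ)..u, r ^ (m - a) * cauchyKernel η (1 - r) * (u - r) ^ (a - 1)) := by
        congr 1
        refine setIntegral_congr_fun measurableSet_Ioi fun u hu => ?_
        simp only [re_regularizedBinomialRemainder ha hm hη hu, mul_right_comm _ (_ ^ (a - 1))]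
        ring
    _ = _ := by
        rw [integral_const_mul, hfubini, mul_left_comm, ← integral_const_mul]
        congr 1
        refine setIntegral_congr_fun measurableSet_Ioi fun r _ => ?_
        simp only [integral_laplaceWeight_add_mul_rpow, saddleWeight]
        rw [mul_one_sub, sub_eq_add_neg x, Real.exp_add]
        ring

/-! ### Bounds for the Tricomi integral -/

section TricomiIntegral

variable {a c x r v : ℝ}

lemma rpow_sub_rpow_le {s y z : ℝ} (hs : 1 ≤ s) (hz : 0 ≤ z) (hy : 0 < y) :
    y ^ s - z ^ s ≤ s * y ^ (s - 1) * (y - z) := by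
  have hbernoulli := one_add_mul_self_le_rpow_one_add (s := z / y - 1) (p := s)
    (by linarith [div_nonneg hz hy.le]) hs
  rw [add_sub_cancel, Real.div_rpow hz hy.le, le_div_iff₀ (by positivity)] at hbernoulli
  have hpow : y ^ s = y ^ (s - 1) * y := by rw [← Real.rpow_add_one hy.ne', sub_add_cancel]
  have hexpand : (1 + s * (z / y - 1)) * y ^ s = y ^ s + s * y ^ (s - 1) * (z - y) := by
    rw [hpow]
    field_simp
  rw [hexpand] at hbernoulli
  linarith

lemma tricomiIntegral_nonneg (a c x : ℝ) (hr : 0 ≤ r) : 0 ≤ tricomiIntegral a c x r := by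
  refine setIntegral_nonneg measurableSet_Ioi fun t (ht : 0 < t) => ?_
  have := laplaceWeight_nonneg (c := a) (x := x) ht.le
  positivity

lemma measurable_tricomiIntegral (a c x : ℝ) : Measurable (tricomiIntegral a c x) := by
  have hweight := measurable_laplaceWeight a x
  exact (StronglyMeasurable.integral_prod_right (f := fun r t : ℝ =>
    laplaceWeight a x t * (r + t) ^ (c - 1))
    (Measurable.stronglyMeasurable (by fun_prop))).measurable

lemma integrableOn_laplaceWeight_mul_add_rpow (ha : 0 < a) (hc : 1 ≤ c) (hx : 1 < x)
    (hr : 0 ≤ r) :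
    IntegrableOn (fun t => laplaceWeight a x t * (r + t) ^ (c - 1)) (Ioi 0) := by
  refine integrableOn_laplaceWeight_mul (C := (1 + r) ^ (c - 1) * c ^ (c - 1)) ha hx
    (by fun_prop) fun t (ht : 0 < t) => ?_
  have hexp := one_add_rpow_le_mul_exp (sub_nonneg.2 hc) ht.le
  rw [add_sub_cancel] at hexp
  rw [abs_of_nonneg (by positivity), mul_assoc]
  exact (add_rpow_le_one_add_rpow_mul hr ht.le (sub_nonneg.2 hc)).trans (by gcongr)

lemma abs_integral_laplaceWeight_mul_le (ha : 0 < a) (hc : 1 ≤ c) (hx : 1 < x) {f : ℝ → ℝ} {C : ℝ}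
    (hf : ∀ t > 0, |f t| ≤ C * (1 + t) ^ (c - 1)) :
    |∫ t in Ioi (0 : ℝ), laplaceWeight a x t * f t| ≤ C * tricomiIntegral a c x 1 := by
  rw [tricomiIntegral, ← integral_const_mul, ← Real.norm_eq_abs]
  refine norm_integral_le_of_norm_le
    ((integrableOn_laplaceWeight_mul_add_rpow ha hc hx zero_le_one).const_mul C) ?_
  filter_upwards [ae_restrict_mem measurableSet_Ioi] with t (ht : 0 < t)
  rw [norm_mul, Real.norm_of_nonneg (laplaceWeight_nonneg ht.le), mul_left_comm]
  exact mul_le_mul_of_nonneg_left (hf t ht) (laplaceWeight_nonneg ht.le)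

lemma tricomiIntegral_le (ha : 0 < a) (hc : 1 ≤ c) (hx : 1 < x) (hr : 0 ≤ r) :
    tricomiIntegral a c x r ≤ (1 + r) ^ (c - 1) * tricomiIntegral a c x 1 := by
  refine (le_abs_self _).trans (abs_integral_laplaceWeight_mul_le ha hc hx fun t (ht : 0 < t) => ?_)
  rw [abs_of_nonneg (by positivity)]
  exact add_rpow_le_one_add_rpow_mul hr ht.le (sub_nonneg.2 hc)

lemma tricomiIntegral_one_le (ha : 0 < a) (hc : 1 ≤ c) (hx : 2 ≤ x) :
    tricomiIntegral a c x 1 ≤ c ^ (c - 1) * 2 ^ a * Real.Gamma a * x ^ (-a) := by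
  have hx1 : 0 < x - 1 := by linarith
  have hshift : tricomiIntegral a c x 1 ≤ c ^ (c - 1) * ((x - 1) ^ (-a) * Real.Gamma a) := by
    rw [← integral_laplaceWeight ha hx1, tricomiIntegral, ← integral_const_mul]
    refine setIntegral_mono_on
      (integrableOn_laplaceWeight_mul_add_rpow ha hc (by linarith) zero_le_one)
      ((integrableOn_laplaceWeight ha hx1).const_mul _) measurableSet_Ioi
      fun t (ht : 0 < t) => ?_
    have hexp := one_add_rpow_le_mul_exp (sub_nonneg.2 hc) ht.le
    rw [add_sub_cancel] at hexp
    rw [← laplaceWeight_mul_exp, mul_left_comm]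
    exact mul_le_mul_of_nonneg_left hexp (laplaceWeight_nonneg ht.le)
  have hhalf : (x - 1) ^ (-a) ≤ 2 ^ a * x ^ (-a) := by
    calc (x - 1) ^ (-a) ≤ (x / 2) ^ (-a) :=
          Real.rpow_le_rpow_of_nonpos (by linarith) (by linarith) (by linarith)
      _ = 2 ^ a * x ^ (-a) := by
          rw [Real.div_rpow (by linarith) zero_le_two, Real.rpow_neg zero_le_two, div_inv_eq_mul,
            mul_comm]
  have := Real.Gamma_pos_of_pos ha
  calc tricomiIntegral a c x 1 ≤ c ^ (c - 1) * ((x - 1) ^ (-a) * Real.Gamma a) := hshift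
    _ ≤ c ^ (c - 1) * (2 ^ a * x ^ (-a) * Real.Gamma a) := by gcongr
    _ = c ^ (c - 1) * 2 ^ a * Real.Gamma a * x ^ (-a) := by ring

lemma abs_rpow_sub_rpow_symm_le {s t : ℝ} (hs : 1 ≤ s) (ht : 0 < t) (hv : v ∈ Icc (0 : ℝ) 1) :
    |(1 - v + t) ^ s - (1 + v + t) ^ s| ≤ s * 2 ^ s * v * (1 + t) ^ s := by
  obtain ⟨hv0, hv1⟩ := hv
  have hpow : (1 + v + t) ^ (s - 1) ≤ 2 ^ (s - 1) * (1 + t) ^ s := by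
    calc (1 + v + t) ^ (s - 1) ≤ (2 * (1 + t)) ^ (s - 1) :=
          Real.rpow_le_rpow (by positivity) (by linarith) (by linarith)
      _ = 2 ^ (s - 1) * (1 + t) ^ (s - 1) := Real.mul_rpow zero_le_two (by positivity)
      _ ≤ 2 ^ (s - 1) * (1 + t) ^ s := by
          gcongr
          · linarith
          · linarith
  have htwo : (2 : ℝ) ^ s = 2 ^ (s - 1) * 2 := by
    rw [← Real.rpow_add_one two_ne_zero, sub_add_cancel]
  rw [abs_sub_comm, abs_of_nonneg (sub_nonneg.2
    (Real.rpow_le_rpow (by linarith) (by linarith) (by linarith)))]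
  calc (1 + v + t) ^ s - (1 - v + t) ^ s
      ≤ s * (1 + v + t) ^ (s - 1) * ((1 + v + t) - (1 - v + t)) :=
        rpow_sub_rpow_le hs (by linarith) (by positivity)
    _ = s * (1 + v + t) ^ (s - 1) * (2 * v) := by ring
    _ ≤ s * (2 ^ (s - 1) * (1 + t) ^ s) * (2 * v) := by gcongr
    _ = s * 2 ^ s * v * (1 + t) ^ s := by rw [htwo]; ring

lemma abs_tricomiIntegral_one_sub_sub_one_add_le (ha : 0 < a) (hc : 2 ≤ c) (hx : 1 < x)
    (hv : v ∈ Icc (0 : ℝ) 1) :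
    |tricomiIntegral a c x (1 - v) - tricomiIntegral a c x (1 + v)| ≤
      (c - 1) * 2 ^ (c - 1) * v * tricomiIntegral a c x 1 := by
  have hc1 : 1 ≤ c := by linarith
  rw [tricomiIntegral, tricomiIntegral, ← integral_sub
    (integrableOn_laplaceWeight_mul_add_rpow ha hc1 hx (sub_nonneg.2 hv.2))
    (integrableOn_laplaceWeight_mul_add_rpow ha hc1 hx (by linarith [hv.1]))]
  simp only [← mul_sub]
  exact abs_integral_laplaceWeight_mul_le ha hc1 hx fun t ht =>
    abs_rpow_sub_rpow_symm_le (by linarith) ht hv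

lemma abs_tricomiIntegral_one_sub_le (ha : 0 < a) (hc : 2 ≤ c) (hx : 1 < x) :
    |tricomiIntegral a c x 1 - x ^ (-a) * Real.Gamma a| ≤
      (c - 1) * tricomiIntegral (a + 1) c x 1 := by
  have hc1 : 1 ≤ c := by linarith
  have hdiff : tricomiIntegral a c x 1 - x ^ (-a) * Real.Gamma a =
      ∫ t in Ioi (0 : ℝ), laplaceWeight (a + 1) x t * (((1 + t) ^ (c - 1) - 1) / t) := by
    rw [← integral_laplaceWeight ha (by linarith), tricomiIntegral, ← integral_sub
      (integrableOn_laplaceWeight_mul_add_rpow ha hc1 hx zero_le_one)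
      (integrableOn_laplaceWeight ha (by linarith))]
    refine setIntegral_congr_fun measurableSet_Ioi fun t (ht : 0 < t) => ?_
    have hpow := laplaceWeight_mul_pow (c := a) (x := x) ht 1
    rw [Nat.cast_one, pow_one] at hpow
    simp only [← hpow]
    field_simp
  rw [hdiff]
  refine abs_integral_laplaceWeight_mul_le (by linarith) hc1 hx fun t (ht : 0 < t) => ?_
  have hone : 1 ≤ (1 + t) ^ (c - 1) := Real.one_le_rpow (by linarith) (by linarith)
  rw [abs_of_nonneg (div_nonneg (sub_nonneg.2 hone) ht.le), div_le_iff₀ ht]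
  calc (1 + t) ^ (c - 1) - 1 ≤ (c - 1) * (1 + t) ^ (c - 1 - 1) * (1 + t - 1) := by
        simpa using rpow_sub_rpow_le (s := c - 1) (y := 1 + t) (by linarith) zero_le_one
          (by positivity)
    _ ≤ (c - 1) * (1 + t) ^ (c - 1) * t := by
        rw [add_sub_cancel_left]
        gcongr <;> linarith

end TricomiIntegral

/-! ### Bounds for the saddle weight -/

section Log

variable {v : ℝ}

lemma log_one_sub_le (hv0 : 0 ≤ v) (hv1 : v < 1) : Real.log (1 - v) ≤ -v - v ^ 2 / 2 := by
  have hseries := Real.hasSum_pow_div_log_of_abs_lt_one (x := v) (by rwa [abs_of_nonneg hv0])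
  have hpartial := sum_le_hasSum (Finset.range 2) (fun i _ => by positivity) hseries
  norm_num [Finset.sum_range_succ] at hpartial
  linarith

lemma log_one_add_le (hv0 : 0 ≤ v) (hv1 : v ≤ 1) : Real.log (1 + v) ≤ v - v ^ 2 / 6 := by
  rw [Real.log_le_iff_le_exp (by linarith)]
  have hexp := Real.quadratic_le_exp_of_nonneg (x := v - v ^ 2 / 6) (by nlinarith)
  have hsq : v ^ 2 / 3 ≤ (v - v ^ 2 / 6) ^ 2 := by
    have : 0 ≤ v ^ 2 * ((1 - v / 6) ^ 2 - 1 / 3) := mul_nonneg (sq_nonneg v) (by nlinarith)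
    linarith
  linarith

lemma abs_log_one_add_sub_log_one_sub_le (hv0 : 0 ≤ v) (hv1 : v ≤ 1 / 2) :
    |Real.log (1 + v) - Real.log (1 - v) - 2 * v| ≤ 4 * v ^ 3 := by
  have habs : |v| < 1 := by rw [abs_of_nonneg hv0]; linarith
  have hsub := Real.abs_log_sub_add_sum_range_le habs 2
  have hadd := Real.abs_log_sub_add_sum_range_le (x := -v) (by rwa [abs_neg]) 2
  norm_num [Finset.sum_range_succ, abs_of_nonneg hv0] at hsub hadd
  have hcube : v ^ 3 / (1 - v) ≤ 2 * v ^ 3 := by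
    rw [div_le_iff₀ (by linarith)]
    nlinarith [pow_nonneg hv0 3]
  have hsub' := abs_le.1 (hsub.trans hcube)
  have hadd' := abs_le.1 (hadd.trans hcube)
  rw [abs_le]
  constructor <;> linarith [hsub'.1, hsub'.2, hadd'.1, hadd'.2]

lemma log_le_half_sub {r : ℝ} (hr : 0 < r) : Real.log r ≤ r / 2 - 3 / 10 := by
  have hsplit : Real.log r = Real.log 2 + Real.log (r / 2) := by
    rw [← Real.log_mul two_ne_zero (by positivity), mul_div_cancel₀ r two_ne_zero]
  have hhalf := Real.log_le_sub_one_of_pos (half_pos hr)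
  linarith [Real.log_two_lt_d9]

end Log

lemma abs_sub_le_abs_log_sub_log_mul {p q M : ℝ} (hp : 0 < p) (hq : 0 < q) (hpM : p ≤ M)
    (hqM : q ≤ M) : |p - q| ≤ |Real.log p - Real.log q| * M := by
  wlog hqp : q ≤ p generalizing p q with H
  · rw [abs_sub_comm, abs_sub_comm (Real.log p)]
    exact H hq hp hqM hpM (le_of_not_ge hqp)
  have hlog : (p - q) / p ≤ Real.log p - Real.log q := by
    have := Real.log_le_sub_one_of_pos (div_pos hq hp)
    rw [Real.log_div hq.ne' hp.ne'] at this
    rw [sub_div, div_self hp.ne']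
    linarith
  have hlog0 : 0 ≤ Real.log p - Real.log q := sub_nonneg.2 (Real.log_le_log hq hqp)
  rw [abs_of_nonneg (sub_nonneg.2 hqp), abs_of_nonneg hlog0]
  calc p - q ≤ (Real.log p - Real.log q) * p := (div_le_iff₀ hp).1 hlog
    _ ≤ (Real.log p - Real.log q) * M := mul_le_mul_of_nonneg_left hpM hlog0

section SaddleWeight

variable {C n x r v : ℝ}

lemma saddleWeight_pos (n x : ℝ) (hr : 0 < r) : 0 < saddleWeight n x r := by
  unfold saddleWeight
  positivity

lemma measurable_saddleWeight (n x : ℝ) : Measurable (saddleWeight n x) := by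
  unfold saddleWeight
  fun_prop

lemma saddleWeight_eq_exp (n x : ℝ) (hr : 0 < r) :
    saddleWeight n x r = Real.exp (n * Real.log r + x * (1 - r)) := by
  rw [saddleWeight, Real.rpow_def_of_pos hr, ← Real.exp_add, mul_comm n]

lemma log_saddleWeight (n x : ℝ) (hr : 0 < r) :
    Real.log (saddleWeight n x r) = n * Real.log r + x * (1 - r) := by
  rw [saddleWeight_eq_exp n x hr, Real.log_exp]

lemma saddleWeight_one_sub_le (hx : C ≤ x) (hn : |n - x| ≤ C) (hv0 : 0 ≤ v) (hv1 : v < 1) :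
    saddleWeight n x (1 - v) ≤ Real.exp (2 * C) * Real.exp (-(x * v ^ 2 / 6)) := by
  have hC : 0 ≤ C := (abs_nonneg _).trans hn
  rw [saddleWeight_eq_exp n x (by linarith), ← Real.exp_add, Real.exp_le_exp]
  have hlog := log_one_sub_le hv0 hv1
  have hphase : n * Real.log (1 - v) ≤ (x - C) * (-v - v ^ 2 / 2) :=
    calc n * Real.log (1 - v) ≤ (x - C) * Real.log (1 - v) :=
          mul_le_mul_of_nonpos_right (by linarith [(abs_le.1 hn).1]) (by nlinarith)
      _ ≤ (x - C) * (-v - v ^ 2 / 2) := mul_le_mul_of_nonneg_left hlog (by linarith)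
  have hCv : C * v ≤ C := mul_le_of_le_one_right hC hv1.le
  have hCv2 : C * v ^ 2 ≤ C := mul_le_of_le_one_right hC (pow_le_one₀ hv0 hv1.le)
  have hxv2 : 0 ≤ x * v ^ 2 := mul_nonneg (by linarith) (sq_nonneg _)
  linarith

lemma saddleWeight_one_add_le (hx : 0 ≤ x) (hn : |n - x| ≤ C) (hv0 : 0 ≤ v) (hv1 : v ≤ 1) :
    saddleWeight n x (1 + v) ≤ Real.exp (2 * C) * Real.exp (-(x * v ^ 2 / 6)) := by
  have hC : 0 ≤ C := (abs_nonneg _).trans hn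
  rw [saddleWeight_eq_exp n x (by linarith), ← Real.exp_add, Real.exp_le_exp]
  have hphase : n * Real.log (1 + v) ≤ (x + C) * (v - v ^ 2 / 6) :=
    calc n * Real.log (1 + v) ≤ (x + C) * Real.log (1 + v) :=
          mul_le_mul_of_nonneg_right (by linarith [(abs_le.1 hn).2])
            (Real.log_nonneg (by linarith))
      _ ≤ (x + C) * (v - v ^ 2 / 6) :=
          mul_le_mul_of_nonneg_left (log_one_add_le hv0 hv1) (by linarith)
  have hCv : C * v ≤ C := mul_le_of_le_one_right hC hv1
  have hCv2 : 0 ≤ C * v ^ 2 := by positivity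
  linarith

lemma abs_log_saddleWeight_sub_le (hx : C ≤ x) (hn : |n - x| ≤ C) (hv0 : 0 ≤ v) (hv1 : v ≤ 1 / 2) :
    |Real.log (saddleWeight n x (1 - v)) - Real.log (saddleWeight n x (1 + v))| ≤
      (2 * C + 8 * (x * v ^ 2)) * v := by
  have hC : 0 ≤ C := (abs_nonneg _).trans hn
  have hn2 : |n| ≤ 2 * x := by
    obtain ⟨hlo, hhi⟩ := abs_le.1 hn
    exact abs_le.2 ⟨by linarith, by linarith⟩
  rw [log_saddleWeight n x (by linarith), log_saddleWeight n x (by linarith)]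
  calc _ = |-(2 * (n - x) * v) - n * (Real.log (1 + v) - Real.log (1 - v) - 2 * v)| := by
        congr 1
        ring
    _ ≤ |-(2 * (n - x) * v)| + |n * (Real.log (1 + v) - Real.log (1 - v) - 2 * v)| := abs_sub _ _
    _ = 2 * |n - x| * v + |n| * |Real.log (1 + v) - Real.log (1 - v) - 2 * v| := by
        rw [abs_neg, abs_mul, abs_mul, abs_mul, abs_two, abs_of_nonneg hv0]
    _ ≤ 2 * C * v + 2 * x * (4 * v ^ 3) := by
        gcongr
        · linarith
        · exact abs_log_one_add_sub_log_one_sub_le hv0 hv1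
    _ = (2 * C + 8 * (x * v ^ 2)) * v := by ring

lemma abs_saddleWeight_sub_le_mul_max (hx : C ≤ x) (hn : |n - x| ≤ C) (hv0 : 0 ≤ v)
    (hv1 : v < 1) :
    |saddleWeight n x (1 - v) - saddleWeight n x (1 + v)| ≤
      (2 * C + 2 + 8 * (x * v ^ 2)) * v * (Real.exp (2 * C) * Real.exp (-(x * v ^ 2 / 6))) := by
  have hC : 0 ≤ C := (abs_nonneg _).trans hn
  have hx0 : 0 ≤ x := hC.trans hx
  have hpos_sub := saddleWeight_pos n x (sub_pos.2 hv1)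
  have hpos_add := saddleWeight_pos n x (by linarith : 0 < 1 + v)
  have hsub := saddleWeight_one_sub_le hx hn hv0 hv1
  have hadd := saddleWeight_one_add_le hx0 hn hv0 hv1.le
  set M := Real.exp (2 * C) * Real.exp (-(x * v ^ 2 / 6))
  have hM : 0 < M := by positivity
  rcases le_total v (1 / 2) with hv | hv
  · refine (abs_sub_le_abs_log_sub_log_mul hpos_sub hpos_add hsub hadd).trans ?_
    gcongr
    exact (abs_log_saddleWeight_sub_le hx hn hv0 hv).trans (by nlinarith)
  · have hcrude : |saddleWeight n x (1 - v) - saddleWeight n x (1 + v)| ≤ M :=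
      abs_sub_le_of_nonneg_of_le hpos_sub.le hsub hpos_add.le hadd
    refine hcrude.trans (le_mul_of_one_le_left hM.le ?_)
    have : 0 ≤ x * v ^ 2 := by positivity
    nlinarith

lemma abs_saddleWeight_sub_le (hx : C ≤ x) (hn : |n - x| ≤ C) (hv0 : 0 ≤ v) (hv1 : v < 1) :
    |saddleWeight n x (1 - v) - saddleWeight n x (1 + v)| ≤
      (2 * C + 96) * Real.exp (2 * C) * v * Real.exp (-(x / 12 * v ^ 2)) := by
  have hC : 0 ≤ C := (abs_nonneg _).trans hn
  have hxv : 0 ≤ x * v ^ 2 := mul_nonneg (hC.trans hx) (sq_nonneg v)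
  have hpoly : 2 * C + 2 + 8 * (x * v ^ 2) ≤ (2 * C + 96) * Real.exp (x / 12 * v ^ 2) := by
    nlinarith [Real.add_one_le_exp (x / 12 * v ^ 2)]
  have hexp : Real.exp (-(x * v ^ 2 / 6)) * Real.exp (x / 12 * v ^ 2) =
      Real.exp (-(x / 12 * v ^ 2)) := by
    rw [← Real.exp_add]
    ring_nf
  calc _ ≤ _ := abs_saddleWeight_sub_le_mul_max hx hn hv0 hv1
    _ ≤ (2 * C + 96) * Real.exp (x / 12 * v ^ 2) * v *
        (Real.exp (2 * C) * Real.exp (-(x * v ^ 2 / 6))) := by gcongr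
    _ = (2 * C + 96) * Real.exp (2 * C) * v * Real.exp (-(x / 12 * v ^ 2)) := by
        rw [← hexp]
        ring

lemma saddleWeight_le_of_two_le (hx : 0 ≤ x) (hn : |n - x| ≤ C) (hr : 2 ≤ r) :
    saddleWeight n x r ≤ r ^ C * Real.exp (-(3 / 20 * x * r)) := by
  have hr0 : 0 < r := by linarith
  rw [saddleWeight_eq_exp n x hr0, Real.rpow_def_of_pos hr0, ← Real.exp_add, Real.exp_le_exp]
  have hshift : n * Real.log r ≤ (x + C) * Real.log r :=
    mul_le_mul_of_nonneg_right (by linarith [(abs_le.1 hn).2]) (Real.log_nonneg (by linarith))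
  have hlog : x * Real.log r ≤ x * (r / 2 - 3 / 10) :=
    mul_le_mul_of_nonneg_left (log_le_half_sub hr0) hx
  nlinarith

end SaddleWeight

/-! ### Symmetric estimate of the principal value integral -/

section SymmetricEstimate

variable {G : ℝ → ℝ} {η δ κ M N : ℝ}

lemma integral_mul_cauchyKernel_eq
    (hG : IntegrableOn (fun r => G r * cauchyKernel η (1 - r)) (Ioi 0)) :
    ∫ r in Ioi (0 : ℝ), G r * cauchyKernel η (1 - r) =
      (∫ v in (0 : ℝ)..1, (G (1 - v) - G (1 + v)) * cauchyKernel η v) +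
        ∫ r in Ioi (2 : ℝ), G r * cauchyKernel η (1 - r) := by
  have hInt {p q : ℝ} (hp : 0 ≤ p) (hq : 0 ≤ q) :
      IntervalIntegrable (fun r => G r * cauchyKernel η (1 - r)) volume p q :=
    intervalIntegrable_iff.2 (hG.mono_set fun r hr => (le_min hp hq).trans_lt hr.1)
  have h01 := hInt le_rfl zero_le_one
  have h12 := hInt zero_le_one zero_le_two
  have hsub := intervalIntegral.integral_comp_sub_left (a := 0) (b := 1)
    (fun r => G r * cauchyKernel η (1 - r)) 1
  have hadd := intervalIntegral.integral_comp_add_left (a := 0) (b := 1)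
    (fun r => G r * cauchyKernel η (1 - r)) 1
  have hint_sub := (h01.comp_sub_left 1).symm
  have hint_add := h12.comp_add_left 1
  norm_num at hsub hadd hint_sub hint_add
  rw [← intervalIntegral.integral_interval_add_Ioi hG (hG.mono_set (Ioi_subset_Ioi zero_le_two)),
    ← intervalIntegral.integral_add_adjacent_intervals h01 h12, ← hsub, ← hadd,
    ← intervalIntegral.integral_add hint_sub hint_add]
  congr 2 with v
  rw [cauchyKernel_neg]
  ring

lemma abs_intervalIntegral_mul_cauchyKernel_le (η : ℝ) (hδ : 0 < δ) (hM : 0 ≤ M) {g : ℝ → ℝ}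
    (hg : ∀ v ∈ Ioo (0 : ℝ) 1, |g v| ≤ M * v * Real.exp (-(δ * v ^ 2))) :
    |∫ v in (0 : ℝ)..1, g v * cauchyKernel η v| ≤ M * √(Real.pi / δ) := by
  have hgauss := integrable_exp_neg_mul_sq hδ
  rw [intervalIntegral.integral_of_le zero_le_one, integral_Ioc_eq_integral_Ioo,
    ← Real.norm_eq_abs]
  calc ‖∫ v in Ioo (0 : ℝ) 1, g v * cauchyKernel η v‖
      ≤ ∫ v in Ioo (0 : ℝ) 1, M * Real.exp (-δ * v ^ 2) := by
        refine norm_integral_le_of_norm_le (hgauss.const_mul M).integrableOn ?_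
        filter_upwards [ae_restrict_mem measurableSet_Ioo] with v hv
        have hker := abs_cauchyKernel_le_inv_right η hv.1.ne'
        rw [abs_of_pos hv.1] at hker
        rw [norm_mul, Real.norm_eq_abs, Real.norm_eq_abs]
        calc |g v| * |cauchyKernel η v| ≤ M * v * Real.exp (-(δ * v ^ 2)) * v⁻¹ :=
              mul_le_mul (hg v hv) hker (abs_nonneg _) ((abs_nonneg _).trans (hg v hv))
          _ = M * Real.exp (-δ * v ^ 2) := by
              rw [mul_right_comm M, mul_inv_cancel_right₀ hv.1.ne', neg_mul]
    _ = M * ∫ v in Ioo (0 : ℝ) 1, Real.exp (-δ * v ^ 2) := integral_const_mul _ _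
    _ ≤ M * ∫ v : ℝ, Real.exp (-δ * v ^ 2) :=
        mul_le_mul_of_nonneg_left
          (setIntegral_le_integral hgauss (ae_of_all _ fun v => (Real.exp_pos _).le)) hM
    _ = M * √(Real.pi / δ) := by rw [integral_gaussian]

lemma abs_setIntegral_Ioi_two_mul_cauchyKernel_le (η : ℝ) (hκ : 0 < κ) (hN : 0 ≤ N)
    (hG : ∀ r > 2, |G r| ≤ N * Real.exp (-(κ * r))) :
    |∫ r in Ioi (2 : ℝ), G r * cauchyKernel η (1 - r)| ≤ N / κ := by
  rw [← Real.norm_eq_abs]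
  calc ‖∫ r in Ioi (2 : ℝ), G r * cauchyKernel η (1 - r)‖
      ≤ ∫ r in Ioi (2 : ℝ), N * Real.exp (-κ * r) := by
        refine norm_integral_le_of_norm_le
          ((integrableOn_exp_mul_Ioi (neg_lt_zero.2 hκ) 2).const_mul N) ?_
        filter_upwards [ae_restrict_mem measurableSet_Ioi] with r (hr : 2 < r)
        have hker : |cauchyKernel η (1 - r)| ≤ 1 := by
          refine (abs_cauchyKernel_le_inv_right η (by linarith)).trans (inv_le_one_of_one_le₀ ?_)
          rw [abs_of_neg (by linarith)]
          linarith
        rw [norm_mul, neg_mul]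
        exact (mul_le_of_le_one_right (norm_nonneg _) hker).trans (hG r hr)
    _ = N * (Real.exp (-(κ * 2)) / κ) := by
        rw [integral_const_mul, integral_exp_mul_Ioi (neg_lt_zero.2 hκ), neg_mul, neg_div_neg_eq]
    _ ≤ N * (1 / κ) := by
        gcongr
        exact Real.exp_le_one_iff.2 (by linarith)
    _ = N / κ := mul_one_div N κ

lemma abs_integral_mul_cauchyKernel_le
    (hInt : IntegrableOn (fun r => G r * cauchyKernel η (1 - r)) (Ioi 0))
    (hδ : 0 < δ) (hM : 0 ≤ M)
    (hcentre : ∀ v ∈ Ioo (0 : ℝ) 1, |G (1 - v) - G (1 + v)| ≤ M * v * Real.exp (-(δ * v ^ 2)))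
    (hκ : 0 < κ) (hN : 0 ≤ N) (htail : ∀ r > 2, |G r| ≤ N * Real.exp (-(κ * r))) :
    |∫ r in Ioi (0 : ℝ), G r * cauchyKernel η (1 - r)| ≤ M * √(Real.pi / δ) + N / κ := by
  rw [integral_mul_cauchyKernel_eq hInt]
  exact (abs_add_le _ _).trans (add_le_add
    (abs_intervalIntegral_mul_cauchyKernel_le η hδ hM hcentre)
    (abs_setIntegral_Ioi_two_mul_cauchyKernel_le η hκ hN htail))

end SymmetricEstimate

section SaddleIntegral

variable {a c C n x η v r : ℝ}

lemma integrableOn_saddleWeight_mul_tricomiIntegral_mul_cauchyKernel (ha : 0 < a) (hc : 1 ≤ c)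
    (hn : -1 < n) (hx : 1 < x) (hη : 0 < η) :
    IntegrableOn (fun r => saddleWeight n x r * tricomiIntegral a c x r * cauchyKernel η (1 - r))
      (Ioi 0) := by
  have hdom := (integrableOn_laplaceWeight_mul_add_rpow (a := n + 1) (by linarith) hc hx
    zero_le_one).const_mul (Real.exp x * tricomiIntegral a c x 1 * η⁻¹)
  have hmeas : Measurable fun r =>
      saddleWeight n x r * tricomiIntegral a c x r * cauchyKernel η (1 - r) :=
    ((measurable_saddleWeight n x).mul (measurable_tricomiIntegral a c x)).mul
      ((measurable_cauchyKernel η).comp (measurable_const.sub measurable_id))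
  refine Integrable.mono' hdom hmeas.aestronglyMeasurable ?_
  filter_upwards [ae_restrict_mem measurableSet_Ioi] with r (hr : 0 < r)
  have hweight : saddleWeight n x r = Real.exp x * laplaceWeight (n + 1) x r := by
    rw [saddleWeight, laplaceWeight, add_sub_cancel_right, mul_one_sub, sub_eq_add_neg,
      Real.exp_add]
    ring
  have hsaddle := saddleWeight_pos n x hr
  have htricomi := tricomiIntegral_nonneg a c x hr.le
  have hT := tricomiIntegral_nonneg a c x zero_le_one
  rw [norm_mul, Real.norm_of_nonneg (by positivity), Real.norm_eq_abs]
  calc saddleWeight n x r * tricomiIntegral a c x r * |cauchyKernel η (1 - r)|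
      ≤ saddleWeight n x r * ((1 + r) ^ (c - 1) * tricomiIntegral a c x 1) * η⁻¹ := by
        gcongr
        · exact tricomiIntegral_le ha hc hx hr.le
        · exact abs_cauchyKernel_le_inv_left hη _
    _ = _ := by
        rw [hweight]
        ring

lemma abs_saddleWeight_mul_tricomiIntegral_sub_le (ha : 0 < a) (hc : 2 ≤ c) (hx : 1 < x)
    (hCx : C ≤ x) (hn : |n - x| ≤ C) (hv : v ∈ Ioo (0 : ℝ) 1) :
    |saddleWeight n x (1 - v) * tricomiIntegral a c x (1 - v) -
        saddleWeight n x (1 + v) * tricomiIntegral a c x (1 + v)| ≤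
      (2 * C + 95 + c) * Real.exp (2 * C) * 2 ^ (c - 1) * tricomiIntegral a c x 1 * v *
        Real.exp (-(x / 12 * v ^ 2)) := by
  obtain ⟨hv0, hv1⟩ := hv
  have hC : 0 ≤ C := (abs_nonneg _).trans hn
  have hT := tricomiIntegral_nonneg a c x zero_le_one
  have hsaddle_diff := abs_saddleWeight_sub_le hCx hn hv0.le hv1
  have hsaddle : saddleWeight n x (1 + v) ≤ Real.exp (2 * C) * Real.exp (-(x / 12 * v ^ 2)) := by
    refine (saddleWeight_one_add_le (by linarith) hn hv0.le hv1.le).trans ?_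
    gcongr
    nlinarith
  have htricomi_diff := abs_tricomiIntegral_one_sub_sub_one_add_le ha hc hx ⟨hv0.le, hv1.le⟩
  have htricomi : tricomiIntegral a c x (1 - v) ≤ 2 ^ (c - 1) * tricomiIntegral a c x 1 := by
    refine (tricomiIntegral_le ha (by linarith) hx (by linarith)).trans ?_
    gcongr <;> linarith
  have htricomi0 := tricomiIntegral_nonneg a c x (sub_nonneg.2 hv1.le)
  have hsaddle0 := saddleWeight_pos n x (by linarith : 0 < 1 + v)
  set T := tricomiIntegral a c x
  set S := saddleWeight n x
  calc |S (1 - v) * T (1 - v) - S (1 + v) * T (1 + v)|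
      = |(S (1 - v) - S (1 + v)) * T (1 - v) + S (1 + v) * (T (1 - v) - T (1 + v))| := by
        congr 1
        ring
    _ ≤ |S (1 - v) - S (1 + v)| * T (1 - v) + S (1 + v) * |T (1 - v) - T (1 + v)| := by
        refine (abs_add_le _ _).trans_eq ?_
        rw [abs_mul, abs_mul, abs_of_nonneg htricomi0, abs_of_pos hsaddle0]
    _ ≤ (2 * C + 96) * Real.exp (2 * C) * v * Real.exp (-(x / 12 * v ^ 2)) *
          (2 ^ (c - 1) * T 1) +
        Real.exp (2 * C) * Real.exp (-(x / 12 * v ^ 2)) * ((c - 1) * 2 ^ (c - 1) * v * T 1) := by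
        gcongr
    _ = _ := by ring

lemma abs_saddleWeight_mul_tricomiIntegral_le (ha : 0 < a) (hc : 1 ≤ c) (hx : 20 ≤ x)
    (hn : |n - x| ≤ C) (hr : 2 ≤ r) :
    |saddleWeight n x r * tricomiIntegral a c x r| ≤
      (C + c) ^ (C + c - 1) * tricomiIntegral a c x 1 * Real.exp (-(x / 10 * r)) := by
  have hC : 0 ≤ C := (abs_nonneg _).trans hn
  have hr0 : 0 < r := by linarith
  have hT := tricomiIntegral_nonneg a c x zero_le_one
  have hpow : r ^ C * (1 + r) ^ (c - 1) ≤ (C + c) ^ (C + c - 1) * Real.exp r := by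
    calc r ^ C * (1 + r) ^ (c - 1) ≤ (1 + r) ^ C * (1 + r) ^ (c - 1) := by
          gcongr
          linarith
      _ = (1 + r) ^ (C + c - 1) := by rw [← Real.rpow_add (by linarith), add_sub_assoc]
      _ ≤ (C + c) ^ (C + c - 1) * Real.exp r := by
          simpa using one_add_rpow_le_mul_exp (s := C + c - 1) (by linarith) hr0.le
  have hexp : Real.exp r * Real.exp (-(3 / 20 * x * r)) ≤ Real.exp (-(x / 10 * r)) := by
    rw [← Real.exp_add, Real.exp_le_exp]
    nlinarith
  have hTr := tricomiIntegral_nonneg a c x hr0.le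
  rw [abs_of_nonneg (mul_nonneg (saddleWeight_pos n x hr0).le hTr)]
  calc saddleWeight n x r * tricomiIntegral a c x r
      ≤ r ^ C * Real.exp (-(3 / 20 * x * r)) * ((1 + r) ^ (c - 1) * tricomiIntegral a c x 1) :=
        mul_le_mul (saddleWeight_le_of_two_le (by linarith) hn hr)
          (tricomiIntegral_le ha hc (by linarith) hr0.le) hTr (by positivity)
    _ = r ^ C * (1 + r) ^ (c - 1) * (tricomiIntegral a c x 1 * Real.exp (-(3 / 20 * x * r))) := by
        ring
    _ ≤ (C + c) ^ (C + c - 1) * Real.exp r *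
        (tricomiIntegral a c x 1 * Real.exp (-(3 / 20 * x * r))) := by gcongr
    _ = (C + c) ^ (C + c - 1) * tricomiIntegral a c x 1 *
        (Real.exp r * Real.exp (-(3 / 20 * x * r))) := by ring
    _ ≤ (C + c) ^ (C + c - 1) * tricomiIntegral a c x 1 * Real.exp (-(x / 10 * r)) := by gcongr

lemma abs_integral_saddleWeight_mul_tricomiIntegral_mul_cauchyKernel_le (ha : 0 < a) (hc : 2 ≤ c)
    (hx : 20 ≤ x) (hCx : C ≤ x) (hn : |n - x| ≤ C) (hη : 0 < η) :
    |∫ r in Ioi (0 : ℝ), saddleWeight n x r * tricomiIntegral a c x r * cauchyKernel η (1 - r)| ≤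
      ((2 * C + 95 + c) * Real.exp (2 * C) * 2 ^ (c - 1) * √(12 * Real.pi) +
        10 * (C + c) ^ (C + c - 1)) * tricomiIntegral a c x 1 * x ^ (-(1 / 2) : ℝ) := by
  have hC : 0 ≤ C := (abs_nonneg _).trans hn
  have hx0 : 0 < x := by linarith
  have hT := tricomiIntegral_nonneg a c x zero_le_one
  have hbound := abs_integral_mul_cauchyKernel_le
    (integrableOn_saddleWeight_mul_tricomiIntegral_mul_cauchyKernel ha (by linarith)
      (by linarith [(abs_le.1 hn).1]) (by linarith) hη)
    (by positivity) (by positivity)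
    (fun v hv => abs_saddleWeight_mul_tricomiIntegral_sub_le ha hc (by linarith) hCx hn hv)
    (by positivity) (by positivity)
    (fun r hr => abs_saddleWeight_mul_tricomiIntegral_le ha (by linarith) hx hn (le_of_lt hr))
  have hsqrt : √(Real.pi / (x / 12)) = √(12 * Real.pi) * x ^ (-(1 / 2) : ℝ) := by
    rw [show Real.pi / (x / 12) = 12 * Real.pi * x⁻¹ by field_simp, Real.sqrt_mul (by positivity),
      Real.sqrt_inv, Real.rpow_neg hx0.le, Real.sqrt_eq_rpow x]
  have hinv : x⁻¹ ≤ x ^ (-(1 / 2) : ℝ) := by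
    rw [← Real.rpow_neg_one]
    exact Real.rpow_le_rpow_of_exponent_le (by linarith) (by norm_num)
  refine hbound.trans ?_
  rw [hsqrt, div_div_eq_mul_div, div_eq_mul_inv _ x]
  calc
    _ ≤ _ + (C + c) ^ (C + c - 1) * tricomiIntegral a c x 1 * 10 * x ^ (-(1 / 2) : ℝ) := by gcongr
    _ = _ := by ring

end SaddleIntegral

/-! ### Stokes asymptotics -/

section StokesAsymptotics

variable {a c : ℝ} {m : ℝ → ℕ}

lemma exists_abs_exp_mul_integral_laplaceWeight_mul_le (ha : 1 ≤ a) (hc : 2 ≤ c) (C : ℝ) :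
    ∃ K, ∀ x ≥ 20, C ≤ x → ∀ m : ℕ, a ≤ m → |m - a - x| ≤ C →
      |Real.exp x * ∫ u in Ioi (0 : ℝ),
          laplaceWeight c x u * ((1 - u) ^ (a - 1) - binomialPartialSum a m u)| ≤
        K * (tricomiIntegral a c x 1 * x ^ (-(1 / 2) : ℝ)) := by
  refine ⟨|Real.sin (Real.pi * a) / Real.pi| *
    ((2 * C + 95 + c) * Real.exp (2 * C) * 2 ^ (c - 1) * √(12 * Real.pi) +
      10 * (C + c) ^ (C + c - 1)), fun x hx hCx m hma hm => ?_⟩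
  have hlim := ((tendsto_integral_re_regularizedBinomialRemainder (c := c) ha (by linarith)
    (by linarith : 1 < x) m).const_mul (Real.exp x)).abs
  refine le_of_tendsto hlim ?_
  filter_upwards [self_mem_nhdsWithin] with η (hη : 0 < η)
  rw [exp_mul_integral_re_regularizedBinomialRemainder ha (by linarith) hma (by linarith) hη,
    abs_mul, mul_assoc, ← mul_assoc _ (tricomiIntegral a c x 1)]
  gcongr
  exact abs_integral_saddleWeight_mul_tricomiIntegral_mul_cauchyKernel_le (by linarith) hc hx hCx
    hm hη

lemma tricomiIntegral_one_isBigO (ha : 0 < a) (hc : 1 ≤ c) :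
    (fun x => tricomiIntegral a c x 1) =O[atTop] fun x => x ^ (-a) := by
  refine IsBigO.of_bound (c ^ (c - 1) * 2 ^ a * Real.Gamma a) ?_
  filter_upwards [eventually_ge_atTop 2] with x hx
  rw [Real.norm_of_nonneg (tricomiIntegral_nonneg a c x zero_le_one),
    Real.norm_of_nonneg (by positivity)]
  exact tricomiIntegral_one_le ha hc hx

lemma tricomiIntegral_one_sub_isBigO (ha : 0 < a) (hc : 2 ≤ c) :
    (fun x => tricomiIntegral a c x 1 - x ^ (-a) * Real.Gamma a) =O[atTop]
      fun x => x ^ (-a - 1 / 2) := by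
  refine IsBigO.trans ?_ ((tricomiIntegral_one_isBigO (a := a + 1) (c := c) (by linarith)
    (by linarith)).trans (isBigO_rpow_of_le (by linarith)))
  refine IsBigO.of_bound (c - 1) ?_
  filter_upwards [eventually_gt_atTop 1] with x hx
  rw [Real.norm_of_nonneg (tricomiIntegral_nonneg _ c x zero_le_one)]
  exact abs_tricomiIntegral_one_sub_le ha hc hx

lemma exp_mul_integral_laplaceWeight_mul_isBigO (ha : 1 ≤ a) (hc : 2 ≤ c) (hm : IsNearOptimal m) :
    (fun x => Real.exp x * ∫ u in Ioi (0 : ℝ),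
        laplaceWeight c x u * ((1 - u) ^ (a - 1) - binomialPartialSum a (m x) u)) =O[atTop]
      fun x => x ^ (-a - 1 / 2) := by
  have hscale : (fun x => tricomiIntegral a c x 1 * x ^ (-(1 / 2) : ℝ)) =O[atTop]
      fun x => x ^ (-a - 1 / 2) := by
    refine ((tricomiIntegral_one_isBigO (by linarith) (by linarith)).mul (isBigO_refl _ _)).congr'
      EventuallyEq.rfl ?_
    filter_upwards [eventually_gt_atTop 0] with x hx
    rw [← Real.rpow_add hx, sub_eq_add_neg]
  obtain ⟨C, hC⟩ := hm.bound
  obtain ⟨K, hK⟩ := exists_abs_exp_mul_integral_laplaceWeight_mul_le ha hc (C + a)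
  refine IsBigO.trans (IsBigO.of_bound K ?_) hscale
  filter_upwards [hC, eventually_ge_atTop 20, eventually_ge_atTop (C + a)] with x hmx hx hCx
  rw [norm_one, mul_one, Real.norm_eq_abs, abs_le] at hmx
  have hT := tricomiIntegral_nonneg a c x zero_le_one
  rw [Real.norm_of_nonneg (mul_nonneg hT (by positivity))]
  exact hK x hx hCx (m x) (by linarith) (abs_le.2 ⟨by linarith, by linarith⟩)

lemma hasStokesAsymptotics_of_two_lt (ha : 2 < a) (hc : 2 < c) : HasStokesAsymptotics a c := by
  intro m hm
  have hsaddle := exp_mul_integral_laplaceWeight_mul_isBigO (by linarith : 1 ≤ a) hc.le hm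
  have htricomi := tricomiIntegral_one_sub_isBigO (by linarith : 0 < a) hc.le
  refine ((hsaddle.add (htricomi.const_mul_left (Real.cos (Real.pi * a)))).const_mul_left
    (Real.Gamma a * Real.Gamma c)⁻¹).congr' ?_ EventuallyEq.rfl
  filter_upwards [eventually_gt_atTop 1] with x hx
  have hΓa := (Real.Gamma_pos_of_pos (by linarith : 0 < a)).ne'
  have hΓc := (Real.Gamma_pos_of_pos (by linarith : 0 < c)).ne'
  rw [remainder_eq_integral_add_tricomiIntegral (by linarith) (by linarith) hx, stokesTerm]
  field_simp
  ring

theorem hasStokesAsymptotics (a c : ℝ) : HasStokesAsymptotics a c :=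
  hasStokesAsymptotics_of_forall_gt (fun _ _ => hasStokesAsymptotics_of_two_lt) a c

lemma isNearOptimal_floor (s : ℝ) : IsNearOptimal fun x => ⌊x + s⌋.toNat := by
  refine IsBigO.of_bound (|s| + 1) ?_
  filter_upwards [eventually_ge_atTop (-s)] with x hx
  have hcast : ((⌊x + s⌋.toNat : ℕ) : ℝ) = ⌊x + s⌋ := by
    exact_mod_cast Int.toNat_of_nonneg (Int.floor_nonneg.2 (by linarith : 0 ≤ x + s))
  rw [norm_one, mul_one, Real.norm_eq_abs, hcast, abs_le]
  constructor <;>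
    linarith [Int.floor_le (x + s), Int.lt_floor_add_one (x + s), le_abs_self s, neg_abs_le s]

lemma ofReal_remainder_sub_stokesTerm {a b x : ℝ} (hb : ∀ n : ℕ, b ≠ -(n : ℝ)) (m : ℕ)
    (hx : 0 < x) :
    ((remainder a (b - a) m x - stokesTerm a (b - a) x : ℝ) : ℂ) =
      ((1 / Complex.Gamma (b : ℂ)) * kummer (a : ℂ) (b : ℂ) (x : ℂ) -
          ((x : ℂ) ^ ((a : ℂ) - (b : ℂ)) * Complex.exp (x : ℂ) / Complex.Gamma (a : ℂ)) *
            ∑ j ∈ Finset.range m,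
              (ascPochhammer ℂ j).eval ((b : ℂ) - (a : ℂ)) *
                (ascPochhammer ℂ j).eval (1 - (a : ℂ)) / (j.factorial * (x : ℂ) ^ j)) -
        (x : ℂ) ^ (-(a : ℂ)) / Complex.Gamma ((b : ℂ) - (a : ℂ)) *
          (Real.cos (Real.pi * a) : ℂ) := by
  rw [remainder, stokesTerm, truncatedSeries, one_div_Gamma_mul_kummer a x hb, add_sub_cancel,
    neg_sub]
  push_cast [Complex.ofReal_cpow hx.le, ofReal_pochhammer, ← Complex.Gamma_ofReal]
  rfl

end StokesAsymptotics

end KummerStokes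

open KummerStokes in
/-- At a pole of `Γ` the quotients by `Γ` below are `0`, the value of the entire function `1 / Γ`
there. -/
theorem kummer_stokes_line_multiplier_general (a b : ℝ) (hb : ∀ n : ℕ, b ≠ -(n : ℝ))
    {m : ℝ → ℕ} (hm : IsNearOptimal m) :
    (fun x : ℝ =>
        ((1 / Complex.Gamma (b : ℂ)) * kummer (a : ℂ) (b : ℂ) (x : ℂ) -
            ((x : ℂ) ^ ((a : ℂ) - (b : ℂ)) * Complex.exp (x : ℂ) / Complex.Gamma (a : ℂ)) *
              ∑ j ∈ Finset.range (m x),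
                (ascPochhammer ℂ j).eval ((b : ℂ) - (a : ℂ)) *
                  (ascPochhammer ℂ j).eval (1 - (a : ℂ)) / (j.factorial * (x : ℂ) ^ j)) -
          (x : ℂ) ^ (-(a : ℂ)) / Complex.Gamma ((b : ℂ) - (a : ℂ)) *
            (Real.cos (Real.pi * a) : ℂ))
      =O[atTop] fun x : ℝ => x ^ (-a - 1 / 2) := by
  refine (Complex.isBigO_ofReal_left.2 (hasStokesAsymptotics a (b - a) m hm)).congr' ?_
    EventuallyEq.rfl
  filter_upwards [eventually_gt_atTop 0] with x hx
  exact ofReal_remainder_sub_stokesTerm hb (m x) hx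

/-- On the Stokes line `arg z = 0`, after subtracting the optimally truncated exponential
expansion (truncation index `m₀(x) = ⌊x + 2a − b⌋`), the remainder of `₁F₁(a;b;x)/Γ(b)` equals
`(x^{−a}/Γ(b−a)) cos(πa) + O(x^{−a−1/2})`: the Stokes multiplier is `cos(πa)` to leading
order. -/
theorem kummer_stokes_line_multiplier (a b : ℝ)
    (ha : ∀ n : ℤ, a ≠ (n : ℝ)) (hb : ∀ n : ℕ, b ≠ -(n : ℝ)) (hba : ∀ n : ℕ, b - a ≠ -(n : ℝ)) :
    (fun x : ℝ =>
        ((1 / Complex.Gamma (b : ℂ)) * kummer (a : ℂ) (b : ℂ) (x : ℂ) -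
            ((x : ℂ) ^ ((a : ℂ) - (b : ℂ)) * Complex.exp (x : ℂ) / Complex.Gamma (a : ℂ)) *
              ∑ j ∈ Finset.range (⌊x + 2 * a - b⌋.toNat),
                (ascPochhammer ℂ j).eval ((b : ℂ) - (a : ℂ)) *
                  (ascPochhammer ℂ j).eval (1 - (a : ℂ)) / (j.factorial * (x : ℂ) ^ j)) -
          (x : ℂ) ^ (-(a : ℂ)) / Complex.Gamma ((b : ℂ) - (a : ℂ)) *
            (Real.cos (Real.pi * a) : ℂ))
      =O[atTop] fun x : ℝ => x ^ (-a - 1 / 2) := by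
  refine kummer_stokes_line_multiplier_general a b hb (m := fun x => ⌊x + 2 * a - b⌋.toNat) ?_
  simpa only [add_sub_assoc] using KummerStokes.isNearOptimal_floor (2 * a - b)
end
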